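/- arXiv:2008.12651 — 6 statements merged into one kernel-verified Lean document; each statement's English description precedes it below -/
import Mathlib

section
/- Let F be a finite field and B ∈ M_n(F) an invertible alternating matrix, and let 𝒞(B) = {g ∈ M_n(F) : g invertible, g·B·gᵀ = B} be the corresponding symplectic group. Let X₁, X₂ ∈ 𝒞(B) be semisimple. Then X₁ and X₂ are conjugate by an element of 𝒞(B) if and only if X₁ and X₂ are similar (conjugate in GL(n,F)). -/
open Matrix

/-- Every element of a finite monoid has an idempotent positive power. -/
theorem exists_pow_isIdempotentElem {M : Type*} [Monoid M] [Finite M] (a : M) :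
    ∃ k, 0 < k ∧ IsIdempotentElem (a ^ k) := by
  obtain ⟨i, j, hij, h⟩ : ∃ i j, i < j ∧ a ^ i = a ^ j := by
    obtain ⟨i, j, hne, h⟩ := Finite.exists_ne_map_eq_of_infinite fun n : ℕ => a ^ n
    rcases hne.lt_or_gt with hlt | hlt
    exacts [⟨i, j, hlt, h⟩, ⟨j, i, hlt, h.symm⟩]
  obtain ⟨d, rfl⟩ := Nat.exists_eq_add_of_lt hij
  have period : ∀ t m, i ≤ m → a ^ (m + t * (d + 1)) = a ^ m := by
    intro t
    induction t with
    | zero => simp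
    | succ t ih =>
      intro m hm
      obtain ⟨r, rfl⟩ := Nat.exists_eq_add_of_le hm
      rw [← ih _ hm, show i + r + (t + 1) * (d + 1) = (i + d + 1) + (r + t * (d + 1)) by ring,
        pow_add, ← h, ← pow_add, ← add_assoc]
  refine ⟨(i + 1) * (d + 1), by positivity, ?_⟩
  rw [IsIdempotentElem, ← pow_add]
  exact period _ _ (by nlinarith)

/-- Hilbert 90 for a finite commutative ring with an involution that moves some element by a
unit. -/
theorem exists_isUnit_eq_mul_star {E : Type*} [CommRing E] [Finite E] [StarRing E] {x h : E}
    (hx : IsUnit (x - star x)) (hh : h * star h = 1) : ∃ y, IsUnit y ∧ y = h * star y := by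
  set y₁ := 1 + h with hy₁
  set y₂ := x + h * star x with hy₂
  have e₁ : y₁ = h * star y₁ := by simp only [hy₁, star_add, star_one]; linear_combination -hh
  have e₂ : y₂ = h * star y₂ := by
    simp only [hy₂, star_add, star_mul, star_star]; linear_combination -x * hh
  have hN : star (y₁ ^ 2 * star h) = y₁ ^ 2 * star h := by
    simp only [star_mul, star_star, star_pow]
    conv_rhs => rw [e₁]
    linear_combination -h * (star y₁) ^ 2 * hh
  obtain ⟨k, hk, he⟩ := exists_pow_isIdempotentElem (y₁ ^ 2 * star h)
  set e := (y₁ ^ 2 * star h) ^ k with hedef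
  have hse : star e = e := by rw [hedef, star_pow, hN]
  have hem : ∀ m : Ideal E, m.IsPrime → (e ∈ m ↔ y₁ ∈ m) := fun m hm => by
    have hs : star h ∉ m := fun hs => hm.ne_top <|
      m.eq_top_of_isUnit_mem hs (IsUnit.of_mul_eq_one h (by rw [mul_comm, hh]))
    rw [hedef, hm.pow_mem_iff_mem _ hk, hm.mul_mem_iff_mem_or_mem, hm.pow_mem_iff_mem _ two_pos,
      or_iff_left hs]
  refine ⟨e * y₁ + (1 - e) * y₂, ?_, ?_⟩
  · by_contra hu
    obtain ⟨m, hm, hym⟩ := exists_max_ideal_of_mem_nonunits hu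
    have hp := hm.isPrime
    by_cases h₁ : e ∈ m
    · have h₂ : 1 - e ∉ m := fun h₂ => hp.one_notMem (by simpa using m.add_mem h₂ h₁)
      have h₃ : (1 - e) * y₂ ∈ m := (m.add_mem_iff_right (m.mul_mem_right _ h₁)).1 hym
      have h₄ : y₂ ∈ m := (hp.mem_or_mem h₃).resolve_left h₂
      have h₅ : y₂ - star x * y₁ ∈ m := m.sub_mem h₄ (m.mul_mem_left _ ((hem m hp).1 h₁))
      refine hp.ne_top (m.eq_top_of_isUnit_mem ?_ hx)
      convert h₅ using 1
      ring
    · have h₂ : 1 - e ∈ m := by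
        refine (hp.mem_or_mem (x := e) (y := 1 - e) ?_).resolve_left h₁
        rw [mul_sub, mul_one, he.eq, sub_self]
        exact m.zero_mem
      have h₃ : e * y₁ ∈ m := (m.add_mem_iff_left (m.mul_mem_right _ h₂)).1 hym
      exact h₁ ((hem m hp).2 ((hp.mem_or_mem h₃).resolve_left h₁))
  · simp only [star_add, star_mul, star_sub, star_one, hse]
    linear_combination e * e₁ + (1 - e) * e₂

/-- In a finite commutative ring with an involution that moves some element by a unit, every
self-adjoint unit is a norm. -/
theorem exists_mul_star_eq {E : Type*} [CommRing E] [Finite E] [StarRing E] {x a : E}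
    (hx : IsUnit (x - star x)) (ha : IsUnit a) (hsa : star a = a) : ∃ h, h * star h = a := by
  let S : Eˣ →* Eˣ := Units.map (starRingAut : E ≃+* E).toMonoidHom
  have hS : ∀ u : Eˣ, (S u : E) = star (u : E) := fun u => rfl
  let N : Eˣ →* Eˣ := MonoidHom.id Eˣ * S
  let D : Eˣ →* Eˣ := MonoidHom.id Eˣ / S
  have hNv : ∀ u : Eˣ, (N u : E) = u * star (u : E) := fun u => rfl
  have hDv : ∀ u : Eˣ, u ∈ D.ker ↔ star (u : E) = u := fun u => by
    rw [MonoidHom.mem_ker, MonoidHom.div_apply, div_eq_one, MonoidHom.id_apply, Units.ext_iff, hS,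
      eq_comm]
  have hle : N.range ≤ D.ker := by
    rintro _ ⟨u, rfl⟩
    rw [hDv, hNv]
    simp [mul_comm]
  have hker : N.ker ≤ D.range := by
    intro u hu
    rw [MonoidHom.mem_ker, Units.ext_iff, hNv] at hu
    obtain ⟨_, ⟨y, rfl⟩, hy⟩ := exists_isUnit_eq_mul_star hx hu
    refine ⟨y, ?_⟩
    rw [MonoidHom.div_apply, div_eq_iff_eq_mul]
    ext
    simpa [hS] using hy
  have card : Nat.card D.ker ≤ Nat.card N.range := by
    have h₁ := N.ker.card_mul_index
    have h₂ := D.ker.card_mul_index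
    rw [Subgroup.index_ker] at h₁ h₂
    have h₃ := Subgroup.card_le_of_le hker
    have h₄ : 0 < Nat.card D.range := Nat.card_pos
    by_contra! hlt
    have := Nat.mul_lt_mul_of_lt_of_le hlt h₃ h₄
    rw [h₂, mul_comm, h₁] at this
    exact lt_irrefl _ this
  obtain ⟨a, rfl⟩ := ha
  have hmem : a ∈ N.range := by
    rw [Subgroup.eq_of_le_of_card_ge hle card]
    exact (hDv a).2 hsa
  obtain ⟨u, hu⟩ := hmem
  exact ⟨u, by rw [← hNv, hu]⟩

open scoped IsMulCommutative in
/-- In a finite ring with involution, a self-adjoint unit `a` commuting with a unitary `x` for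
which `x - star x` is a unit is of the form `star h * h` with `h` commuting with `x`. -/
theorem exists_commute_star_mul_eq {R : Type*} [Ring R] [Finite R] [StarRing R] {x a : R}
    (hx : IsStarNormal x) (hxu : IsUnit (x - star x)) (ha : IsUnit a) (hsa : star a = a)
    (hax : Commute a x) : ∃ h, Commute h x ∧ star h * h = a := by
  have hax' : Commute a (star x) := by simpa [hsa] using hax.star_star
  have hxx : Commute (star x) x := hx.star_comm_self
  let E := StarAlgebra.adjoin ℤ ({x, a} : Set R)
  have : IsMulCommutative E := by
    refine StarAlgebra.isMulCommutative_adjoin ℤ ?_ ?_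
    · rintro _ (rfl | rfl) _ (rfl | rfl)
      exacts [rfl, hax.eq.symm, hax.eq, rfl]
    · rintro _ (rfl | rfl) _ (rfl | rfl)
      exacts [hxx.eq.symm, by rw [hsa]; exact hax.eq.symm, hax'.eq, by rw [hsa]]
  have unit : ∀ u : E, IsUnit (u : R) → IsUnit u := fun u hu => by
    have inj : Function.Injective fun v : E => u * v := fun v w hvw =>
      Subtype.ext (hu.mul_left_cancel (congrArg Subtype.val hvw))
    obtain ⟨v, hv⟩ := Finite.surjective_of_injective inj 1
    exact IsUnit.of_mul_eq_one v hv
  have hxE : x ∈ E := StarAlgebra.subset_adjoin ℤ _ (by simp)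
  have haE : a ∈ E := StarAlgebra.subset_adjoin ℤ _ (by simp)
  obtain ⟨h, hh⟩ := exists_mul_star_eq (x := (⟨x, hxE⟩ : E)) (a := ⟨a, haE⟩)
    (unit _ hxu) (unit _ ha) (Subtype.ext hsa)
  refine ⟨h, congrArg Subtype.val (mul_comm h ⟨x, hxE⟩), ?_⟩
  rw [mul_comm] at hh
  exact congrArg Subtype.val hh

namespace LinearMap.BilinForm

variable {K V V' : Type*} [Field K] [AddCommGroup V] [Module K V] [AddCommGroup V'] [Module K V']

/-- The involution on the endomorphisms of a space with a nondegenerate alternating form given by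
the adjoint. -/
noncomputable abbrev adjointStarRing [FiniteDimensional K V] (ω : LinearMap.BilinForm K V)
    (alt : ω.IsAlt) (nondeg : ω.Nondegenerate) : StarRing (Module.End K V) :=
  have adj (T : Module.End K V) (x y : V) :
      ω (ω.leftAdjointOfNondegenerate nondeg T x) y = ω x (T y) :=
    ω.isAdjointPairLeftAdjointOfNondegenerate nondeg T x y
  have adj' (T : Module.End K V) (x y : V) :
      ω x (ω.leftAdjointOfNondegenerate nondeg T y) = ω (T x) y := by
    rw [← alt.neg_eq, adj, alt.neg_eq]
  have ext {S T : Module.End K V} (h : ∀ x y, ω (S x) y = ω (T x) y) : S = T :=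
    LinearMap.ext fun x => sub_eq_zero.1 <| nondeg.1 _ fun y => by
      rw [map_sub, LinearMap.sub_apply, h, sub_self]
  { star := ω.leftAdjointOfNondegenerate nondeg
    star_involutive := fun T => ext fun x y => by rw [adj, adj']
    star_mul := fun S T => ext fun x y => by simp only [adj, Module.End.mul_apply]
    star_add := fun S T => ext fun x y => by
      simp only [adj, LinearMap.add_apply, map_add] }

/-- Two nondegenerate alternating forms over a finite field that are preserved by `X`, where `X`
has no eigenvalue `1` or `-1`, are intertwined by a map commuting with `X`. -/
theorem exists_commute_isometry_of_sq_ne [Finite K] [FiniteDimensional K V]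
    {ω ω' : LinearMap.BilinForm K V} (alt : ω.IsAlt) (alt' : ω'.IsAlt)
    (nondeg : ω.Nondegenerate) (nondeg' : ω'.Nondegenerate) {X : Module.End K V}
    (hX : ∀ x y, ω (X x) (X y) = ω x y) (hX' : ∀ x y, ω' (X x) (X y) = ω' x y)
    (hfix : ∀ v, X (X v) = v → v = 0) :
    ∃ h : Module.End K V, Commute h X ∧ ∀ x y, ω (h x) (h y) = ω' x y := by
  have : Finite V := Module.finite_of_finite K
  have : Finite (Module.End K V) := Module.finite_of_finite K
  let _ : StarRing (Module.End K V) := adjointStarRing ω alt nondeg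
  have adj (T : Module.End K V) (x y : V) : ω ((star T) x) y = ω x (T y) :=
    ω.isAdjointPairLeftAdjointOfNondegenerate nondeg T x y
  have ext {S T : Module.End K V} (h : ∀ x y, ω (S x) y = ω (T x) y) : S = T :=
    LinearMap.ext fun x => sub_eq_zero.1 <| nondeg.1 _ fun y => by
      rw [map_sub, LinearMap.sub_apply, h, sub_self]
  have unit {T : Module.End K V} (h : ∀ x, T x = 0 → x = 0) : IsUnit T := by
    rw [Module.End.isUnit_iff]
    exact Finite.injective_iff_bijective.1 ((injective_iff_map_eq_zero T).2 h)
  let A : Module.End K V := ω'.symmCompOfNondegenerate ω nondeg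
  have hA (x y : V) : ω (A x) y = ω' x y := ω'.symmCompOfNondegenerate_left_apply nondeg y x
  have hsX : star X * X = 1 := ext fun x y => by
    rw [Module.End.mul_apply, adj, hX, Module.End.one_apply]
  have hXs : X * star X = 1 := mul_eq_one_comm.1 hsX
  have hsA : star A = A := ext fun x y => by
    rw [adj, ← alt.neg_eq, hA, hA, alt'.neg_eq]
  have hAX : Commute A X := by
    have h₁ : star X * A * X = A := ext fun x y => by
      simp only [Module.End.mul_apply]
      rw [adj, hA, hA, hX']
    calc A * X = X * star X * A * X := by rw [hXs, one_mul]
      _ = X * (star X * A * X) := by simp only [mul_assoc]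
      _ = X * A := by rw [h₁]
  have hXu : IsUnit (X - star X) := unit fun x hx => hfix x <| by
    rw [LinearMap.sub_apply, sub_eq_zero] at hx
    rw [hx, ← Module.End.mul_apply, hXs, Module.End.one_apply]
  have hAu : IsUnit A := unit fun x hx => nondeg'.1 _ fun y => by
    rw [← hA, hx, map_zero, LinearMap.zero_apply]
  obtain ⟨h, hc, hh⟩ := exists_commute_star_mul_eq ⟨hsX.trans hXs.symm⟩ hXu hAu hsA hAX
  refine ⟨h, hc, fun x y => ?_⟩
  rw [← hA, ← hh, Module.End.mul_apply, adj]

theorem IsAlt.nondegenerate_iff {ω : LinearMap.BilinForm K V} (alt : ω.IsAlt) :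
    ω.Nondegenerate ↔ ∀ x, (∀ y, ω x y = 0) → x = 0 :=
  alt.isRefl.nondegenerate_iff_separatingLeft

theorem restrict_isAlt {ω : LinearMap.BilinForm K V} (alt : ω.IsAlt) (W : Submodule K V) :
    (ω.restrict W).IsAlt := fun x => alt x

/-- The restriction of a nondegenerate alternating form to a submodule with an orthogonal
complement is nondegenerate. -/
theorem restrict_nondegenerate_of_codisjoint {ω : LinearMap.BilinForm K V} (alt : ω.IsAlt)
    (nondeg : ω.Nondegenerate) {W U : Submodule K V} (hWU : Codisjoint W U)
    (ortho : ∀ x ∈ W, ∀ y ∈ U, ω x y = 0) : (ω.restrict W).Nondegenerate := by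
  rw [(restrict_isAlt alt W).nondegenerate_iff]
  rintro ⟨x, hx⟩ h
  refine Subtype.ext (nondeg.1 _ fun y => ?_)
  obtain ⟨y₁, y₂, h₁, h₂, rfl⟩ := Submodule.codisjoint_iff_exists_add_eq.1 hWU y
  rw [map_add, ortho x hx _ h₂, add_zero]
  exact h ⟨y₁, h₁⟩

theorem Nondegenerate.exists_apply_eq_one [Nontrivial V] {ω : LinearMap.BilinForm K V}
    (nondeg : ω.Nondegenerate) : ∃ v w, ω v w = 1 := by
  obtain ⟨v, hv⟩ := exists_ne (0 : V)
  obtain ⟨w, hw⟩ : ∃ w, ω v w ≠ 0 := by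
    by_contra! h
    exact hv (nondeg.1 v h)
  exact ⟨v, (ω v w)⁻¹ • w, by simp [hw]⟩

/-- The orthogonal complement of a hyperbolic pair `v, w` of an alternating form. -/
theorem isCompl_span_pair_ker_inf_ker {ω : LinearMap.BilinForm K V} (alt : ω.IsAlt) {v w : V}
    (hvw : ω v w = 1) :
    IsCompl (Submodule.span K {v, w}) (LinearMap.ker (ω v) ⊓ LinearMap.ker (ω w)) := by
  have hwv : ω w v = -1 := by rw [← alt.neg_eq, hvw]
  constructor
  · rw [Submodule.disjoint_def]
    intro x hx hx'
    obtain ⟨a, b, rfl⟩ := Submodule.mem_span_pair.1 hx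
    simp only [Submodule.mem_inf, LinearMap.mem_ker, map_add, map_smul, hvw, hwv, alt.self_eq_zero,
      smul_eq_mul] at hx'
    have ha : a = 0 := by linear_combination -hx'.2
    have hb : b = 0 := by linear_combination hx'.1
    simp [ha, hb]
  · rw [Submodule.codisjoint_iff_exists_add_eq]
    intro x
    refine ⟨(-ω w x) • v + ω v x • w, x - ((-ω w x) • v + ω v x • w),
      Submodule.mem_span_pair.2 ⟨_, _, rfl⟩, ?_, add_sub_cancel _ _⟩
    simp [hvw, hwv, alt.self_eq_zero]

theorem apply_eq_zero_of_mem_span_pair {ω : LinearMap.BilinForm K V} {v w : V} :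
    ∀ x ∈ Submodule.span K {v, w}, ∀ y ∈ LinearMap.ker (ω v) ⊓ LinearMap.ker (ω w), ω x y = 0 := by
  rintro x hx y ⟨hy₁, hy₂⟩
  obtain ⟨a, b, rfl⟩ := Submodule.mem_span_pair.1 hx
  rw [SetLike.mem_coe, LinearMap.mem_ker] at hy₁ hy₂
  simp [hy₁, hy₂]

/-- A linear map that is isometric on both summands of an orthogonal decomposition is isometric. -/
theorem isometry_of_isCompl {ω : LinearMap.BilinForm K V} {ω' : LinearMap.BilinForm K V'}
    (alt : ω.IsAlt) (alt' : ω'.IsAlt) {W U : Submodule K V} (hWU : IsCompl W U)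
    (ortho : ∀ x ∈ W, ∀ y ∈ U, ω x y = 0) {f : W →ₗ[K] V'} {g : U →ₗ[K] V'}
    (hf : ∀ x y, ω' (f x) (f y) = ω x y) (hg : ∀ x y, ω' (g x) (g y) = ω x y)
    (hfg : ∀ x y, ω' (f x) (g y) = 0) (x y : V) :
    ω' (LinearMap.ofIsCompl hWU f g x) (LinearMap.ofIsCompl hWU f g y) = ω x y := by
  obtain ⟨x₁, x₂, h₁, h₂, rfl⟩ := Submodule.codisjoint_iff_exists_add_eq.1 hWU.codisjoint x
  obtain ⟨y₁, y₂, h₃, h₄, rfl⟩ := Submodule.codisjoint_iff_exists_add_eq.1 hWU.codisjoint y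
  lift x₁ to W using h₁
  lift x₂ to U using h₂
  lift y₁ to W using h₃
  lift y₂ to U using h₄
  have e₁ : ω' (g x₂) (f y₁) = 0 := by rw [← alt'.neg_eq, hfg, neg_zero]
  have e₂ : ω x₂ y₁ = 0 := by rw [← alt.neg_eq, ortho _ y₁.2 _ x₂.2, neg_zero]
  simp [hf, hg, hfg, e₁, e₂, ortho _ x₁.2 _ y₂.2]

theorem finrank_ker_inf_ker_add_two [FiniteDimensional K V] {ω : LinearMap.BilinForm K V}
    (alt : ω.IsAlt) {v w : V} (hvw : ω v w = 1) :
    Module.finrank K ↥(LinearMap.ker (ω v) ⊓ LinearMap.ker (ω w)) + 2 = Module.finrank K V := by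
  have hwv : ω w v = -1 := by rw [← alt.neg_eq, hvw]
  have ind : LinearIndependent K ![v, w] := by
    rw [LinearIndependent.pair_iff]
    intro a b hab
    have h₁ := congrArg (ω v) hab
    have h₂ := congrArg (ω w) hab
    simp only [map_add, map_smul, hvw, hwv, alt.self_eq_zero, smul_eq_mul, map_zero] at h₁ h₂
    exact ⟨by linear_combination -h₂, by linear_combination h₁⟩
  have h := finrank_span_eq_card ind
  rw [Matrix.range_cons_cons_empty, Fintype.card_fin] at h
  rw [← Submodule.finrank_add_eq_of_isCompl (isCompl_span_pair_ker_inf_ker alt hvw), h, add_comm]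

/-- Nondegenerate alternating forms on spaces of equal dimension are isometric. -/
theorem exists_isometry_of_isAlt [FiniteDimensional K V] [FiniteDimensional K V']
    {ω : LinearMap.BilinForm K V} {ω' : LinearMap.BilinForm K V'} (alt : ω.IsAlt)
    (alt' : ω'.IsAlt) (nondeg : ω.Nondegenerate) (nondeg' : ω'.Nondegenerate)
    (hdim : Module.finrank K V = Module.finrank K V') :
    ∃ f : V →ₗ[K] V', ∀ x y, ω' (f x) (f y) = ω x y := by
  induction hd : Module.finrank K V using Nat.strong_induction_on generalizing V V' with
  | _ d ih =>
  rcases Nat.eq_zero_or_pos d with rfl | hpos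
  · have := Module.finrank_zero_iff.1 hd
    exact ⟨0, fun x y => by simp [Subsingleton.elim x 0]⟩
  have : Nontrivial V := Module.finrank_pos_iff.1 (hd ▸ hpos)
  have : Nontrivial V' := Module.finrank_pos_iff.1 (hdim ▸ hd ▸ hpos)
  obtain ⟨v, w, hvw⟩ := nondeg.exists_apply_eq_one
  obtain ⟨v', w', hvw'⟩ := nondeg'.exists_apply_eq_one
  have hwv : ω w v = -1 := by rw [← alt.neg_eq, hvw]
  have hwv' : ω' w' v' = -1 := by rw [← alt'.neg_eq, hvw']
  have hU := finrank_ker_inf_ker_add_two alt hvw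
  have hU' := finrank_ker_inf_ker_add_two alt' hvw'
  have hc := isCompl_span_pair_ker_inf_ker alt hvw
  have hc' := isCompl_span_pair_ker_inf_ker alt' hvw'
  have ortho := apply_eq_zero_of_mem_span_pair (ω := ω) (v := v) (w := w)
  have ortho' := apply_eq_zero_of_mem_span_pair (ω := ω') (v := v') (w := w')
  obtain ⟨g, hg⟩ := ih _ (by omega) (restrict_isAlt alt _) (restrict_isAlt alt' _)
    (restrict_nondegenerate_of_codisjoint alt nondeg hc.symm.codisjoint
      fun x hx y hy => alt.isRefl _ _ (ortho y hy x hx))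
    (restrict_nondegenerate_of_codisjoint alt' nondeg' hc'.symm.codisjoint
      fun x hx y hy => alt'.isRefl _ _ (ortho' y hy x hx)) (by omega) rfl
  let f : V →ₗ[K] V' := (-ω w).smulRight v' + (ω v).smulRight w'
  have hf (x : V) : f x = (-ω w x) • v' + ω v x • w' := rfl
  refine ⟨_, isometry_of_isCompl alt alt' hc ortho (f := f ∘ₗ Submodule.subtype _)
    (g := Submodule.subtype _ ∘ₗ g) ?_ hg ?_⟩
  · rintro ⟨x, hx⟩ ⟨y, hy⟩
    obtain ⟨a, b, rfl⟩ := Submodule.mem_span_pair.1 hx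
    obtain ⟨c, d, rfl⟩ := Submodule.mem_span_pair.1 hy
    simp [hf, hvw, hwv, hvw', hwv', alt.self_eq_zero, alt'.self_eq_zero]
  · intro x y
    exact ortho' _ (Submodule.mem_span_pair.2 ⟨_, _, rfl⟩) _ (g y).2

/-- Two forms preserved by `X` are intertwined by a map commuting with `X` if this holds on both
summands of an invariant decomposition that is orthogonal for both. -/
theorem exists_commute_isometry_of_isCompl {ω ω' : LinearMap.BilinForm K V} (alt : ω.IsAlt)
    (alt' : ω'.IsAlt) {X : Module.End K V} {W U : Submodule K V} (hWU : IsCompl W U)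
    (ortho : ∀ x ∈ W, ∀ y ∈ U, ω x y = 0) (ortho' : ∀ x ∈ W, ∀ y ∈ U, ω' x y = 0)
    (hW : ∀ x ∈ W, X x ∈ W) (hU : ∀ x ∈ U, X x ∈ U)
    (exW : ∃ h : Module.End K W, Commute h (X.restrict hW) ∧
      ∀ x y, ω.restrict W (h x) (h y) = ω'.restrict W x y)
    (exU : ∃ h : Module.End K U, Commute h (X.restrict hU) ∧
      ∀ x y, ω.restrict U (h x) (h y) = ω'.restrict U x y) :
    ∃ h : Module.End K V, Commute h X ∧ ∀ x y, ω (h x) (h y) = ω' x y := by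
  obtain ⟨f, hfX, hf⟩ := exW
  obtain ⟨g, hgX, hg⟩ := exU
  refine ⟨LinearMap.ofIsCompl hWU (W.subtype ∘ₗ f) (U.subtype ∘ₗ g), ?_,
    isometry_of_isCompl alt' alt hWU ortho' hf hg fun x y => ortho _ (f x).2 _ (g y).2⟩
  refine LinearMap.ext fun x => ?_
  obtain ⟨x₁, x₂, h₁, h₂, rfl⟩ := Submodule.codisjoint_iff_exists_add_eq.1 hWU.codisjoint x
  lift x₁ to W using h₁
  lift x₂ to U using h₂
  have e₁ := congrArg Subtype.val (LinearMap.congr_fun hfX.eq x₁)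
  have e₂ := congrArg Subtype.val (LinearMap.congr_fun hgX.eq x₂)
  have e₃ : X x₁ = (X.restrict hW x₁ : V) := rfl
  have e₄ : X x₂ = (X.restrict hU x₂ : V) := rfl
  simp only [Module.End.mul_apply, LinearMap.coe_restrict_apply] at e₁ e₂
  simp only [Module.End.mul_apply, map_add, LinearMap.ofIsCompl_apply_left,
    LinearMap.ofIsCompl_apply_right, LinearMap.comp_apply, Submodule.subtype_apply, e₃, e₄, e₁, e₂]

/-- An intertwining map may be found separately on the `c`-eigenspace of `X` and on the range of
`X - c`, where `c ^ 2 = 1`. -/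
theorem exists_commute_isometry_of_range [FiniteDimensional K V] {ω ω' : LinearMap.BilinForm K V}
    (alt : ω.IsAlt) (alt' : ω'.IsAlt) (nondeg : ω.Nondegenerate) (nondeg' : ω'.Nondegenerate)
    {X : Module.End K V} (hX : ∀ x y, ω (X x) (X y) = ω x y)
    (hX' : ∀ x y, ω' (X x) (X y) = ω' x y) {c : K} (hc : c * c = 1)
    (hss : ∀ v, X (X v - c • v) = c • (X v - c • v) → X v = c • v)
    (ex : ∀ (U : Submodule K V) (hU : ∀ x ∈ U, X x ∈ U), (∀ x ∈ U, X x = c • x → x = 0) →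
      (ω.restrict U).Nondegenerate → (ω'.restrict U).Nondegenerate →
      ∃ h : Module.End K U, Commute h (X.restrict hU) ∧
        ∀ x y, ω.restrict U (h x) (h y) = ω'.restrict U x y) :
    ∃ h : Module.End K V, Commute h X ∧ ∀ x y, ω (h x) (h y) = ω' x y := by
  let T : Module.End K V := X - c • 1
  have hT (v : V) : T v = X v - c • v := rfl
  have hker (v : V) : v ∈ LinearMap.ker T ↔ X v = c • v := by
    rw [LinearMap.mem_ker, hT, sub_eq_zero]
  have disj : Disjoint (LinearMap.ker T) (LinearMap.range T) := by
    rw [Submodule.disjoint_def]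
    rintro _ h ⟨v, rfl⟩
    rw [hker, hT] at h
    rw [hT, hss v h, sub_self]
  have hKR : IsCompl (LinearMap.ker T) (LinearMap.range T) :=
    (Submodule.isCompl_iff_disjoint _ _ (by
      rw [add_comm, LinearMap.finrank_range_add_finrank_ker])).2 disj
  have hK : ∀ x ∈ LinearMap.ker T, X x ∈ LinearMap.ker T := fun x hx => by
    rw [hker] at hx ⊢
    rw [hx, map_smul, hx]
  have hR : ∀ x ∈ LinearMap.range T, X x ∈ LinearMap.range T := by
    rintro _ ⟨v, rfl⟩
    exact ⟨X v, by simp [hT]⟩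
  have ortho {η : LinearMap.BilinForm K V} (hη : ∀ x y, η (X x) (X y) = η x y) :
      ∀ x ∈ LinearMap.ker T, ∀ y ∈ LinearMap.range T, η x y = 0 := by
    rintro x hx _ ⟨v, rfl⟩
    have h := hη x v
    rw [(hker x).1 hx, map_smul, LinearMap.smul_apply, smul_eq_mul] at h
    rw [hT, map_sub, map_smul, smul_eq_mul, ← h, ← mul_assoc, hc, one_mul, sub_self]
  have nd {η : LinearMap.BilinForm K V} (ha : η.IsAlt) (hn : η.Nondegenerate)
      (hη : ∀ x y, η (X x) (X y) = η x y) : (η.restrict (LinearMap.range T)).Nondegenerate :=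
    restrict_nondegenerate_of_codisjoint ha hn hKR.symm.codisjoint
      fun x hx y hy => ha.isRefl _ _ (ortho hη y hy x hx)
  refine exists_commute_isometry_of_isCompl alt alt' hKR (ortho hX) (ortho hX') hK hR ?_
    (ex _ hR (fun x hx h => Submodule.disjoint_def.1 disj x ((hker x).2 h) hx)
      (nd alt nondeg hX) (nd alt' nondeg' hX'))
  obtain ⟨h, hh⟩ := exists_isometry_of_isAlt (restrict_isAlt alt' (LinearMap.ker T))
    (restrict_isAlt alt (LinearMap.ker T))
    (restrict_nondegenerate_of_codisjoint alt' nondeg' hKR.codisjoint (ortho hX'))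
    (restrict_nondegenerate_of_codisjoint alt nondeg hKR.codisjoint (ortho hX)) rfl
  have hXK : X.restrict hK = c • 1 := LinearMap.ext fun x => Subtype.ext ((hker x).1 x.2)
  refine ⟨h, ?_, hh⟩
  rw [hXK]
  exact (Commute.one_right h).smul_right c

/-- Two nondegenerate alternating forms over a finite field that are preserved by `X`, whose
eigenvalues `1` and `-1` are semisimple, are intertwined by a map commuting with `X`. -/
theorem exists_commute_isometry [Finite K] [FiniteDimensional K V]
    {ω ω' : LinearMap.BilinForm K V} (alt : ω.IsAlt) (alt' : ω'.IsAlt) (nondeg : ω.Nondegenerate)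
    (nondeg' : ω'.Nondegenerate) {X : Module.End K V} (hX : ∀ x y, ω (X x) (X y) = ω x y)
    (hX' : ∀ x y, ω' (X x) (X y) = ω' x y)
    (hss : ∀ (c : K) (v), X (X v - c • v) = c • (X v - c • v) → X v = c • v) :
    ∃ h : Module.End K V, Commute h X ∧ ∀ x y, ω (h x) (h y) = ω' x y := by
  refine exists_commute_isometry_of_range alt alt' nondeg nondeg' hX hX' (c := 1) (by ring)
    (hss 1) fun U hU h₁ nd nd' => ?_
  refine exists_commute_isometry_of_range (restrict_isAlt alt U) (restrict_isAlt alt' U) nd nd'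
    (fun x y => hX x y) (fun x y => hX' x y) (c := -1) (by ring)
    (fun v hv => Subtype.ext (hss (-1) v (congrArg Subtype.val hv))) fun W hW h₂ nd nd' => ?_
  refine exists_commute_isometry_of_sq_ne (restrict_isAlt (restrict_isAlt alt U) W)
    (restrict_isAlt (restrict_isAlt alt' U) W) nd nd'
    (fun x y => hX x y) (fun x y => hX' x y) fun v hv => ?_
  have hv' : X (X (v : U)) = (v : U) := congrArg (fun z : W => ((z : U) : V)) hv
  have h₃ : X (v : U) + (v : U) = 0 := by
    refine h₁ _ (U.add_mem (hU _ (v : U).2) (v : U).2) ?_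
    rw [map_add, hv', one_smul, add_comm]
  refine Subtype.ext (h₂ _ v.2 (Subtype.ext ?_))
  rw [neg_one_smul]
  exact eq_neg_of_add_eq_zero_left h₃

end LinearMap.BilinForm

/-- If the minimal polynomial of `a` is squarefree, then `a - c` is divisible by its square. -/
theorem exists_sub_algebraMap_eq_sq_mul {K A : Type*} [Field K] [Ring A] [Algebra K A] {a : A}
    (hss : Squarefree (minpoly K a)) (c : K) :
    ∃ q, a - algebraMap K A c = (a - algebraMap K A c) ^ 2 * q := by
  open Polynomial in
  have hp : Prime (X - C c) := prime_X_sub_C c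
  obtain ⟨r, hr, hcop⟩ : ∃ r, minpoly K a ∣ r * (X - C c) ∧ IsCoprime (X - C c) r := by
    by_cases hdvd : X - C c ∣ minpoly K a
    · obtain ⟨r, hr⟩ := hdvd
      refine ⟨r, by rw [hr, mul_comm], hp.irreducible.coprime_iff_not_dvd.2 fun ⟨s, hs⟩ => ?_⟩
      exact hp.not_isUnit (hss _ ⟨s, by rw [hr, hs, mul_assoc]⟩)
    · exact ⟨_, dvd_mul_right _ _, hp.irreducible.coprime_iff_not_dvd.2 hdvd⟩
  obtain ⟨s, t, hst⟩ := hcop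
  have h₀ : aeval a (r * (X - C c)) = 0 := by
    obtain ⟨k, hk⟩ := hr
    rw [hk, map_mul, minpoly.aeval, zero_mul]
  have h₁ : X - C c = (X - C c) ^ 2 * s + t * (r * (X - C c)) := by
    linear_combination -(X - C c) * hst
  have h₂ := congrArg (aeval a) h₁
  rw [map_add, map_mul _ t, h₀, mul_zero, add_zero] at h₂
  exact ⟨aeval a s, by simpa using h₂⟩

namespace Matrix

theorem toBilin'_isAlt {K ι : Type*} [Field K] [Fintype ι] [DecidableEq ι] {B : Matrix ι ι K}
    (hskew : Bᵀ = -B) (hdiag : ∀ i, B i i = 0) : (toBilin' B).IsAlt := by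
  intro x
  rw [toBilin'_apply, ← Fintype.sum_prod_type']
  refine Finset.sum_involution (fun p _ => p.swap) ?_ ?_ (by simp) (by simp)
  · rintro ⟨i, j⟩ -
    have h : B j i = -B i j := congrFun (congrFun hskew i) j
    simp only [Prod.swap, h]
    ring
  · rintro ⟨i, j⟩ - h hij
    obtain rfl : j = i := congrArg Prod.fst hij
    simp [hdiag] at h

/-- Two invertible alternating matrices over a finite field that are preserved by a semisimple
matrix `X` are congruent by a matrix commuting with `X`. -/
theorem exists_commute_congr {F ι : Type*} [Field F] [Finite F] [Fintype ι] [DecidableEq ι]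
    {B B' X : Matrix ι ι F} (hB : IsUnit B) (hskew : Bᵀ = -B) (hdiag : ∀ i, B i i = 0)
    (hB' : IsUnit B') (hskew' : B'ᵀ = -B') (hdiag' : ∀ i, B' i i = 0)
    (hX : X * B * Xᵀ = B) (hX' : X * B' * Xᵀ = B') (hss : Squarefree (minpoly F X)) :
    ∃ H, Commute H X ∧ H * B * Hᵀ = B' := by
  have nondeg {M : Matrix ι ι F} (hM : IsUnit M) : (toBilin' M).Nondegenerate :=
    LinearMap.BilinForm.nondegenerate_toBilin'_of_det_ne_zero' M
      ((isUnit_iff_isUnit_det M).1 hM).ne_zero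
  have iso {M : Matrix ι ι F} (hM : X * M * Xᵀ = M) (x y) :
      toBilin' M (toLin' Xᵀ x) (toLin' Xᵀ y) = toBilin' M x y := by
    rw [← LinearMap.BilinForm.comp_apply, toBilin'_comp, transpose_transpose, hM]
  obtain ⟨h, hc, hh⟩ := LinearMap.BilinForm.exists_commute_isometry (toBilin'_isAlt hskew hdiag)
    (toBilin'_isAlt hskew' hdiag') (nondeg hB) (nondeg hB') (iso hX) (iso hX') (by
      intro c v hv
      obtain ⟨q, hq⟩ := exists_sub_algebraMap_eq_sq_mul hss c
      have hT (w : ι → F) : toLin' Xᵀ w - c • w = (X - algebraMap F _ c)ᵀ *ᵥ w := by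
        simp [Algebra.algebraMap_eq_smul_one, sub_mulVec, smul_mulVec]
      rw [← sub_eq_zero, hT, hT] at hv
      rw [← sub_eq_zero, hT, hq, transpose_mul, pow_two, transpose_mul, ← mulVec_mulVec,
        ← mulVec_mulVec, hv, mulVec_zero])
  obtain ⟨H, rfl⟩ := (toLin' (R := F)).surjective h
  refine ⟨Hᵀ, ?_, ?_⟩
  · have h₁ : H * Xᵀ = Xᵀ * H := by
      apply toLin'.injective
      rw [toLin'_mul, toLin'_mul]
      exact hc
    have h₂ := congrArg transpose h₁
    rw [transpose_mul, transpose_mul, transpose_transpose] at h₂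
    exact h₂.symm
  · apply toBilin'.injective
    rw [transpose_transpose, ← toBilin'_comp]
    exact LinearMap.BilinForm.ext hh

end Matrix

/-- Semisimple elements of a symplectic group over a finite field are conjugate in the
symplectic group if and only if they are similar (conjugate in `GL(n,F)`). -/
theorem semisimple_symplectic_conjugate_iff_similar
    {F : Type*} [Field F] [Fintype F] {n : ℕ}
    (B : Matrix (Fin n) (Fin n) F) (hB : IsUnit B)
    (hBskew : Bᵀ = -B) (hBdiag : ∀ i, B i i = 0)
    (X₁ X₂ : Matrix (Fin n) (Fin n) F)
    (hX₁ : IsUnit X₁) (hX₂ : IsUnit X₂)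
    (hX₁B : X₁ * B * X₁ᵀ = B) (hX₂B : X₂ * B * X₂ᵀ = B)
    (hss₁ : Squarefree (minpoly F X₁)) (hss₂ : Squarefree (minpoly F X₂)) :
    (∃ g : Matrix (Fin n) (Fin n) F, IsUnit g ∧ g * B * gᵀ = B ∧ X₂ = g⁻¹ * X₁ * g) ↔
      (∃ P : Matrix (Fin n) (Fin n) F, IsUnit P ∧ X₂ = P⁻¹ * X₁ * P) := by
  refine ⟨fun ⟨g, hg, _, h⟩ => ⟨g, hg, h⟩, ?_⟩
  rintro ⟨P, hP, rfl⟩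
  have hPd := (isUnit_iff_isUnit_det P).1 hP
  have hPP : P * P⁻¹ = 1 := mul_nonsing_inv P hPd
  have hPP' : P⁻¹ * P = 1 := nonsing_inv_mul P hPd
  have hskew : (P * B * Pᵀ)ᵀ = -(P * B * Pᵀ) := by
    simp [transpose_mul, hBskew, Matrix.mul_assoc]
  have hdiag (i) : (P * B * Pᵀ) i i = 0 := by
    rw [mul_mul_apply, transpose_transpose, ← toBilin'_apply']
    exact toBilin'_isAlt hBskew hBdiag (P i)
  have hX₁P : X₁ * (P * B * Pᵀ) * X₁ᵀ = P * B * Pᵀ := by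
    have h := congrArg (fun M => P * M * Pᵀ) hX₂B
    have hPT : P⁻¹ᵀ * Pᵀ = 1 := by rw [← transpose_mul, hPP, transpose_one]
    have hPT' : Pᵀ * P⁻¹ᵀ = 1 := by rw [← transpose_mul, hPP', transpose_one]
    simp only [transpose_mul] at h
    calc X₁ * (P * B * Pᵀ) * X₁ᵀ
        = (P * P⁻¹) * X₁ * (P * B * Pᵀ) * X₁ᵀ * (P⁻¹ᵀ * Pᵀ) := by rw [hPP, hPT]; simp
      _ = P * B * Pᵀ := by simpa only [Matrix.mul_assoc] using h
  have hPBP : IsUnit (P * B * Pᵀ) := (hP.mul hB).mul ((isUnit_transpose P).2 hP)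
  obtain ⟨H, hc, hH⟩ := exists_commute_congr hB hBskew hBdiag hPBP hskew hdiag hX₁B hX₁P hss₁
  have hHd : IsUnit H.det := by
    rw [← hH, isUnit_iff_isUnit_det, Matrix.mul_assoc, det_mul] at hPBP
    exact isUnit_of_mul_isUnit_left hPBP
  have hHH : H⁻¹ * H = 1 := nonsing_inv_mul H hHd
  have hHT : Hᵀ * H⁻¹ᵀ = 1 := by rw [← transpose_mul, hHH, transpose_one]
  refine ⟨H⁻¹ * P, ?_, ?_, ?_⟩
  · exact (IsUnit.of_mul_eq_one H hHH).mul hP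
  · calc H⁻¹ * P * B * (H⁻¹ * P)ᵀ = H⁻¹ * (P * B * Pᵀ) * H⁻¹ᵀ := by
          simp only [transpose_mul, Matrix.mul_assoc]
      _ = (H⁻¹ * H) * B * (Hᵀ * H⁻¹ᵀ) := by simp only [← hH, Matrix.mul_assoc]
      _ = B := by rw [hHH, hHT, Matrix.one_mul, Matrix.mul_one]
  · rw [Matrix.mul_inv_rev, nonsing_inv_nonsing_inv H hHd]
    calc P⁻¹ * X₁ * P = P⁻¹ * (X₁ * (H * H⁻¹)) * P := by
          rw [mul_nonsing_inv H hHd, Matrix.mul_one]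
      _ = P⁻¹ * ((X₁ * H) * H⁻¹) * P := by rw [Matrix.mul_assoc X₁]
      _ = P⁻¹ * H * X₁ * (H⁻¹ * P) := by rw [← hc.eq]; simp only [Matrix.mul_assoc]
end

section
/- Let q be a prime power, K the field with q² elements with Frobenius automorphism σ(a) = a^q, and B ∈ M_n(K) an invertible hermitian matrix (B* = B, where B* = (σB)ᵀ). Let 𝒞(B) = {g ∈ M_n(K) : g invertible, g·B·g* = B} be the corresponding unitary group. Let X₁, X₂ ∈ 𝒞(B) be semisimple. Then X₁ and X₂ are conjugate by an element of 𝒞(B) if and only if X₁ and X₂ are similar (conjugate in GL(n,K)). -/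
open Matrix

/-- For a matrix over the field `K` with `q²` elements, `X* = (σX)ᵀ` where `σ(a) = a^q`
is the Frobenius automorphism. -/
def hermStar {K : Type*} [Field K] {n : ℕ} (q : ℕ) (X : Matrix (Fin n) (Fin n) K) :
    Matrix (Fin n) (Fin n) K :=
  (X.map fun a => a ^ q)ᵀ

/-- In a finite commutative ring, a solution of a binary quadratic equation in every residue field
lifts to a solution modulo nilpotents. -/
theorem exists_quadratic_sub_isNilpotent {R : Type*} [CommRing R] [Finite R] {N c : R}
    (h : ∀ I : MaximalSpectrum R, ∃ a b : R ⧸ I.asIdeal,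
      a ^ 2 + Ideal.Quotient.mk I.asIdeal N * b ^ 2 = Ideal.Quotient.mk I.asIdeal c) :
    ∃ a b : R, IsNilpotent (c - (a ^ 2 + N * b ^ 2)) := by
  choose a b hab using h
  let e := IsArtinianRing.quotNilradicalEquivPi R
  obtain ⟨a', ha'⟩ := Ideal.Quotient.mk_surjective (e.symm a)
  obtain ⟨b', hb'⟩ := Ideal.Quotient.mk_surjective (e.symm b)
  refine ⟨a', b', ?_⟩
  rw [← mem_nilradical, ← Ideal.Quotient.mk_eq_mk_iff_sub_mem]
  apply e.injective
  have hmk : ∀ x : R, e (Ideal.Quotient.mk (nilradical R) x) =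
      fun I : MaximalSpectrum R => Ideal.Quotient.mk I.asIdeal x := fun x => rfl
  rw [map_add, map_mul, map_pow, map_pow, map_add, map_mul, map_pow, map_pow, ha', hb', hmk, hmk,
    e.apply_symm_apply, e.apply_symm_apply]
  funext I
  exact (hab I).symm

open Polynomial in
/-- In a finite field of odd characteristic, a nondegenerate diagonal binary quadratic form
represents everything. -/
theorem FiniteField.exists_sq_add_mul_sq_eq {F : Type*} [Field F] [Finite F] (h2 : (2 : F) ≠ 0)
    {N : F} (hN : N ≠ 0) (c : F) : ∃ a b : F, a ^ 2 + N * b ^ 2 = c := by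
  have := Fintype.ofFinite F
  have hodd : Fintype.card F % 2 = 1 :=
    FiniteField.odd_card_of_char_ne_two fun h => h2 (by
      have := ringChar.Nat.cast_ringChar (R := F)
      rw [h] at this
      exact_mod_cast this)
  obtain ⟨a, b, hab⟩ := FiniteField.exists_root_sum_quadratic
    (f := X ^ 2 - C c) (g := C N * X ^ 2) (degree_X_pow_sub_C (by decide) c)
    (by rw [degree_C_mul hN, degree_X_pow]; rfl) hodd
  refine ⟨a, b, ?_⟩
  simp only [eval_sub, eval_pow, eval_X, eval_C, eval_mul] at hab
  linear_combination hab

open Polynomial in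
/-- Newton's method at the origin, for a quadratic polynomial with nilpotent constant term. -/
theorem IsNilpotent.exists_quadratic_root {R : Type*} [CommRing R] {n : R} (hn : IsNilpotent n)
    (N : R) {T : R} (hT : IsUnit T) : ∃ y : R, T * y + N * y ^ 2 = n := by
  obtain ⟨y, ⟨-, hy⟩, -⟩ := existsUnique_nilpotent_sub_and_aeval_eq_zero
    (P := C N * X ^ 2 + C T * X - C n) (x := (0 : R)) (by simpa using hn) (by simpa using hT)
  refine ⟨y, ?_⟩
  simp only [map_sub, map_add, map_mul, map_pow, aeval_X, aeval_C, Algebra.algebraMap_self,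
    RingHom.id_apply] at hy
  linear_combination hy

/-- A unit differing from another element by a nilpotent is a unipotent multiple of it. -/
theorem IsUnit.exists_eq_mul_one_add_isNilpotent {R : Type*} [CommRing R] {c d : R}
    (hc : IsUnit c) (h : IsNilpotent (c - d)) : ∃ n, IsNilpotent n ∧ c = d * (1 + n) := by
  have hd : IsUnit d := by
    have := IsNilpotent.isUnit_add_left_of_commute h.neg hc (Commute.all _ _)
    simpa using this
  obtain ⟨u, rfl⟩ := hd
  refine ⟨↑u⁻¹ * (c - u), (Commute.all _ _).isNilpotent_mul_left h, ?_⟩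
  rw [mul_add, ← mul_assoc, Units.mul_inv]
  ring

/-- Units of a finite commutative ring in which `2` is invertible are represented by every
diagonal form `a ^ 2 + N * b ^ 2` with `N` a unit. -/
theorem exists_eq_sq_add_mul_sq {R : Type*} [CommRing R] [Finite R] (h2 : IsUnit (2 : R))
    {N c : R} (hN : IsUnit N) (hc : IsUnit c) : ∃ a b : R, a ^ 2 + N * b ^ 2 = c := by
  obtain ⟨a, b, hab⟩ := exists_quadratic_sub_isNilpotent (N := N) (c := c) fun I => by
    let := Ideal.Quotient.field I.asIdeal
    have : Finite (R ⧸ I.asIdeal) := Quotient.finite _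
    have h2' := (h2.map (Ideal.Quotient.mk I.asIdeal)).ne_zero
    rw [map_ofNat] at h2'
    exact FiniteField.exists_sq_add_mul_sq_eq h2'
      (hN.map (Ideal.Quotient.mk I.asIdeal)).ne_zero _
  obtain ⟨n, hn, hcn⟩ := hc.exists_eq_mul_one_add_isNilpotent hab
  obtain ⟨y, hy⟩ := hn.exists_quadratic_root 1 h2
  refine ⟨a * (1 + y), b * (1 + y), ?_⟩
  rw [hcn, ← hy]
  ring

/-- Units of a finite commutative ring of characteristic two are represented by every
form `a ^ 2 + a * b + N * b ^ 2`. -/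
theorem exists_eq_sq_add_mul_add_mul_sq {R : Type*} [CommRing R] [Finite R] (h2 : (2 : R) = 0)
    (N : R) {c : R} (hc : IsUnit c) : ∃ a b : R, a ^ 2 + a * b + N * b ^ 2 = c := by
  obtain ⟨a, b, hab⟩ := exists_quadratic_sub_isNilpotent (N := 0) (c := c) fun I => by
    let := Ideal.Quotient.field I.asIdeal
    have : Finite (R ⧸ I.asIdeal) := Quotient.finite _
    have h2' : ((2 : ℕ) : R ⧸ I.asIdeal) = 0 := by
      have := congrArg (Ideal.Quotient.mk I.asIdeal) h2
      rw [map_ofNat, map_zero] at this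
      exact_mod_cast this
    have hchar : ringChar (R ⧸ I.asIdeal) = 2 :=
      ((Nat.dvd_prime Nat.prime_two).1 (ringChar.dvd h2')).resolve_left CharP.ringChar_ne_one
    obtain ⟨a, ha⟩ := FiniteField.isSquare_of_char_two hchar (Ideal.Quotient.mk I.asIdeal c)
    exact ⟨a, 0, by rw [ha]; ring⟩
  obtain ⟨n, hn, hcn⟩ := hc.exists_eq_mul_one_add_isNilpotent hab
  obtain ⟨y, hy⟩ := hn.exists_quadratic_root N isUnit_one
  refine ⟨a, a * y, ?_⟩
  rw [hcn, ← hy]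
  ring

section HermStar

variable {K : Type*} [Field K] {n q : ℕ}

theorem hermStar_mul (X Y : Matrix (Fin n) (Fin n) K) {σ : K →+* K} (hσ : ∀ a, σ a = a ^ q) :
    hermStar q (X * Y) = hermStar q Y * hermStar q X := by
  have : (fun a : K => a ^ q) = σ := funext fun a => (hσ a).symm
  simp only [hermStar, this, Matrix.map_mul, Matrix.transpose_mul]

theorem hermStar_add (X Y : Matrix (Fin n) (Fin n) K) {σ : K →+* K} (hσ : ∀ a, σ a = a ^ q) :
    hermStar q (X + Y) = hermStar q X + hermStar q Y := by
  ext i j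
  simp [hermStar, ← hσ]

theorem hermStar_neg (X : Matrix (Fin n) (Fin n) K) {σ : K →+* K} (hσ : ∀ a, σ a = a ^ q) :
    hermStar q (-X) = -hermStar q X := by
  ext i j
  simp [hermStar, ← hσ]

theorem hermStar_scalar (a : K) {σ : K →+* K} (hσ : ∀ a, σ a = a ^ q) :
    hermStar q (scalar (Fin n) a) = scalar (Fin n) (σ a) := by
  ext i j
  simp only [hermStar, transpose_apply, map_apply, scalar_apply, diagonal_apply, ← hσ, eq_comm (a := j)]
  split_ifs <;> simp

theorem hermStar_hermStar (X : Matrix (Fin n) (Fin n) K) (hq : ∀ a : K, (a ^ q) ^ q = a) :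
    hermStar q (hermStar q X) = X := by
  ext i j
  simp [hermStar, hq]

end HermStar

/-- Over a field with `q ^ 2` elements there is an element `ω` whose relative trace `ω + σ ω`
is zero, with nonzero norm, in odd characteristic, and is one in characteristic two. -/
theorem exists_trace_norm {K : Type*} [Field K] [Fintype K] {q : ℕ}
    (hq : 1 < q) (hcard : Fintype.card K = q ^ 2) {σ : K →+* K} (hσ : ∀ a, σ a = a ^ q) :
    ∃ ω : K, ((2 : K) ≠ 0 ∧ ω + σ ω = 0 ∧ ω * σ ω ≠ 0) ∨ ((2 : K) = 0 ∧ ω + σ ω = 1) := by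
  have hinv : ∀ a : K, σ (σ a) = a := fun a => by
    rw [hσ, hσ, ← pow_mul, ← sq, ← hcard, FiniteField.pow_card]
  obtain ⟨x, hx⟩ : ∃ x : K, x - σ x ≠ 0 := by
    by_contra! h
    obtain ⟨g, hg⟩ := IsCyclic.exists_ofOrder_eq_natCard (α := Kˣ)
    rw [Nat.card_units, Nat.card_eq_fintype_card, hcard] at hg
    have hgq : g ^ (q - 1) = 1 := by
      have h1 : g ^ q = g := by
        ext
        rw [Units.val_pow_eq_pow_val, ← hσ]
        exact (sub_eq_zero.1 (h g)).symm
      rw [← mul_left_inj g, ← pow_succ, Nat.sub_add_cancel hq.le, h1, one_mul]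
    have := Nat.le_of_dvd (by omega) (orderOf_dvd_of_pow_eq_one hgq)
    rw [hg] at this
    have : q < q ^ 2 := by nlinarith
    omega
  by_cases h2 : (2 : K) = 0
  · have hT : x + σ x ≠ 0 := fun h => hx (by linear_combination h - σ x * h2)
    refine ⟨x / (x + σ x), Or.inr ⟨h2, ?_⟩⟩
    rw [map_div₀, map_add, hinv, add_comm (σ x) x, ← add_div, div_self hT]
  · refine ⟨x - σ x, Or.inl ⟨h2, ?_, mul_ne_zero hx ((map_ne_zero σ).2 hx)⟩⟩
    rw [map_sub, hinv]
    ring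

/-- In a finite ring, an element of a subring invertible in the ring is invertible in the
subring. -/
theorem Subring.isUnit_of_isUnit_coe {M : Type*} [Ring M] [Finite M] {R : Subring M} {x : R}
    (hx : IsUnit (x : M)) : IsUnit x := by
  obtain ⟨m, hm, h⟩ := isOfFinOrder_iff_pow_eq_one.1 (isOfFinOrder_of_finite hx.unit)
  refine IsUnit.of_pow_eq_one (n := m) (Subtype.ext ?_) hm.ne'
  simpa using congrArg Units.val h

section Unitary

variable {K : Type*} [Field K] {n q : ℕ}

/-- The adjoint with respect to `B` fixes the subring generated by commuting self-adjoint
elements. -/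
theorem Subring.closure_mul_eq_mul_hermStar {σ : K →+* K} (hσ : ∀ a, σ a = a ^ q)
    {B : Matrix (Fin n) (Fin n) K} {s : Set (Matrix (Fin n) (Fin n) K)}
    (hs : ∀ x ∈ s, ∀ y ∈ s, x * y = y * x) (hB : ∀ x ∈ s, x * B = B * hermStar q x)
    {x : Matrix (Fin n) (Fin n) K} (hx : x ∈ Subring.closure s) : x * B = B * hermStar q x := by
  have := Subring.isMulCommutative_closure hs
  induction hx using Subring.closure_induction with
  | mem x hx => exact hB x hx
  | zero =>
    have := hermStar_scalar (n := n) 0 hσ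
    rw [map_zero, map_zero, map_zero] at this
    rw [this, zero_mul, mul_zero]
  | one =>
    have := hermStar_scalar (n := n) 1 hσ
    rw [map_one, map_one, map_one] at this
    rw [this, one_mul, mul_one]
  | add x y _ _ hx hy => rw [add_mul, hx, hy, hermStar_add _ _ hσ, mul_add]
  | neg x _ hx => rw [neg_mul, hx, hermStar_neg _ hσ, mul_neg]
  | mul x y hx' hy' hx hy =>
    have hxy : x * y = y * x := setLike_mul_comm hx' hy'
    rw [mul_assoc, hy, ← mul_assoc, hx, mul_assoc, ← hermStar_mul _ _ hσ, hxy]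

/-- An invertible `B`-self-adjoint matrix `C` is `h * h†`, `†` the adjoint with respect to `B`,
for some `h` commuting with everything that commutes with `C`. -/
theorem exists_mul_mul_hermStar_eq [Fintype K] (hq : 1 < q) (hcard : Fintype.card K = q ^ 2)
    {σ : K →+* K} (hσ : ∀ a, σ a = a ^ q) {B C : Matrix (Fin n) (Fin n) K} (hC : IsUnit C)
    (hCB : C * B = B * hermStar q C) :
    ∃ h : Matrix (Fin n) (Fin n) K, (∀ X, Commute X C → Commute X h) ∧
      h * B * hermStar q h = C * B := by
  have hinv : ∀ a : K, σ (σ a) = a := fun a => by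
    rw [hσ, hσ, ← pow_mul, ← sq, ← hcard, FiniteField.pow_card]
  obtain ⟨ω, hω⟩ := exists_trace_norm hq hcard hσ
  have hscalar : ∀ (a : K) (Y : Matrix (Fin n) (Fin n) K),
      Commute (scalar (Fin n) a) Y := fun a Y => scalar_commute a (fun _ => Commute.all _ _) Y
  set N := scalar (Fin n) (ω * σ ω) with hN
  have hNB : N * B = B * hermStar q N := by
    rw [hN, hermStar_scalar _ hσ, map_mul σ, hinv, mul_comm (σ ω), (hscalar _ B).eq]
  set s : Set (Matrix (Fin n) (Fin n) K) := {C, N}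
  have hcomm : ∀ x ∈ s, ∀ y ∈ s, x * y = y * x := by
    rintro x (rfl | rfl) y (rfl | rfl)
    exacts [rfl, (hscalar _ _).eq.symm, (hscalar _ _).eq, rfl]
  have := Subring.isMulCommutative_closure hcomm
  let R := Subring.closure s
  have hfix : ∀ x : R, (x : Matrix (Fin n) (Fin n) K) * B = B * hermStar q x.1 := fun x =>
    Subring.closure_mul_eq_mul_hermStar hσ hcomm (by rintro x (rfl | rfl) <;> assumption) x.2
  have hcent : ∀ (x : R) (X), Commute X C → Commute X x := fun x X hX => by
    have : R ≤ Subring.centralizer {X} := Subring.closure_le.2 <| by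
      rintro x (rfl | rfl) y rfl
      exacts [hX.eq, (hscalar _ _).eq.symm]
    exact this x.2 X rfl
  let C' : R := ⟨C, Subring.subset_closure (by simp [s])⟩
  let N' : R := ⟨N, Subring.subset_closure (by simp [s])⟩
  have hC' : IsUnit C' := Subring.isUnit_of_isUnit_coe hC
  obtain ⟨a, b, hab⟩ : ∃ a b : R, (a : Matrix (Fin n) (Fin n) K) * a +
      scalar (Fin n) (ω + σ ω) * a * b + N * b * b = C := by
    open scoped IsMulCommutative in
    rcases hω with ⟨h2, hT, hN0⟩ | ⟨h2, hT⟩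
    · have h2' : IsUnit (2 : R) := Subring.isUnit_of_isUnit_coe <| by
        have := (isUnit_iff_ne_zero.2 h2).map (scalar (Fin n))
        rwa [map_ofNat] at this
      have hN' : IsUnit N' := Subring.isUnit_of_isUnit_coe <|
        (isUnit_iff_ne_zero.2 hN0).map (scalar (Fin n))
      obtain ⟨a, b, hab⟩ := exists_eq_sq_add_mul_sq h2' hN' hC'
      refine ⟨a, b, ?_⟩
      have := congrArg Subtype.val hab
      simpa [C', N', hT, sq, mul_assoc] using this
    · have h2' : (2 : R) = 0 := Subtype.ext <| by
        have := congrArg (scalar (Fin n)) h2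
        rwa [map_ofNat, map_zero] at this
      obtain ⟨a, b, hab⟩ := exists_eq_sq_add_mul_add_mul_sq h2' N' hC'
      refine ⟨a, b, ?_⟩
      have := congrArg Subtype.val hab
      simpa [C', N', hT, sq, mul_assoc] using this
  refine ⟨a.1 + scalar (Fin n) ω * b.1, fun X hX => (hcent a X hX).add_right
    ((hscalar ω X).symm.mul_right (hcent b X hX)), ?_⟩
  have hab' : a.1 * b.1 = b.1 * a.1 := setLike_mul_comm a.2 b.2
  have hstar : B * hermStar q (a.1 + scalar (Fin n) ω * b.1) =
      (a.1 + scalar (Fin n) (σ ω) * b.1) * B := by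
    rw [hermStar_add _ _ hσ, hermStar_mul _ _ hσ, hermStar_scalar _ hσ, mul_add,
      ← mul_assoc, ← hfix, ← hfix, ← (hscalar (σ ω) _).eq, add_mul, mul_assoc]
  rw [mul_assoc, hstar, ← mul_assoc, ← hab, hN, map_add, map_mul]
  congr 1
  have h1 := (hscalar (σ ω) a.1).eq
  have h2 := (hscalar (σ ω) b.1).eq
  calc _ = a.1 * a.1 + a.1 * scalar (Fin n) (σ ω) * b.1 + scalar (Fin n) ω * (b.1 * a.1) +
        scalar (Fin n) ω * (b.1 * scalar (Fin n) (σ ω)) * b.1 := by noncomm_ring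
    _ = _ := by
      rw [← h1, ← h2, ← hab']
      noncomm_ring

end Unitary

/-- Semisimple elements of a unitary group over the field with `q²` elements are conjugate
in the unitary group if and only if they are similar (conjugate in `GL(n,K)`). -/
theorem semisimple_unitary_conjugate_iff_similar
    {p k : ℕ} [Fact p.Prime] (hk : k ≠ 0) (q : ℕ) (hq : q = p ^ k)
    {K : Type*} [Field K] [Fintype K] (hcard : Fintype.card K = q ^ 2)
    {n : ℕ} (B : Matrix (Fin n) (Fin n) K) (hB : IsUnit B)
    (hBherm : hermStar q B = B)
    (X₁ X₂ : Matrix (Fin n) (Fin n) K)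
    (hX₁ : IsUnit X₁) (hX₂ : IsUnit X₂)
    (hX₁B : X₁ * B * hermStar q X₁ = B) (hX₂B : X₂ * B * hermStar q X₂ = B)
    (hss₁ : Squarefree (minpoly K X₁)) (hss₂ : Squarefree (minpoly K X₂)) :
    (∃ g : Matrix (Fin n) (Fin n) K, IsUnit g ∧ g * B * hermStar q g = B ∧
        X₂ = g⁻¹ * X₁ * g) ↔
      (∃ P : Matrix (Fin n) (Fin n) K, IsUnit P ∧ X₂ = P⁻¹ * X₁ * P) := by
  refine ⟨fun ⟨g, hg, _, h⟩ => ⟨g, hg, h⟩, fun ⟨P, hP, hX⟩ => ?_⟩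
  have hq1 : 1 < q := hq ▸ Nat.one_lt_pow hk (Fact.out : p.Prime).one_lt
  have : CharP K p := charP_of_card_eq_prime_pow (f := k * 2) (by rw [hcard, hq, pow_mul])
  have hσ : ∀ a : K, iterateFrobenius K p k a = a ^ q := fun a => by
    rw [iterateFrobenius_def, hq]
  have hinv : ∀ a : K, (a ^ q) ^ q = a := fun a => by
    rw [← pow_mul, ← sq, ← hcard, FiniteField.pow_card]
  obtain ⟨B, rfl⟩ := hB
  obtain ⟨P, rfl⟩ := hP
  rw [← coe_units_inv] at hX
  have hone : hermStar q (1 : Matrix (Fin n) (Fin n) K) = 1 := by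
    simpa using hermStar_scalar (n := n) 1 hσ
  have hstar : ∀ u : (Matrix (Fin n) (Fin n) K)ˣ, hermStar q u.1 * hermStar q u⁻¹.1 = 1 :=
    fun u => by rw [← hermStar_mul _ _ hσ, Units.inv_mul, hone]
  have hstarP : IsUnit (hermStar q P.1) := IsUnit.of_mul_eq_one _ (hstar P)
  -- The form transported along `P` is also preserved by `X₁`.
  obtain ⟨B', hB'⟩ : ∃ B', B' = P.1 * B.1 * hermStar q P.1 := ⟨_, rfl⟩
  have hB'unit : IsUnit B' := hB' ▸ (P.isUnit.mul B.isUnit).mul hstarP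
  have hB'herm : hermStar q B' = B' := by
    rw [hB', hermStar_mul _ _ hσ, hermStar_mul _ _ hσ, hBherm, hermStar_hermStar _ hinv, mul_assoc]
  have hXP : X₁ * P.1 = P.1 * X₂ := by
    rw [hX, mul_assoc, Units.mul_inv_cancel_left]
  have hX₁B' : X₁ * B' * hermStar q X₁ = B' := by
    calc _ = X₁ * P.1 * B * hermStar q (X₁ * P.1) := by
          rw [hB', hermStar_mul _ _ hσ]
          simp only [mul_assoc]
      _ = P.1 * (X₂ * B * hermStar q X₂) * hermStar q P.1 := by
          rw [hXP, hermStar_mul _ _ hσ]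
          simp only [mul_assoc]
      _ = B' := by rw [hX₂B, hB']
  obtain ⟨C, hCdef⟩ : ∃ C, C = B' * B⁻¹.1 := ⟨_, rfl⟩
  have hC : C * B = B' := by rw [hCdef, mul_assoc, Units.inv_mul, mul_one]
  have hCB : C * B = B * hermStar q C := by
    rw [hC, ← hB'herm, ← hC, hermStar_mul _ _ hσ, hBherm]
  have hYX : hermStar q X₁ * (B⁻¹.1 * X₁) = B⁻¹.1 := by
    have h1 : (B⁻¹.1 * X₁) * (B.1 * hermStar q X₁) = 1 := by
      rw [mul_assoc, ← mul_assoc X₁, hX₁B, Units.inv_mul]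
    have h2 := mul_eq_one_comm.1 h1
    rw [mul_assoc] at h2
    rw [← Units.inv_mul_cancel_left B (hermStar q X₁ * _), h2, mul_one]
  have hcomm : Commute X₁ C := by
    calc X₁ * C = X₁ * B' * (hermStar q X₁ * (B⁻¹.1 * X₁)) := by rw [hYX, hCdef, mul_assoc]
      _ = C * X₁ := by rw [← mul_assoc, hX₁B', hCdef, mul_assoc]
  obtain ⟨h, hcent, hh⟩ :=
    exists_mul_mul_hermStar_eq hq1 hcard hσ (hCdef ▸ hB'unit.mul B⁻¹.isUnit) hCB
  rw [hC] at hh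
  have hunit : IsUnit h := by
    obtain ⟨u, hu⟩ := hB'unit
    refine IsUnit.of_mul_eq_one (B * hermStar q h * u⁻¹.1) ?_
    rw [← mul_assoc, ← mul_assoc, hh, ← hu, Units.mul_inv]
  obtain ⟨h, rfl⟩ := hunit
  refine ⟨(h⁻¹ * P).1, Units.isUnit _, ?_, ?_⟩
  · calc _ = h⁻¹.1 * B' * hermStar q h⁻¹.1 := by
          rw [Units.val_mul, hermStar_mul _ _ hσ, hB']
          simp only [mul_assoc]
      _ = h⁻¹.1 * h.1 * B * (hermStar q h.1 * hermStar q h⁻¹.1) := by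
          rw [← hh]
          simp only [mul_assoc]
      _ = B := by rw [hstar, Units.inv_mul, one_mul, mul_one]
  · rw [← coe_units_inv, _root_.mul_inv_rev, inv_inv, Units.val_mul, Units.val_mul, hX]
    calc _ = P⁻¹.1 * (X₁ * h.1) * h⁻¹.1 * P.1 := by
          simp only [mul_assoc, Units.mul_inv_cancel_left]
      _ = _ := by
          rw [(hcent X₁ hcomm).eq]
          simp only [mul_assoc]
end

section
/- Let q be a prime power, K the field with q² elements with Frobenius automorphism σ(a) = a^q, B ∈ M_n(K) an invertible hermitian matrix, and 𝒞(B) = {g ∈ M_n(K) : g invertible, g·B·g* = B} the corresponding unitary group. Let x, y ∈ 𝒞(B) be semisimple with det x = det y = 1. If x and y are conjugate by an element of 𝒞(B), then they are conjugate by an element h ∈ 𝒞(B) with det h = 1; that is, the conjugacy class of a semisimple element of the special unitary group {g ∈ 𝒞(B) : det g = 1} coincides with its conjugacy class in 𝒞(B). -/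
open Matrix

section EndomorphismLemmas

open Module Polynomial

variable {K V : Type*} [Field K] [AddCommGroup V] [Module K V]

theorem exists_isIdempotentElem_of_isCompl_invtSubmodule {f : End K V} {U W : Submodule K V}
    (hU : U ∈ f.invtSubmodule) (hW : W ∈ f.invtSubmodule) (h : IsCompl U W) :
    ∃ e : End K V, IsIdempotentElem e ∧ Commute f e ∧ LinearMap.range e = U ∧
      LinearMap.ker e = W := by
  have he : IsIdempotentElem (U.projection W h) := Submodule.isIdempotentElem_projection h
  have hr : LinearMap.range (U.projection W h) = U := Submodule.range_projection h
  have hk : LinearMap.ker (U.projection W h) = W := by ext; simp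
  refine ⟨U.projection W h, he, ?_, hr, hk⟩
  exact ((LinearMap.IsIdempotentElem.commute_iff he).2 ⟨hr.symm ▸ hU, hk.symm ▸ hW⟩).symm

theorem range_mem_invtSubmodule_of_commute {f a : End K V} (h : Commute f a) :
    LinearMap.range a ∈ f.invtSubmodule := by
  rintro _ ⟨v, rfl⟩
  exact ⟨f v, (LinearMap.congr_fun h.eq v).symm⟩

theorem ker_mem_invtSubmodule_of_commute {f a : End K V} (h : Commute f a) :
    LinearMap.ker a ∈ f.invtSubmodule := by
  intro v hv
  have := LinearMap.congr_fun h.eq v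
  simp_all

/-- If the range of an idempotent `e` is nondegenerate for the involution `τ`, then it is also
the range of a `τ`-invariant idempotent. -/
theorem exists_isIdempotentElem_fixed_of_disjoint [FiniteDimensional K V] {f : End K V}
    {τ : End K V → End K V} (hmul : ∀ a b, τ (a * b) = τ b * τ a) (hinv : ∀ a, τ (τ a) = a)
    (hrank : ∀ a, finrank K (LinearMap.range (τ a)) = finrank K (LinearMap.range a))
    (hcomm : ∀ a, Commute f a → Commute f (τ a))
    {e : End K V} (he : IsIdempotentElem e) (hfe : Commute f e)
    (hdis : Disjoint (LinearMap.range e) (LinearMap.ker (τ e))) :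
    ∃ e' : End K V, IsIdempotentElem e' ∧ Commute f e' ∧
      LinearMap.range e' = LinearMap.range e ∧ τ e' = e' := by
  have hfin : finrank K (LinearMap.range e) + finrank K (LinearMap.ker (τ e)) = finrank K V := by
    rw [← hrank e]; exact LinearMap.finrank_range_add_finrank_ker _
  have hc := (Submodule.isCompl_iff_disjoint _ _ hfin.ge).2 hdis
  obtain ⟨e', h1, h2, h3, h4⟩ := exists_isIdempotentElem_of_isCompl_invtSubmodule
    (range_mem_invtSubmodule_of_commute hfe) (ker_mem_invtSubmodule_of_commute (hcomm e hfe)) hc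
  refine ⟨e', h1, h2, h3, ?_⟩
  have h5 : τ e * e' = τ e := (LinearMap.IsIdempotentElem.comp_eq_left_iff h1 (τ e)).2 h4.le
  have h6 : e * e' = e' := (LinearMap.IsIdempotentElem.comp_eq_right_iff he e').2 h3.le
  have h7 : τ e' * e = e := by simpa only [hmul, hinv] using congrArg τ h5
  have h8 : τ e' * e' = e' := by
    calc τ e' * e' = τ e' * e * e' := by rw [mul_assoc, h6]
      _ = e' := by rw [h7, h6]
  calc τ e' = τ (τ e' * e') := by rw [h8]
    _ = e' := by rw [hmul, hinv, h8]

/-- A semisimple endomorphism whose centralizer is stable under an involution `τ` has an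
irreducible invariant subspace which is the range of an idempotent of the centralizer that is
normal for `τ`. -/
theorem exists_normal_minimal_isIdempotentElem [FiniteDimensional K V] [Nontrivial V]
    {f : End K V} (hf : f.IsSemisimple)
    {τ : End K V → End K V} (hmul : ∀ a b, τ (a * b) = τ b * τ a) (hinv : ∀ a, τ (τ a) = a)
    (hrank : ∀ a, finrank K (LinearMap.range (τ a)) = finrank K (LinearMap.range a))
    (hcomm : ∀ a, Commute f a → Commute f (τ a)) :
    ∃ e : End K V, IsIdempotentElem e ∧ Commute f e ∧ Commute e (τ e) ∧ e ≠ 0 ∧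
      ∀ W ∈ f.invtSubmodule, W ≤ LinearMap.range e → W = ⊥ ∨ W = LinearMap.range e := by
  obtain ⟨U, ⟨hUf, hU0⟩, hUmin⟩ := (measure fun U : Submodule K V => finrank K U).wf.has_min
    {U : Submodule K V | U ∈ f.invtSubmodule ∧ U ≠ ⊥} ⟨⊤, by simp, top_ne_bot⟩
  have hmin : ∀ Y : Submodule K V, finrank K Y = finrank K U →
      ∀ W ∈ f.invtSubmodule, W ≤ Y → W = ⊥ ∨ W = Y := by
    intro Y hY W hW hWY
    by_cases h0 : W = ⊥
    · exact Or.inl h0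
    · refine Or.inr (Submodule.eq_of_le_of_finrank_le hWY ?_)
      have := hUmin W ⟨hW, h0⟩
      simp only [InvImage, WellFoundedRelation.rel] at this
      rw [hY]; exact not_lt.1 this
  have hUpos : finrank K U ≠ 0 := by simpa [Submodule.finrank_eq_zero] using hU0
  have hne : ∀ e : End K V, finrank K (LinearMap.range e) = finrank K U → e ≠ 0 := by
    rintro e h rfl
    apply hUpos
    rw [← h, LinearMap.range_zero, finrank_bot]
  have hfixed : ∀ e : End K V, IsIdempotentElem e → Commute f e →
      finrank K (LinearMap.range e) = finrank K U → τ e * e ≠ 0 →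
      ∃ e : End K V, IsIdempotentElem e ∧ Commute f e ∧ Commute e (τ e) ∧ e ≠ 0 ∧
        ∀ W ∈ f.invtSubmodule, W ≤ LinearMap.range e → W = ⊥ ∨ W = LinearMap.range e := by
    intro e he hfe hr h
    have hdis : Disjoint (LinearMap.range e) (LinearMap.ker (τ e)) := by
      rw [disjoint_iff]
      refine (hmin _ hr _ (End.invtSubmodule.inf_mem (range_mem_invtSubmodule_of_commute hfe)
        (ker_mem_invtSubmodule_of_commute (hcomm e hfe))) inf_le_left).resolve_right fun h' => h ?_
      exact LinearMap.range_le_ker_iff.1 (inf_eq_left.1 h')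
    obtain ⟨e', h1, h2, h3, h4⟩ :=
      exists_isIdempotentElem_fixed_of_disjoint hmul hinv hrank hcomm he hfe hdis
    exact ⟨e', h1, h2, by rw [h4], hne _ (h3 ▸ hr), hmin _ (h3 ▸ hr)⟩
  obtain ⟨W, hWf, hW⟩ := End.isSemisimple_iff.1 hf U hUf
  obtain ⟨e, he, hfe, hre, -⟩ := exists_isIdempotentElem_of_isCompl_invtSubmodule hUf hWf hW
  by_cases h : τ e * e = 0
  · have hkf := ker_mem_invtSubmodule_of_commute (hcomm e hfe)
    obtain ⟨D, hDf, hD⟩ := End.isSemisimple_iff.1 hf _ hkf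
    obtain ⟨c, hc, hfc, hrc, hkc⟩ :=
      exists_isIdempotentElem_of_isCompl_invtSubmodule hDf hkf hD.symm
    have hr : finrank K (LinearMap.range c) = finrank K U := by
      have h1 := LinearMap.finrank_range_add_finrank_ker c
      have h2 := LinearMap.finrank_range_add_finrank_ker (τ e)
      rw [hrank, hre] at h2
      rw [hkc] at h1
      omega
    by_cases h' : τ c * c = 0
    · have hτe : IsIdempotentElem (τ e) := by
        rw [IsIdempotentElem, ← hmul, he.eq]
      have h5 : c * τ e = c := (LinearMap.IsIdempotentElem.comp_eq_left_iff hτe c).2 hkc.ge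
      have h6 : e * τ c = τ c := by rw [← hinv e, ← hmul, h5]
      have h7 : c * τ c = 0 := by
        calc c * τ c = c * τ e * (e * τ c) := by rw [h5, h6]
          _ = c * (τ e * e) * τ c := by simp only [mul_assoc]
          _ = 0 := by rw [h, mul_zero, zero_mul]
      exact ⟨c, hc, hfc, h7.trans h'.symm, hne _ hr, hmin _ hr⟩
    · exact hfixed c hc hfc hr h'
  · exact hfixed e he hfe (by rw [hre]) h

/-- Polynomials in an irreducible endomorphism over a finite field attain every determinant. -/
theorem exists_det_aeval_eq_of_isSimpleModule [Finite K] [FiniteDimensional K V] {f : End K V}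
    (hf : IsSimpleModule K[X] (AEval' f)) (a : K) :
    ∃ p : K[X], LinearMap.det (aeval f p) = a := by
  obtain ⟨I, hI, ⟨ψ⟩⟩ := isSimpleModule_iff_quot_maximal.1 hf
  let φ : V ≃ₗ[K] K[X] ⧸ I := (AEval'.of f).trans (ψ.restrictScalars K)
  let : Field (K[X] ⧸ I) := Ideal.Quotient.field I
  have : Module.Finite K (K[X] ⧸ I) := Module.Finite.equiv φ
  have : Finite (K[X] ⧸ I) := Module.finite_of_finite K
  obtain ⟨b, hb⟩ := FiniteField.norm_surjective K (K[X] ⧸ I) a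
  obtain ⟨p, rfl⟩ := Ideal.Quotient.mk_surjective b
  refine ⟨p, ?_⟩
  rw [← hb, Algebra.norm_apply, ← LinearMap.det_conj _ φ]
  congr 1
  ext w
  obtain ⟨v, rfl⟩ := φ.surjective w
  have h : φ (aeval f p v) = Ideal.Quotient.mk I p * φ v := by
    change ψ (AEval.of K V f (aeval f p • v)) = _
    rw [AEval.of_aeval_smul, map_smul]
    rfl
  simpa using h

theorem isSimpleModule_AEval'_restrict {f : End K V} {U : Submodule K V}
    (hU : U ∈ f.invtSubmodule) (hU0 : U ≠ ⊥)
    (hmin : ∀ W ∈ f.invtSubmodule, W ≤ U → W = ⊥ ∨ W = U) :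
    IsSimpleModule K[X] (AEval' (LinearMap.restrict f (p := U) (q := U) hU)) := by
  have := Submodule.nontrivial_iff_ne_bot.2 hU0
  rw [isSimpleModule_iff, ←
    (AEval.mapSubmodule K U (LinearMap.restrict f (p := U) (q := U) hU)).isSimpleOrder_iff]
  refine { exists_pair_ne := ⟨⊥, ⊤, fun h => ?_⟩, eq_bot_or_eq_top := ?_ }
  · exact (bot_ne_top (α := Submodule K U)) (congrArg Subtype.val h)
  rintro ⟨W, hW⟩
  have hWf : W.map U.subtype ∈ f.invtSubmodule := by
    rintro _ ⟨w, hw, rfl⟩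
    exact ⟨_, hW hw, rfl⟩
  rcases hmin _ hWf (Submodule.map_subtype_le U W) with h | h
  · left
    refine Subtype.ext (Submodule.map_injective_of_injective U.injective_subtype ?_)
    rw [h]
    exact (Submodule.map_bot _).symm
  · right
    refine Subtype.ext (Submodule.map_injective_of_injective U.injective_subtype ?_)
    rw [h]
    exact (Submodule.map_subtype_top U).symm

theorem aeval_commute_of_commute {R A : Type*} [CommSemiring R] [Semiring A] [Algebra R A]
    {a b : A} (h : Commute a b) (p : R[X]) : Commute (aeval a p) b := by
  induction p using Polynomial.induction_on' with
  | add p q hp hq => rw [map_add]; exact hp.add_left hq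
  | monomial n r =>
    rw [aeval_monomial]
    exact (Algebra.commute_algebraMap_left r b).mul_left (h.pow_left n)

theorem coe_aeval_restrict_apply {f : End K V} {U : Submodule K V} (hU : U ∈ f.invtSubmodule)
    (p : K[X]) (u : U) :
    (aeval (LinearMap.restrict f (p := U) (q := U) hU) p u : V) = aeval f p (u : V) := by
  induction p using Polynomial.induction_on' with
  | add p q hp hq => simp [hp, hq]
  | monomial n r =>
    have := congrArg Subtype.val (LinearMap.congr_fun (Module.End.pow_restrict n hU) u)
    simp [aeval_monomial, this]

theorem exists_det_aeval_mul_add_one_sub_eq [Finite K] [FiniteDimensional K V] {f e : End K V}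
    (he : IsIdempotentElem e) (hfe : Commute f e) (he0 : e ≠ 0)
    (hmin : ∀ W ∈ f.invtSubmodule, W ≤ LinearMap.range e → W = ⊥ ∨ W = LinearMap.range e)
    (a : K) : ∃ p : K[X], LinearMap.det (aeval f p * e + (1 - e)) = a := by
  have hU := range_mem_invtSubmodule_of_commute hfe
  obtain ⟨p, hp⟩ := exists_det_aeval_eq_of_isSimpleModule
    (isSimpleModule_AEval'_restrict hU (by simpa [LinearMap.range_eq_bot] using he0) hmin) a
  refine ⟨p, ?_⟩
  have hpe : Commute (aeval f p) e := aeval_commute_of_commute hfe p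
  have hee : ∀ v, e (e v) = e v := fun v => LinearMap.congr_fun he.eq v
  have hb : ∀ v, (aeval f p * e + (1 - e)) (e v) = aeval f p (e v) := by
    intro v
    simp [hee]
  have hW : LinearMap.range e ≤ (LinearMap.range e).comap (aeval f p * e + (1 - e)) := by
    rintro _ ⟨v, rfl⟩
    rw [Submodule.mem_comap, hb]
    exact ⟨aeval f p v, (LinearMap.congr_fun hpe.eq v).symm⟩
  rw [LinearMap.det_eq_det_mul_det _ _ hW]
  have h1 : (LinearMap.range e).mapQ _ (aeval f p * e + (1 - e)) hW = LinearMap.id := by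
    ext v
    simp only [LinearMap.comp_apply, Submodule.mkQ_apply, Submodule.mapQ_apply, LinearMap.id_apply]
    rw [Submodule.Quotient.eq]
    refine ⟨aeval f p v - v, ?_⟩
    have := LinearMap.congr_fun hpe.eq v
    simp only [Module.End.mul_apply] at this
    simp [this]
    abel
  have h2 : LinearMap.restrict (aeval f p * e + (1 - e)) (p := LinearMap.range e)
      (q := LinearMap.range e) hW = aeval (LinearMap.restrict f (p := LinearMap.range e)
      (q := LinearMap.range e) hU) p := by
    ext ⟨_, v, rfl⟩
    rw [coe_aeval_restrict_apply hU]
    exact hb v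
  rw [h1, h2, hp, LinearMap.det_id, mul_one]

end EndomorphismLemmas

section Hermitian

open Module Polynomial

variable {K : Type*} [Field K] [StarRing K] {m : Type*} [Fintype m] [DecidableEq m]

theorem rank_conjTranspose_of_field (A : Matrix m m K) : A.conjTranspose.rank = A.rank := by
  have key : ∀ (A V U : Matrix m m K), IsUnit V → IsUnit U → (V * A * U).rank = A.rank := by
    intro A V U hV hU
    rw [Matrix.rank_mul_eq_left_of_isUnit_det _ _ ((Matrix.isUnit_iff_isUnit_det _).1 hU),
      Matrix.rank_mul_eq_right_of_isUnit_det _ _ ((Matrix.isUnit_iff_isUnit_det _).1 hV)]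
  obtain ⟨V, U, e, hV, hU, h⟩ := A.exists_rank_normal_form
  have h' := congrArg Matrix.conjTranspose h
  have hD : ((fromBlocks (1 : Matrix (Fin A.rank) (Fin A.rank) K) 0 0
      (0 : Matrix (Fin (Fintype.card m - A.rank)) _ K)).submatrix e e).conjTranspose =
      (fromBlocks 1 0 0 0).submatrix e e := by
    rw [conjTranspose_submatrix, fromBlocks_conjTranspose]; simp
  rw [hD, ← h, conjTranspose_mul, conjTranspose_mul, ← mul_assoc] at h'
  rw [← key A V U hV hU, ← h', key Aᴴ Uᴴ Vᴴ hU.star hV.star]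

/-- A semisimple unitary matrix commutes with unitary matrices of every determinant of the form
`a / star a`. -/
theorem exists_unitary_commute_det_eq [Finite K]
    [Nonempty m] {B x : Matrix m m K} (hB : IsUnit B) (hBh : B.conjTranspose = B)
    (hxB : x * B * x.conjTranspose = B) (hss : Squarefree (minpoly K x)) {a : K} (ha : a ≠ 0) :
    ∃ z : Matrix m m K, z * B * z.conjTranspose = B ∧ Commute z x ∧ z.det = a / star a := by
  have hBd : IsUnit B.det := (Matrix.isUnit_iff_isUnit_det _).1 hB
  have hB1 : B * B⁻¹ = 1 := Matrix.mul_nonsing_inv _ hBd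
  have hB2 : B⁻¹ * B = 1 := Matrix.nonsing_inv_mul _ hBd
  obtain ⟨T, hT⟩ : ∃ T : Matrix m m K → Matrix m m K, ∀ X, T X = B * X.conjTranspose * B⁻¹ :=
    ⟨_, fun _ => rfl⟩
  have hTB : ∀ X, T X * B = B * X.conjTranspose := fun X => by
    rw [hT, mul_assoc, hB2, mul_one]
  have hmul : ∀ X Y, T (X * Y) = T Y * T X := fun X Y => by
    rw [hT (X * Y), hT X, ← mul_assoc, ← mul_assoc, hTB, conjTranspose_mul]
    simp only [mul_assoc]
  have hinv : ∀ X, T (T X) = X := fun X => by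
    rw [hT (T X), hT X]
    simp only [conjTranspose_mul, conjTranspose_conjTranspose, conjTranspose_nonsing_inv, hBh]
    rw [← mul_assoc, ← mul_assoc, hB1, one_mul, mul_assoc, hB1, mul_one]
  have hone : T 1 = 1 := by rw [hT, conjTranspose_one, mul_one, hB1]
  have hadd : ∀ X Y, T (X + Y) = T X + T Y := fun X Y => by
    simp only [hT, conjTranspose_add, mul_add, add_mul]
  have hsub : ∀ X Y, T (X - Y) = T X - T Y := fun X Y => by
    simp only [hT, conjTranspose_sub, mul_sub, sub_mul]
  have hrank : ∀ X, (T X).rank = X.rank := fun X => by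
    rw [hT, Matrix.rank_mul_eq_left_of_isUnit_det _ _
      ((Matrix.isUnit_nonsing_inv_det_iff).2 hBd),
      Matrix.rank_mul_eq_right_of_isUnit_det _ _ hBd, rank_conjTranspose_of_field]
  have hxT : x * T x = 1 := by
    rw [hT, ← mul_assoc, ← mul_assoc, hxB, hB1]
  have hxT' : T x * x = 1 := mul_eq_one_comm.1 hxT
  have hcomm : ∀ X, Commute x X → Commute x (T X) := fun X h => by
    have h1 : T X * T x = T x * T X := by rw [← hmul, ← hmul, h.eq]
    calc x * T X = x * (T X * T x) * x := by rw [mul_assoc, mul_assoc, hxT', mul_one]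
      _ = T X * x := by rw [h1, ← mul_assoc, hxT, one_mul]
  have hfss : End.IsSemisimple (toLin' x) := by
    refine End.isSemisimple_of_squarefree_aeval_eq_zero (p := minpoly K x) hss ?_
    rw [← Matrix.minpoly_toLin', minpoly.aeval]
  have hcl : ∀ {X Y : Matrix m m K}, Commute (toLin' X) (toLin' Y) ↔ Commute X Y := by
    intro X Y
    exact commute_map_iff (Matrix.toLinAlgEquiv' (R := K) (n := m)).injective
  obtain ⟨e, he, hxe, hee, he0, hmin⟩ := exists_normal_minimal_isIdempotentElem hfss
    (τ := fun c => toLin' (T (LinearMap.toMatrix' c)))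
    (fun c d => by
      rw [LinearMap.toMatrix'_mul, hmul, Matrix.toLin'_mul, Module.End.mul_eq_comp])
    (fun c => by simp [hinv])
    (fun c => by
      have := hrank (LinearMap.toMatrix' c)
      rwa [Matrix.rank, Matrix.rank, ← toLin'_apply', ← toLin'_apply', toLin'_toMatrix'] at this)
    (fun c h => by
      rw [hcl]
      exact hcomm _ (by rwa [← hcl, toLin'_toMatrix']))
  obtain ⟨p, hp⟩ := exists_det_aeval_mul_add_one_sub_eq he hxe he0 hmin a
  obtain ⟨E, rfl⟩ := (toLin' (R := K) (m := m) (n := m)).surjective e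
  rw [hcl] at hxe
  simp only [LinearMap.toMatrix'_toLin'] at hee
  rw [hcl] at hee
  obtain ⟨β, hβ⟩ : ∃ β, β = aeval x p := ⟨_, rfl⟩
  have hβc : ∀ X, Commute x X → Commute β X := fun X h => hβ ▸ aeval_commute_of_commute h p
  have hTc : ∀ {X Y}, Commute X Y → Commute (T X) (T Y) := fun h => by
    rw [commute_iff_eq, ← hmul, ← hmul, h.eq]
  have hβE := hβc E hxe
  have hβTE := hβc (T E) (hcomm _ hxe)
  have hTβE : Commute (T β) E := by simpa only [hinv] using hTc hβTE
  have hβTβ : Commute β (T β) := hβc _ (hcomm _ (hβc x (Commute.refl x)).symm)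
  have hTβTE : Commute (T β) (T E) := hTc hβE
  obtain ⟨b, hb⟩ : ∃ b, b = β * E + (1 - E) := ⟨_, rfl⟩
  have hdetb : b.det = a := by
    rw [← hp, ← LinearMap.det_toLin', hb, hβ]
    congr 1
    change toLinAlgEquiv' (aeval x p * E + (1 - E)) =
      aeval (toLinAlgEquiv' x) p * toLinAlgEquiv' E + (1 - toLinAlgEquiv' E)
    rw [map_add, map_mul, map_sub, map_one, Polynomial.aeval_algHom_apply]
  have hTb : T b = T E * T β + (1 - T E) := by rw [hb, hadd, hmul, hsub, hone]
  have hbTb : Commute b (T b) := by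
    have h1 : ∀ {X}, Commute β X → Commute E X → Commute b X := fun h1 h2 => by
      rw [hb]; exact (h1.mul_left h2).add_left ((Commute.one_left _).sub_left h2)
    rw [hTb]
    exact ((h1 hβTE hee).mul_right (h1 hβTβ hTβE.symm)).add_right
      ((Commute.one_right _).sub_right (h1 hβTE hee))
  have hxb : Commute x b := by
    rw [hb]
    exact ((hβc x (Commute.refl x)).symm.mul_right hxe).add_right
      ((Commute.one_right _).sub_right hxe)
  have hdetTb : (T b).det = star a := by
    rw [hT, det_mul, det_mul, mul_right_comm, ← det_mul, hB1, det_one, one_mul,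
      det_conjTranspose, hdetb]
  have hbu : IsUnit b.det := by rw [hdetb]; exact ha.isUnit
  have hTbu : IsUnit (T b).det := by rw [hdetTb]; exact (star_ne_zero.2 ha).isUnit
  have hTTb : T (T b)⁻¹ = b⁻¹ := by
    refine (Matrix.inv_eq_left_inv ?_).symm
    have := congrArg T (Matrix.mul_nonsing_inv _ hTbu)
    rwa [hmul, hinv, hone] at this
  refine ⟨b * (T b)⁻¹, ?_, ?_, ?_⟩
  · rw [mul_assoc, ← hTB, ← mul_assoc, hmul, hTTb]
    have : b * (T b)⁻¹ * (b⁻¹ * T b) = 1 := by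
      calc b * (T b)⁻¹ * (b⁻¹ * T b) = b * ((T b)⁻¹ * b⁻¹) * T b := by simp only [mul_assoc]
        _ = b * (b⁻¹ * (T b)⁻¹) * T b := by
          rw [← Matrix.mul_inv_rev, ← Matrix.mul_inv_rev, hbTb.eq]
        _ = 1 := by
          rw [← mul_assoc, Matrix.mul_nonsing_inv _ hbu, one_mul, Matrix.nonsing_inv_mul _ hTbu]
    rw [this, one_mul]
  · refine (hxb.mul_right ?_).symm
    have h1 := (hcomm b hxb).eq
    calc x * (T b)⁻¹ = (T b)⁻¹ * (T b * x) * (T b)⁻¹ := by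
          rw [← mul_assoc, Matrix.nonsing_inv_mul _ hTbu, one_mul]
      _ = (T b)⁻¹ * x := by
          rw [← h1, mul_assoc, mul_assoc, Matrix.mul_nonsing_inv _ hTbu, mul_one]
  · rw [det_mul, det_nonsing_inv, hdetb, hdetTb, Ring.inverse_eq_inv', div_eq_mul_inv]

end Hermitian

theorem exists_div_pow_eq {K : Type*} [Field K] [Fintype K] {q : ℕ}
    (hcard : Fintype.card K = q ^ 2) (hadd : ∀ a b : K, (a + b) ^ q = a ^ q + b ^ q)
    {δ : K} (hδ : δ * δ ^ q = 1) : ∃ a : K, a ≠ 0 ∧ a / a ^ q = δ := by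
  have hq : ∀ c : K, (c ^ q) ^ q = c := fun c => by
    rw [← pow_mul, ← sq, ← hcard, FiniteField.pow_card]
  obtain ⟨c, hc⟩ : ∃ c : K, c + δ * c ^ q ≠ 0 := by
    by_contra! h
    have h1 := h 1
    rw [one_pow, mul_one] at h1
    have h2 : ∀ c : K, c ^ q = c := fun c => by
      have := h c
      rw [eq_neg_of_add_eq_zero_right h1, neg_one_mul, ← sub_eq_add_neg] at this
      exact (sub_eq_zero.1 this).symm
    have hq1 : 1 < q := by
      by_contra! hle
      have := Fintype.one_lt_card (α := K)
      rw [hcard] at this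
      interval_cases q <;> simp at this
    have h3 : ∀ u : Kˣ, u ^ (q - 1) = 1 := fun u => by
      have h4 : u ^ (q - 1) * u = u := by
        rw [← pow_succ, Nat.sub_add_cancel hq1.le]
        exact Units.ext (by simpa using h2 u)
      exact mul_eq_right.1 h4
    have h5 := Nat.le_of_dvd (by omega) ((FiniteField.forall_pow_eq_one_iff K (q - 1)).1 h3)
    rw [hcard] at h5
    have : q * 2 ≤ q ^ 2 := by rw [sq]; exact Nat.mul_le_mul_left q hq1
    omega
  refine ⟨_, hc, ?_⟩
  rw [div_eq_iff (pow_ne_zero _ hc), hadd, mul_pow, hq, mul_add, ← mul_assoc, hδ]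
  ring

/-- Semisimple determinant-one elements of a unitary group which are conjugate in the
unitary group are already conjugate by a determinant-one unitary element; so semisimple
conjugacy classes of the special unitary group coincide with unitary classes. -/
theorem semisimple_special_unitary_class_eq_unitary_class
    {p k : ℕ} [Fact p.Prime] (hk : k ≠ 0) (q : ℕ) (hq : q = p ^ k)
    {K : Type*} [Field K] [Fintype K] (hcard : Fintype.card K = q ^ 2)
    {n : ℕ} (B : Matrix (Fin n) (Fin n) K) (hB : IsUnit B)
    (hBherm : hermStar q B = B)
    (x y : Matrix (Fin n) (Fin n) K)
    (hx : IsUnit x) (hy : IsUnit y)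
    (hxB : x * B * hermStar q x = B) (hyB : y * B * hermStar q y = B)
    (hssx : Squarefree (minpoly K x)) (hssy : Squarefree (minpoly K y))
    (hdetx : x.det = 1) (hdety : y.det = 1)
    (hconj : ∃ g : Matrix (Fin n) (Fin n) K, IsUnit g ∧ g * B * hermStar q g = B ∧
        y = g⁻¹ * x * g) :
    ∃ h : Matrix (Fin n) (Fin n) K, IsUnit h ∧ h * B * hermStar q h = B ∧
      h.det = 1 ∧ y = h⁻¹ * x * h := by
  obtain ⟨g, hg, hgB, rfl⟩ := hconj
  have hgd : IsUnit g.det := (Matrix.isUnit_iff_isUnit_det _).1 hg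
  rcases isEmpty_or_nonempty (Fin n) with hn | hn
  · exact ⟨g, hg, hgB, Matrix.det_isEmpty, rfl⟩
  have hchar : CharP K p := charP_of_card_eq_prime_pow (f := k * 2) (by rw [hcard, hq, pow_mul])
  have hadd : ∀ a b : K, (a + b) ^ q = a ^ q + b ^ q := fun a b => by
    rw [hq]; exact add_pow_char_pow a b p k
  let _ : StarRing K :=
    { star := fun a => a ^ q
      star_involutive := fun a => by
        change (a ^ q) ^ q = a
        rw [← pow_mul, ← sq, ← hcard, FiniteField.pow_card]
      star_mul := fun a b => by
        change (a * b) ^ q = b ^ q * a ^ q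
        rw [mul_pow, mul_comm]
      star_add := hadd }
  have hstar : ∀ X : Matrix (Fin n) (Fin n) K, hermStar q X = X.conjTranspose := fun _ => rfl
  simp only [hstar] at *
  have hdet : g.det * g.det ^ q = 1 := by
    have h := congrArg Matrix.det hgB
    rw [det_mul, det_mul, mul_right_comm, det_conjTranspose] at h
    exact mul_eq_right₀ ((Matrix.isUnit_iff_isUnit_det _).1 hB).ne_zero |>.1 h
  obtain ⟨a, ha, hag⟩ := exists_div_pow_eq hcard hadd (δ := g.det⁻¹)
    (by rw [inv_pow, ← mul_inv, hdet, inv_one])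
  obtain ⟨z, hzB, hzx, hz⟩ := exists_unitary_commute_det_eq hB hBherm hxB hssx ha
  have hz' : z.det = g.det⁻¹ := hz.trans hag
  have hzd : IsUnit z.det := hz' ▸ (inv_ne_zero hgd.ne_zero).isUnit
  refine ⟨z * g, ((Matrix.isUnit_iff_isUnit_det _).2 hzd).mul hg, ?_, ?_, ?_⟩
  · calc z * g * B * (z * g).conjTranspose
        = z * (g * B * g.conjTranspose) * z.conjTranspose := by
          rw [conjTranspose_mul]; simp only [mul_assoc]
      _ = B := by rw [hgB, hzB]
  · rw [det_mul, hz', inv_mul_cancel₀ hgd.ne_zero]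
  · calc g⁻¹ * x * g = g⁻¹ * (z⁻¹ * z) * x * g := by
          rw [Matrix.nonsing_inv_mul _ hzd, mul_one]
      _ = g⁻¹ * z⁻¹ * (z * x) * g := by simp only [mul_assoc]
      _ = (z * g)⁻¹ * x * (z * g) := by
          rw [hzx.eq, Matrix.mul_inv_rev]; simp only [mul_assoc]
end

section
/- Let F be a finite field of odd order, B ∈ M_n(F) an invertible symmetric matrix, and 𝒞(B) = {g ∈ M_n(F) : g invertible, g·B·gᵀ = B} the corresponding orthogonal group. Let x ∈ 𝒞(B) be semisimple. Then there exists y ∈ 𝒞(B) with x·y = y·x and det y = −1 if and only if x² − I is not invertible. (Equivalently: the 𝒞(B)-conjugacy class of a semisimple x with det x = 1 coincides with its conjugacy class in the special orthogonal group {g ∈ 𝒞(B) : det g = 1} when x² − I is singular, and splits into two distinct special-orthogonal classes when x² − I is invertible.) -/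
open Matrix

namespace Matrix

variable {F ι : Type*} [Field F] [Fintype ι] [DecidableEq ι]

/-- If `y` and an invertible `S` commute, then the pencil `(1 + y) + t S (1 - y)` is
generically invertible in characteristic different from two. -/
lemma det_pencil_ne_zero (h2 : (2 : F) ≠ 0) {y S : Matrix ι ι F} (hS : IsUnit S)
    (hSy : S * y = y * S) :
    ((1 + y).map Polynomial.C +
      (Polynomial.X : Polynomial F) • (S * (1 - y)).map Polynomial.C).det ≠ 0 := by
  intro hdet
  obtain ⟨w, hw, hMw⟩ := exists_mulVec_eq_zero_iff.mpr hdet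
  let a : ℕ → ι → F := fun k i => (w i).coeff k
  have hC (A : Matrix ι ι F) (k : ℕ) (i : ι) :
      ((A.map Polynomial.C *ᵥ w) i).coeff k = (A *ᵥ a k) i := by
    simp [mulVec, dotProduct, a]
  have hzero : (1 + y) *ᵥ a 0 = 0 := by
    ext i
    have := congrArg (fun p => Polynomial.coeff p 0) (congrFun hMw i)
    simpa [add_mulVec, smul_mulVec, hC, -Matrix.map_mul] using this
  have hsucc (k : ℕ) : (1 + y) *ᵥ a (k + 1) + (S * (1 - y)) *ᵥ a k = 0 := by
    ext i
    have := congrArg (fun p => Polynomial.coeff p (k + 1)) (congrFun hMw i)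
    rw [add_mulVec, smul_mulVec] at this
    simpa only [Pi.add_apply, Pi.smul_apply, smul_eq_mul, Polynomial.coeff_add,
      Polynomial.coeff_X_mul, hC, Pi.zero_apply, Polynomial.coeff_zero] using this
  have hcomm : Commute (1 + y) (S * (1 - y)) := by
    have h : Commute S y := hSy
    have h' : Commute (1 + y) S := (Commute.one_left S).add_left h.symm
    refine h'.mul_right ?_
    exact (Commute.one_right _).sub_right ((Commute.one_left y).add_left (Commute.refl y))
  have hpow (k : ℕ) : (1 + y) ^ (k + 1) *ᵥ a k = 0 := by
    induction k with
    | zero => simpa using hzero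
    | succ k ih =>
      rw [pow_succ, ← mulVec_mulVec, eq_neg_of_add_eq_zero_left (hsucc k), mulVec_neg,
        mulVec_mulVec, (hcomm.pow_left (k + 1)).eq, ← mulVec_mulVec, ih, mulVec_zero, neg_zero]
  have hvanish (k : ℕ) (hk : a (k + 1) = 0) : a k = 0 := by
    have h := hsucc k
    rw [hk, mulVec_zero, zero_add, ← mulVec_mulVec] at h
    have h1 : (1 - y) *ᵥ a k = 0 :=
      mulVec_injective_of_isUnit hS (by rw [h, mulVec_zero])
    have hy : (1 + y) *ᵥ a k = (2 : F) • a k := by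
      rw [sub_mulVec, one_mulVec, sub_eq_zero] at h1
      rw [add_mulVec, one_mulVec, ← h1, two_smul]
    have hpow2 (m : ℕ) : (1 + y) ^ m *ᵥ a k = (2 : F) ^ m • a k := by
      induction m with
      | zero => simp
      | succ m ih => rw [pow_succ, ← mulVec_mulVec, hy, mulVec_smul, ih, smul_smul, pow_succ']
    have h0 := hpow k
    rw [hpow2] at h0
    exact (smul_eq_zero.mp h0).resolve_left (pow_ne_zero _ h2)
  have hlarge : a (Finset.univ.sup (fun i => (w i).natDegree) + 1) = 0 := by
    ext i
    exact Polynomial.coeff_eq_zero_of_natDegree_lt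
      (Nat.lt_succ_of_le (Finset.le_sup (f := fun i => (w i).natDegree) (Finset.mem_univ i)))
  have hall (N : ℕ) : a N = 0 → ∀ k ≤ N, a k = 0 := by
    induction N with
    | zero => intro h k hk; rwa [Nat.le_zero.mp hk]
    | succ N ih =>
      intro h k hk
      rcases Nat.le_succ_iff.mp hk with hk | rfl
      · exact ih (hvanish N h) k hk
      · exact h
  refine hw (funext fun i => Polynomial.ext fun k => ?_)
  by_cases hk : k ≤ Finset.univ.sup (fun i => (w i).natDegree) + 1
  · exact congrFun (hall _ hlarge k hk) i
  · refine Polynomial.coeff_eq_zero_of_natDegree_lt (lt_of_le_of_lt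
      (Finset.le_sup (f := fun i => (w i).natDegree) (Finset.mem_univ i)) ?_)
    omega

/-- An isometry commuting with an invertible skew-adjoint matrix has determinant one. -/
lemma det_eq_one_of_commute_skewAdjoint (h2 : (2 : F) ≠ 0) {B y S : Matrix ι ι F}
    (hB : IsUnit B) (hy : y * B * yᵀ = B) (hS : IsUnit S) (hSB : B * Sᵀ = -(S * B))
    (hSy : S * y = y * S) : y.det = 1 := by
  have hA : y * B * (1 + y)ᵀ = (1 + y) * B := by
    rw [transpose_add, transpose_one, mul_add, hy, mul_one, add_mul, one_mul, add_comm]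
  have hC : y * B * (S * (1 - y))ᵀ = S * (1 - y) * B := by
    calc y * B * (S * (1 - y))ᵀ = y * (B * Sᵀ) - y * B * yᵀ * Sᵀ := by
            have : y * B * (yᵀ * Sᵀ) = y * B * yᵀ * Sᵀ := by simp only [mul_assoc]
            simp only [transpose_mul, transpose_sub, transpose_one, mul_sub, one_mul,
              this]
            simp only [mul_assoc]
      _ = S * (1 - y) * B := by
            rw [hy, hSB, mul_sub, sub_mul, mul_one, mul_neg, ← mul_assoc, ← hSy]
            abel
  set M : Matrix ι ι (Polynomial F) := (1 + y).map Polynomial.C +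
      (Polynomial.X : Polynomial F) • (S * (1 - y)).map Polynomial.C with hM
  have hkey : y.map Polynomial.C * B.map Polynomial.C * Mᵀ = M * B.map Polynomial.C := by
    rw [hM, transpose_add, transpose_smul, mul_add, Matrix.mul_smul, add_mul, Matrix.smul_mul,
      ← transpose_map, ← transpose_map, ← Matrix.map_mul, ← Matrix.map_mul, ← Matrix.map_mul,
      ← Matrix.map_mul, ← Matrix.map_mul, hA, hC]
  have hdet := congrArg det hkey
  have hBdet : (B.map Polynomial.C).det ≠ 0 := by
    rw [← RingHom.mapMatrix_apply, ← RingHom.map_det]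
    simpa using ((isUnit_iff_isUnit_det B).mp hB).ne_zero
  rw [det_mul, det_mul, det_mul, det_transpose, mul_comm M.det, mul_assoc] at hdet
  have h1 : (y.map Polynomial.C).det = 1 :=
    mul_right_cancel₀ (mul_ne_zero hBdet (det_pencil_ne_zero h2 hS hSy))
      (by rw [hdet, one_mul])
  rw [← RingHom.mapMatrix_apply, ← RingHom.map_det] at h1
  exact Polynomial.C_injective (by rw [h1, map_one])

lemma aeval_mulVec_of_eigenvector {x : Matrix ι ι F} {c : F} {r : ι → F}
    (h : x *ᵥ r = c • r) (p : Polynomial F) :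
    Polynomial.aeval x p *ᵥ r = p.eval c • r := by
  induction p using Polynomial.induction_on' with
  | add p q hp hq => rw [map_add, add_mulVec, hp, hq, Polynomial.eval_add, add_smul]
  | monomial k a =>
    have hpow : x ^ k *ᵥ r = c ^ k • r := by
      induction k with
      | zero => simp
      | succ k ih => rw [pow_succ, ← mulVec_mulVec, h, mulVec_smul, ih, smul_smul, pow_succ']
    rw [Polynomial.aeval_monomial, ← mulVec_mulVec, hpow, Polynomial.eval_monomial,
      algebraMap_eq_diagonal, mulVec_smul, mul_comm, mul_smul]
    congr 1
    ext i
    simp [mulVec_diagonal]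

/-- A semisimple isometry with eigenvalue `c = ±1` has an anisotropic eigenvector. -/
lemma exists_anisotropic_eigenvector (h2 : (2 : F) ≠ 0) {B x : Matrix ι ι F} (hB : IsUnit B)
    (hBsym : Bᵀ = B) (hxB : x * B * xᵀ = B) (hss : Squarefree (minpoly F x)) {c : F}
    (hc : c * c = 1) (hdet : (x - c • (1 : Matrix ι ι F)).det = 0) :
    ∃ v : ι → F, xᵀ *ᵥ v = c • v ∧ x *ᵥ (B *ᵥ v) = c • (B *ᵥ v) ∧ v ⬝ᵥ (B *ᵥ v) ≠ 0 := by
  have hBv {v : ι → F} (hv : xᵀ *ᵥ v = c • v) : x *ᵥ (B *ᵥ v) = c • (B *ᵥ v) := by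
    have h : B *ᵥ v = c • (x *ᵥ (B *ᵥ v)) := by
      conv_lhs => rw [← hxB]
      rw [← mulVec_mulVec, hv, mulVec_smul, mulVec_mulVec]
    conv_rhs => rw [h, smul_smul, hc, one_smul]
  by_contra! hiso
  have hiso' {v : ι → F} (hv : xᵀ *ᵥ v = c • v) : v ⬝ᵥ (B *ᵥ v) = 0 := hiso v hv (hBv hv)
  rw [← det_transpose] at hdet
  obtain ⟨v, hv0, hv⟩ := exists_mulVec_eq_zero_iff.mpr hdet
  rw [transpose_sub, transpose_smul, transpose_one, sub_mulVec, smul_mulVec, one_mulVec,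
    sub_eq_zero] at hv
  have hr0 : B *ᵥ v ≠ 0 := fun h =>
    hv0 (mulVec_injective_of_isUnit hB (by rw [h, mulVec_zero]))
  have hr := hBv hv
  have hroot : (minpoly F x).IsRoot c := by
    have h := aeval_mulVec_of_eigenvector hr (minpoly F x)
    rw [minpoly.aeval, zero_mulVec] at h
    exact (smul_eq_zero.mp h.symm).resolve_right hr0
  obtain ⟨q, hq⟩ := Polynomial.dvd_iff_isRoot.mpr hroot
  have hqc : q.eval c ≠ 0 := by
    intro h
    obtain ⟨s, hs⟩ := Polynomial.dvd_iff_isRoot.mpr h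
    exact Polynomial.not_isUnit_X_sub_C c (hss _ ⟨s, by rw [hq, hs, mul_assoc]⟩)
  have hort {u : ι → F} (hu : xᵀ *ᵥ u = c • u) : u ⬝ᵥ (B *ᵥ v) = 0 := by
    have h := hiso' (v := u + v) (by rw [mulVec_add, hu, hv, smul_add])
    have hsym : v ⬝ᵥ (B *ᵥ u) = u ⬝ᵥ (B *ᵥ v) := by
      rw [dotProduct_mulVec, ← mulVec_transpose, hBsym, dotProduct_comm]
    rw [mulVec_add, add_dotProduct, dotProduct_add, dotProduct_add, hiso' hu, hiso' hv, hsym,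
      zero_add, add_zero, ← two_mul] at h
    exact (mul_eq_zero.mp h).resolve_left h2
  refine hr0 (dotProduct_eq_zero _ fun w => ?_)
  have hu : xᵀ *ᵥ ((Polynomial.aeval x q)ᵀ *ᵥ w) = c • ((Polynomial.aeval x q)ᵀ *ᵥ w) := by
    have h := minpoly.aeval F x
    rw [hq, mul_comm, map_mul, map_sub, Polynomial.aeval_X, Polynomial.aeval_C, mul_sub,
      sub_eq_zero, Algebra.algebraMap_eq_smul_one, mul_smul_comm, mul_one] at h
    rw [mulVec_mulVec, ← transpose_mul, h, transpose_smul, smul_mulVec]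
  have h := hort hu
  rw [mulVec_transpose, ← dotProduct_mulVec, aeval_mulVec_of_eigenvector hr, dotProduct_smul,
    smul_eq_mul] at h
  rw [dotProduct_comm]
  exact (mul_eq_zero.mp h).resolve_left hqc

/-- The reflection in an anisotropic eigenvector is an isometry of determinant `-1` commuting
with the given matrix. -/
lemma exists_commute_isometry_det_neg_one {B x : Matrix ι ι F}
    (hBsym : Bᵀ = B) {c : F} {v : ι → F} (hv : xᵀ *ᵥ v = c • v)
    (hBv : x *ᵥ (B *ᵥ v) = c • (B *ᵥ v)) (hne : v ⬝ᵥ (B *ᵥ v) ≠ 0) :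
    ∃ y : Matrix ι ι F, y * B * yᵀ = B ∧ x * y = y * x ∧ y.det = -1 := by
  set d := v ⬝ᵥ (B *ᵥ v) with hd
  have hvB : v ᵥ* B = B *ᵥ v := by rw [← mulVec_transpose, hBsym]
  refine ⟨1 - (2 / d) • vecMulVec (B *ᵥ v) v, ?_, ?_, ?_⟩
  · have hT : (vecMulVec (B *ᵥ v) v)ᵀ = vecMulVec v (B *ᵥ v) := transpose_vecMulVec _ _
    rw [transpose_sub, transpose_one, transpose_smul, hT, sub_mul, one_mul, smul_mul_assoc,
      vecMulVec_mul, hvB, mul_sub, mul_one, mul_smul_comm, sub_mul, mul_vecMulVec, smul_mul_assoc,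
      vecMulVec_mul_vecMulVec, dotProduct_comm, ← hd]
    simp only [vecMulVec_smul, smul_sub, smul_smul]
    have : 2 / d * (2 / d * d) = 2 / d + 2 / d := by field_simp; ring
    rw [this, add_smul]
    abel
  · rw [mul_sub, sub_mul, mul_smul_comm, smul_mul_assoc, mul_vecMulVec, vecMulVec_mul, hBv,
      ← mulVec_transpose, hv, smul_vecMulVec, vecMulVec_smul, mul_one, one_mul]
  · rw [sub_eq_add_neg, ← neg_smul, ← smul_vecMulVec, vecMulVec_eq Unit,
      det_one_add_replicateCol_mul_replicateRow, dotProduct_smul, ← hd, smul_eq_mul]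
    field_simp
    ring

end Matrix

/-- Let `x` be a semisimple element of an orthogonal group over a finite field of odd
order.  There exists an element of the orthogonal group commuting with `x` of determinant
`−1` if and only if `x² − I` is not invertible. -/
theorem semisimple_orthogonal_centralizer_det_neg_one_iff
    {F : Type*} [Field F] [Fintype F] (hodd : Odd (Fintype.card F)) {n : ℕ}
    (B : Matrix (Fin n) (Fin n) F) (hB : IsUnit B) (hBsym : Bᵀ = B)
    (x : Matrix (Fin n) (Fin n) F) (hx : IsUnit x) (hxB : x * B * xᵀ = B)
    (hss : Squarefree (minpoly F x)) :
    (∃ y : Matrix (Fin n) (Fin n) F, IsUnit y ∧ y * B * yᵀ = B ∧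
        x * y = y * x ∧ y.det = -1) ↔ ¬ IsUnit (x ^ 2 - 1) := by
  have h2 : (2 : F) ≠ 0 := Ring.two_ne_zero fun h =>
    Nat.not_even_iff_odd.mpr hodd (FiniteField.even_card_iff_char_two.mp h |> Nat.even_iff.mpr)
  constructor
  · rintro ⟨y, -, hyB, hxy, hdet⟩ hu
    obtain ⟨z, hxz, hzx⟩ : ∃ z, x * z = 1 ∧ z * x = 1 := by
      obtain ⟨u, rfl⟩ := hx
      exact ⟨↑u⁻¹, u.mul_inv, u.inv_mul⟩
    have hfac : x - z = z * (x ^ 2 - 1) := by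
      rw [mul_sub, pow_two, ← mul_assoc, hzx, one_mul, mul_one]
    have hzu : IsUnit z := ⟨⟨z, x, hzx, hxz⟩, rfl⟩
    have hBx : B * xᵀ = z * B := by
      calc B * xᵀ = z * x * B * xᵀ := by rw [hzx, one_mul]
        _ = z * (x * B * xᵀ) := by simp only [mul_assoc]
        _ = z * B := by rw [hxB]
    have hBz : B * zᵀ = x * B := by
      calc B * zᵀ = x * B * xᵀ * zᵀ := by rw [hxB]
        _ = x * B * (z * x)ᵀ := by rw [transpose_mul, mul_assoc]
        _ = x * B := by rw [hzx, transpose_one, mul_one]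
    have hzy : z * y = y * z := by
      calc z * y = z * y * (x * z) := by rw [hxz, mul_one]
        _ = z * (y * x) * z := by simp only [mul_assoc]
        _ = z * x * y * z := by rw [← hxy]; simp only [mul_assoc]
        _ = y * z := by rw [hzx, one_mul]
    have h1 := det_eq_one_of_commute_skewAdjoint h2 hB hyB (S := x - z)
      (hfac ▸ hzu.mul hu) (by rw [transpose_sub, mul_sub, hBx, hBz, sub_mul, neg_sub])
      (by rw [sub_mul, mul_sub, hxy, hzy])
    refine h2 ?_
    rw [← one_add_one_eq_two]
    nth_rewrite 1 [← h1]
    rw [hdet, neg_add_cancel]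
  · intro hu
    have hdet : (x ^ 2 - 1).det = 0 := by
      rwa [isUnit_iff_isUnit_det, isUnit_iff_ne_zero, not_not] at hu
    have hfac : x ^ 2 - 1 = (x - (1 : F) • (1 : Matrix (Fin n) (Fin n) F)) *
        (x - (-1 : F) • (1 : Matrix (Fin n) (Fin n) F)) := by
      rw [one_smul, neg_smul, one_smul]
      noncomm_ring
    rw [hfac, det_mul] at hdet
    obtain ⟨c, hc, hcdet⟩ : ∃ c : F, c * c = 1 ∧
        (x - c • (1 : Matrix (Fin n) (Fin n) F)).det = 0 := by
      rcases mul_eq_zero.mp hdet with h | h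
      · exact ⟨1, by ring, h⟩
      · exact ⟨-1, by ring, h⟩
    obtain ⟨v, hv, hBv, hne⟩ := exists_anisotropic_eigenvector h2 hB hBsym hxB hss hc hcdet
    obtain ⟨y, hy, hxy, hydet⟩ := exists_commute_isometry_det_neg_one hBsym hv hBv hne
    refine ⟨y, ?_, hy, hxy, hydet⟩
    rw [isUnit_iff_isUnit_det, hydet]
    exact isUnit_one.neg
end

section
/- Let F be a finite field of characteristic 2, let Q be a nonsingular quadratic form on F^n with polar form β_Q, and let X, Y be semisimple isometries of Q. Then the following are equivalent: (i) Y = g⁻¹·X·g for some isometry g of Q; (ii) Y = h⁻¹·X·h for some invertible h with β_Q(u·h, v·h) = β_Q(u,v) for all u,v (i.e. h in the symplectic group of β_Q); (iii) X and Y are similar (conjugate in GL(n,F)). -/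
open Matrix

/-- In characteristic two, `z + d * z ^ 2 = w` is solvable whenever `w` is nilpotent. -/
lemma exists_add_mul_sq_eq_of_pow_eq_zero {R : Type*} [CommRing R] [CharP R 2] (k : ℕ) :
    ∀ d w : R, w ^ 2 ^ k = 0 → ∃ z, z + d * z ^ 2 = w := by
  induction k with
  | zero => exact fun d w hw ↦ ⟨0, by simpa using hw.symm⟩
  | succ k ih =>
    intro d w hw
    obtain ⟨z, hz⟩ := ih d (d * w ^ 2) (by
      rw [mul_pow, ← pow_mul, ← pow_succ', hw, mul_zero])
    refine ⟨w + z, ?_⟩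
    rw [CharTwo.add_sq]
    linear_combination hz + CharTwo.add_self_eq_zero (d * w ^ 2)

/-- In a commutative ring of characteristic two, the binary form `p ^ 2 + p q + d q ^ 2`
represents every element of finite multiplicative order. -/
lemma exists_sq_add_mul_add_mul_sq_eq {R : Type*} [CommRing R] [CharP R 2]
    {s : R} {n : ℕ} (hn0 : n ≠ 0) (hn : s ^ n = 1) (d : R) :
    ∃ p q : R, p ^ 2 + p * q + d * q ^ 2 = s := by
  obtain ⟨a, m, ⟨j, rfl⟩, rfl⟩ := Nat.exists_eq_two_pow_mul_odd hn0
  have ha : 1 ≤ 2 ^ a := Nat.one_le_two_pow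
  set u := s ^ ((2 ^ a - 1) * (2 * j + 1)) with hu
  have hnil : (u + 1) ^ 2 ^ a = 0 := by
    rw [add_pow_char_pow, one_pow, hu, ← pow_mul,
      show (2 ^ a - 1) * (2 * j + 1) * 2 ^ a = 2 ^ a * (2 * j + 1) * (2 ^ a - 1) by ring,
      pow_mul, hn, one_pow, CharTwo.add_self_eq_zero]
  have hus : (s ^ (j + 1)) ^ 2 * u = s := by
    rw [hu, ← pow_mul, ← pow_add,
      show (j + 1) * 2 + (2 ^ a - 1) * (2 * j + 1) = 2 ^ a * (2 * j + 1) + 1 by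
        obtain ⟨b, hb⟩ := Nat.exists_eq_add_of_le ha
        rw [hb, Nat.add_sub_cancel_left]; ring,
      pow_succ, hn, one_mul]
  obtain ⟨z, hz⟩ := exists_add_mul_sq_eq_of_pow_eq_zero a d (u + 1) hnil
  refine ⟨s ^ (j + 1), s ^ (j + 1) * z, ?_⟩
  linear_combination (s ^ (j + 1)) ^ 2 * hz + hus +
    (s ^ (j + 1)) ^ 2 * CharTwo.add_self_eq_zero (1 : R)

/-- Two invariant nondegenerate symmetric bilinear forms over a finite field of characteristic two
are isometric through a map commuting with `T`, provided `1 + T` is invertible. -/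
lemma LinearMap.BilinForm.exists_commute_isometry_of_invariant {F W : Type*} [Field F]
    [Finite F] [CharP F 2] [AddCommGroup W] [Module F W] [FiniteDimensional F W]
    (B B' : LinearMap.BilinForm F W)
    (hB : ∀ u v, B u v = B v u) (hB' : ∀ u v, B' u v = B' v u)
    (hnd : ∀ u, (∀ v, B u v = 0) → u = 0) (hnd' : ∀ u, (∀ v, B' u v = 0) → u = 0)
    (T : Module.End F W) (hT : ∀ u v, B (T u) (T v) = B u v)
    (hT' : ∀ u v, B' (T u) (T v) = B' u v) (h1 : IsUnit (1 + T)) :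
    ∃ g : W ≃ₗ[F] W, (∀ w, g (T w) = T (g w)) ∧ ∀ u v, B (g u) (g v) = B' u v := by
  have hBinj : ∀ {u u'}, (∀ v, B u v = B u' v) → u = u' := fun {u u'} h ↦
    sub_eq_zero.1 (hnd _ fun v ↦ by simp [h])
  obtain ⟨S, hS⟩ : ∃ S : Module.End F W, ∀ u v, B (S u) v = B' u v := by
    have hker : LinearMap.ker B = ⊥ :=
      LinearMap.ker_eq_bot'.2 fun u hu ↦ hnd u fun v ↦ by simp [hu]
    let e := B.linearEquivOfInjective (LinearMap.ker_eq_bot.mp hker)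
      Subspace.dual_finrank_eq.symm
    refine ⟨e.symm.toLinearMap ∘ₗ B', fun u v ↦ ?_⟩
    exact congr($(e.apply_symm_apply (B' u)) v)
  have hTsurj : Function.Surjective T := LinearMap.surjective_of_injective <|
    LinearMap.ker_eq_bot.1 <| LinearMap.ker_eq_bot'.2 fun u hu ↦ hnd u fun v ↦ by
      rw [← hT, hu, map_zero, LinearMap.zero_apply]
  have hST : Commute S T := by
    ext u
    refine hBinj fun v ↦ ?_
    obtain ⟨v, rfl⟩ := hTsurj v
    simp [hS, hT', hT]
  have hSadj : ∀ u v, B (S u) v = B u (S v) := fun u v ↦ by rw [hS, hB', ← hS, hB]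
  have hSunit : IsUnit S := by
    rw [LinearMap.isUnit_iff_ker_eq_bot]
    exact LinearMap.ker_eq_bot'.2 fun u hu ↦ hnd' u fun v ↦ by simp [← hS, hu]
  obtain ⟨τ, hτ⟩ := h1
  set c : Module.End F W := ↑τ⁻¹ with hc
  have hcl : c * (1 + T) = 1 := by rw [← hτ, hc, Units.inv_mul]
  have hcr : (1 + T) * c = 1 := by rw [← hτ, hc, Units.mul_inv]
  have hcT : Commute c T := by
    have : Commute (τ : Module.End F W) T := by
      rw [hτ]; exact (Commute.one_left T).add_left (Commute.refl T)
    exact this.units_inv_left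
  have hcS : Commute c S := by
    have : Commute (τ : Module.End F W) S := by
      rw [hτ]; exact (Commute.one_left S).add_left hST.symm
    exact this.units_inv_left
  have h2 : ∀ w : W, w + w = 0 := fun w ↦ by
    rw [← two_smul F w, CharTwo.two_eq_zero, zero_smul]
  have hcadj : ∀ u v, B (c u) v = B u (v + c v) := by
    intro u v
    have hu : u = c u + T (c u) := by simpa using congr($hcr u).symm
    have hv : v = c v + T (c v) := by simpa using congr($hcr v).symm
    generalize c u = u' at *
    generalize c v = v' at *
    subst hu hv
    have e := h2 v'
    rw [show v' + T v' + v' = T v' by rw [add_right_comm, e, zero_add]]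
    simp [hT, add_comm]
  have hchar : CharP (Module.End F W) 2 ∨ Subsingleton W := by
    cases subsingleton_or_nontrivial W
    · exact .inr ‹_›
    · exact .inl (charP_of_injective_algebraMap (algebraMap F _).injective 2)
  obtain hchar | hW := hchar
  swap
  · refine ⟨LinearEquiv.refl F W, fun _ ↦ rfl, fun u v ↦ ?_⟩
    rw [Subsingleton.elim u 0]; simp
  set d := c + c * c with hd
  have hdS : Commute S d := hcS.symm.add_right (hcS.symm.mul_right hcS.symm)
  let K := Subring.closure ({S, d} : Set (Module.End F W))
  have hKcomm : IsMulCommutative K := Subring.isMulCommutative_closure <| by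
    rintro x (rfl | rfl) y (rfl | rfl)
    exacts [rfl, hdS, hdS.symm, rfl]
  have hKcentr : ∀ t : Module.End F W, Commute t S → Commute t c → ∀ x ∈ K, Commute t x := by
    intro t htS htc x hx
    have : K ≤ Subring.centralizer {t} := Subring.closure_le.2 <| by
      rintro x (rfl | rfl) _ rfl
      exacts [htS, htc.add_right (htc.mul_right htc)]
    exact this hx t rfl
  have hKadj : ∀ x ∈ K, ∀ u v, B (x u) v = B u (x v) := by
    intro x hx
    induction hx using Subring.closure_induction with
    | mem x hx =>
      obtain rfl | rfl := hx
      · exact hSadj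
      · intro u v
        simp only [hd, LinearMap.add_apply, Module.End.mul_apply, map_add, hcadj]
        linear_combination CharTwo.add_self_eq_zero (B u (c v)) + CharTwo.add_self_eq_zero (B u v)
    | zero => simp
    | one => simp
    | add x y _ _ hx hy => intro u v; simp [hx, hy]
    | neg x _ hx => intro u v; simp [hx]
    | mul x y hx' hy' hx hy =>
      intro u v
      have hxy : x * y = y * x := congr(($(hKcomm.is_comm.comm ⟨x, hx'⟩ ⟨y, hy'⟩) : Module.End F W))
      rw [Module.End.mul_apply, hx, hy, hxy, Module.End.mul_apply]
  obtain ⟨n, hn0, hn⟩ : ∃ n : ℕ, n ≠ 0 ∧ S ^ n = 1 := by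
    have : Finite (Module.End F W) := Module.finite_of_finite F
    obtain ⟨u, rfl⟩ := hSunit
    refine ⟨Nat.card (Module.End F W)ˣ, Nat.card_pos.ne', ?_⟩
    rw [← Units.val_pow_eq_pow_val, pow_card_eq_one', Units.val_one]
  obtain ⟨⟨p, hp⟩, ⟨q, hq⟩, hpq⟩ : ∃ p q : K, p ^ 2 + p * q +
      ⟨d, Subring.subset_closure (by simp)⟩ * q ^ 2 = ⟨S, Subring.subset_closure (by simp)⟩ := by
    open scoped IsMulCommutative in
    have : CharP K 2 := K.subtype.charP Subtype.val_injective 2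
    exact exists_sq_add_mul_add_mul_sq_eq hn0 (Subtype.ext hn) _
  replace hpq : p ^ 2 + p * q + d * q ^ 2 = S := congr(($hpq : Module.End F W))
  have hcp := hKcentr c hcS (Commute.refl c) p hp
  have hcq := hKcentr c hcS (Commute.refl c) q hq
  have hqp : q * p = p * q := congr(($(hKcomm.is_comm.comm ⟨q, hq⟩ ⟨p, hp⟩) : Module.End F W))
  have hmul : p * (p + c * q) + q * (p + c * q) + q * c * (p + c * q) = S := by
    have e1 : p * (c * q) = c * (p * q) := by rw [← mul_assoc, ← hcp.eq, mul_assoc]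
    have e2 : q * (c * q) = c * q ^ 2 := by rw [← mul_assoc, ← hcq.eq, mul_assoc, sq]
    have e3 : q * c * p = c * (p * q) := by rw [← hcq.eq, mul_assoc, hqp]
    have e4 : q * c * (c * q) = c * c * q ^ 2 := by
      rw [← hcq.eq, mul_assoc, e2, ← mul_assoc]
    rw [← hpq, mul_add, mul_add, mul_add, e1, e2, e3, e4, hd, hqp, add_mul, sq p]
    rw [← sub_eq_zero, ← CharTwo.add_self_eq_zero (c * (p * q))]
    abel
  have hgB : ∀ u v, B ((p + c * q) u) ((p + c * q) v) = B' u v := by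
    intro u v
    rw [hB', ← hS, hB, ← hmul]
    simp only [LinearMap.add_apply, Module.End.mul_apply, map_add, hKadj p hp, hcadj, hKadj q hq]
    linear_combination -CharTwo.add_self_eq_zero (B v (q (c (q u)))) -
      CharTwo.add_self_eq_zero (B v (p (q u))) - CharTwo.add_self_eq_zero (B v (q (q u)))
  have hgT : Commute (p + c * q) T :=
    .add_left (hKcentr T hST.symm hcT.symm p hp).symm
      (hcT.mul_left (hKcentr T hST.symm hcT.symm q hq).symm)
  refine ⟨LinearEquiv.ofInjectiveEndo (p + c * q) ?_, fun w ↦ congr($hgT.eq w), hgB⟩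
  exact LinearMap.ker_eq_bot.1 <| LinearMap.ker_eq_bot'.2 fun u hu ↦ hnd' u fun v ↦ by
    rw [← hgB, hu, map_zero, LinearMap.zero_apply]

section

open QuadraticMap

/-- The vectors polar-orthogonal to both `e` and `f`. -/
def QuadraticMap.pairOrtho {K V : Type*} [Field K] [AddCommGroup V] [Module K V]
    (Q : QuadraticForm K V) (e f : V) : Submodule K V :=
  LinearMap.ker (polarBilin Q e) ⊓ LinearMap.ker (polarBilin Q f)

section

variable {K V : Type*} [Field K] [AddCommGroup V] [Module K V] {Q : QuadraticForm K V}

lemma QuadraticMap.mem_pairOrtho {e f v : V} :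
    v ∈ Q.pairOrtho e f ↔ polar Q e v = 0 ∧ polar Q f v = 0 := by
  simp [pairOrtho]

lemma QuadraticMap.pairOrtho_comm (e f : V) : Q.pairOrtho e f = Q.pairOrtho f e :=
  inf_comm _ _

lemma QuadraticMap.polar_self_eq_zero_of_singular {e : V} (he : Q e = 0) : polar Q e e = 0 := by
  rw [polar_self, he, smul_zero]

lemma QuadraticMap.map_add_smul_of_singular {e v : V} (he : Q e = 0) (a : K) :
    Q (v + a • e) = Q v + a * polar Q e v := by
  rw [QuadraticMap.map_add Q, QuadraticMap.map_smul, he, polar_smul_right, polar_comm]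
  simp

lemma QuadraticMap.equivalent_restrict_pairOrtho_right {e f f' : V} (he : Q e = 0)
    (hf : polar Q e f ≠ 0) (hf' : polar Q e f' ≠ 0) :
    (Q.restrict (Q.pairOrtho e f)).Equivalent (Q.restrict (Q.pairOrtho e f')) := by
  have hee := polar_self_eq_zero_of_singular he
  let φ (f : V) : V →ₗ[K] V :=
    LinearMap.id - (LinearMap.toSpanSingleton K V e) ∘ₗ ((polar Q e f)⁻¹ • polarBilin Q f)
  have hφ : ∀ f v, φ f v = v + (-((polar Q e f)⁻¹ * polar Q f v)) • e := fun f v ↦ by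
    simp [φ, sub_eq_add_neg]
  have hmem : ∀ f f', polar Q e f' ≠ 0 → ∀ v ∈ Q.pairOrtho e f, φ f' v ∈ Q.pairOrtho e f' := by
    intro f f' hf' v hv
    rw [mem_pairOrtho] at hv ⊢
    rw [hφ, polar_add_right, polar_add_right, polar_smul_right, polar_smul_right, hee, hv.1,
      polar_comm Q f' e]
    simp only [smul_eq_mul]
    constructor
    · ring
    · field_simp; ring
  have hinv : ∀ f f', polar Q e f ≠ 0 → ∀ v ∈ Q.pairOrtho e f, φ f (φ f' v) = v := by
    intro f f' hf v hv
    rw [mem_pairOrtho] at hv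
    rw [hφ, hφ, polar_add_right, polar_smul_right, hv.2, polar_comm Q f e, add_assoc, ← add_smul,
      smul_eq_mul]
    rw [add_eq_left]
    convert zero_smul K e using 2
    field_simp
    ring
  refine ⟨⟨LinearEquiv.ofLinearMap ((φ f').restrict (hmem f f' hf')) ((φ f).restrict (hmem f' f hf))
    ?_ ?_, ?_⟩⟩
  · ext v; exact hinv f' f hf' v v.2
  · ext v; exact hinv f f' hf v v.2
  · rintro ⟨v, hv⟩
    change Q (φ f' v) = Q v
    rw [hφ, map_add_smul_of_singular he, (mem_pairOrtho.1 hv).1, mul_zero, add_zero]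

lemma QuadraticMap.equivalent_restrict_pairOrtho {e f e' f' : V} (he : Q e = 0)
    (hef : polar Q e f ≠ 0) (he' : Q e' = 0) (hef' : polar Q e' f' ≠ 0) :
    (Q.restrict (Q.pairOrtho e f)).Equivalent (Q.restrict (Q.pairOrtho e' f')) := by
  by_cases hee : polar Q e e' = 0
  · obtain ⟨x, hx, hx'⟩ : ∃ x, polar Q e x ≠ 0 ∧ polar Q e' x ≠ 0 := by
      by_cases h1 : polar Q e' f = 0
      · by_cases h2 : polar Q e f' = 0
        · exact ⟨f + f', by rwa [polar_add_right, h2, add_zero],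
            by rwa [polar_add_right, h1, zero_add]⟩
        · exact ⟨f', h2, hef'⟩
      · exact ⟨f, hef, h1⟩
    obtain ⟨y, hy0, hy, hy'⟩ : ∃ y, Q y = 0 ∧ polar Q e y ≠ 0 ∧ polar Q e' y ≠ 0 := by
      refine ⟨x + (-(Q x / polar Q e x)) • e, ?_, ?_, ?_⟩
      · rw [map_add_smul_of_singular he]
        field_simp
        ring
      · rwa [polar_add_right, polar_smul_right, polar_self_eq_zero_of_singular he, smul_zero,
          add_zero]
      · rwa [polar_add_right, polar_smul_right, polar_comm Q e' e, hee, smul_zero, add_zero]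
    refine (equivalent_restrict_pairOrtho_right he hef hy).trans ?_
    rw [pairOrtho_comm]
    refine (equivalent_restrict_pairOrtho_right hy0 (by rwa [polar_comm])
      (f' := e') (by rwa [polar_comm])).trans ?_
    rw [pairOrtho_comm]
    exact equivalent_restrict_pairOrtho_right he' hy' hef'
  · refine (equivalent_restrict_pairOrtho_right he hef hee).trans ?_
    rw [pairOrtho_comm]
    exact equivalent_restrict_pairOrtho_right he' (by rwa [polar_comm]) hef'

end

section

variable {K V M₁ M₂ : Type*} [Field K] [AddCommGroup V] [Module K V]
  [AddCommGroup M₁] [Module K M₁] [AddCommGroup M₂] [Module K M₂]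
  {Q : QuadraticForm K V} {Q₁ : QuadraticForm K M₁} {Q₂ : QuadraticForm K M₂}

lemma QuadraticMap.IsometryEquiv.polar_map_map (φ : Q₁.IsometryEquiv Q₂) (u v : M₁) :
    polar Q₂ (φ u) (φ v) = polar Q₁ u v := by
  simp [polar, ← map_add]

lemma QuadraticMap.IsometryEquiv.equivalent_restrict_pairOrtho
    (φ : (Q₁.prod (QuadraticForm.dualProd K K)).IsometryEquiv Q) :
    Q₁.Equivalent
      (Q.restrict (Q.pairOrtho (φ (0, (LinearMap.id, 0))) (φ (0, (0, 1))))) := by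
  have h1 : ∀ u, polar (Q₁.prod (QuadraticForm.dualProd K K)) (0, (LinearMap.id, 0)) u = u.2.2 := by
    intro u
    simp [polar]
  have h2 : ∀ u, polar (Q₁.prod (QuadraticForm.dualProd K K)) (0, (0, 1)) u = u.2.1 1 := by
    intro u
    simp [polar]
  have hmem : ∀ u, φ (u, 0) ∈ Q.pairOrtho (φ (0, (LinearMap.id, 0))) (φ (0, (0, 1))) := fun u ↦ by
    simp [mem_pairOrtho, polar_map_map, h1, h2]
  refine ⟨⟨LinearEquiv.ofBijective
    ((φ.toLinearEquiv.toLinearMap ∘ₗ LinearMap.inl K _ _).codRestrict _ hmem) ⟨?_, ?_⟩, ?_⟩⟩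
  · intro u v h
    have := φ.injective (congrArg Subtype.val h)
    exact congr($this.1)
  · rintro ⟨w, hw⟩
    obtain ⟨⟨u, l, x⟩, rfl⟩ : ∃ m, φ m = w := φ.surjective w
    obtain ⟨hx, hl⟩ := mem_pairOrtho.1 hw
    rw [polar_map_map, h1] at hx
    rw [polar_map_map, h2] at hl
    dsimp only at hx hl
    refine ⟨u, Subtype.ext ?_⟩
    subst hx
    obtain rfl : l = 0 := LinearMap.ext_ring hl
    rfl
  · intro u
    change Q (φ (u, 0)) = Q₁ u
    simp

lemma QuadraticMap.IsometryEquiv.hyperbolic_pair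
    (φ : (Q₁.prod (QuadraticForm.dualProd K K)).IsometryEquiv Q) :
    Q (φ (0, (LinearMap.id, 0))) = 0 ∧
      polar Q (φ (0, (LinearMap.id, 0))) (φ (0, (0, 1))) ≠ 0 := by
  rw [φ.polar_map_map, φ.map_app]
  simp [polar]

/-- A hyperbolic plane may be cancelled from an equivalence of quadratic forms. -/
lemma QuadraticMap.Equivalent.of_prod_dualProd_self
    (h : (Q₁.prod (QuadraticForm.dualProd K K)).Equivalent (Q₂.prod (QuadraticForm.dualProd K K))) :
    Q₁.Equivalent Q₂ := by
  obtain ⟨φ⟩ := h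
  let ψ := IsometryEquiv.refl (Q₂.prod (QuadraticForm.dualProd K K))
  have hφ := φ.hyperbolic_pair
  have hψ := ψ.hyperbolic_pair
  exact φ.equivalent_restrict_pairOrtho.trans <|
    (QuadraticMap.equivalent_restrict_pairOrtho hφ.1 hφ.2 hψ.1 hψ.2).trans
      ψ.equivalent_restrict_pairOrtho.symm

lemma QuadraticMap.equivalent_prod_dualProd_of_subsingleton (Q : QuadraticForm K V)
    (W : Type*) [AddCommGroup W] [Module K W] [Subsingleton W] :
    (Q.prod (QuadraticForm.dualProd K W)).Equivalent Q := by
  have : Unique (Module.Dual K W × W) := ⟨⟨0⟩, fun _ ↦ Subsingleton.elim _ _⟩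
  refine ⟨⟨LinearEquiv.ofLinearMap (.fst K _ _) (.inl K _ _) ?_ ?_, fun m ↦ ?_⟩⟩
  · ext; rfl
  · exact LinearMap.ext fun m ↦ Prod.ext rfl (Subsingleton.elim _ _)
  · rw [show m = (m.1, 0) from Prod.ext rfl (Subsingleton.elim _ _)]
    simp

lemma QuadraticMap.equivalent_prod_dualProd_succ (Q : QuadraticForm K V) (k : ℕ) :
    (Q.prod (QuadraticForm.dualProd K (Fin (k + 1) → K))).Equivalent
      ((Q.prod (QuadraticForm.dualProd K (Fin k → K))).prod (QuadraticForm.dualProd K K)) := by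
  let e := (QuadraticForm.dualProdIsometry
    (Fin.consLinearEquiv K fun _ : Fin (k + 1) ↦ K)).symm.trans
    (QuadraticForm.dualProdProdIsometry.trans (IsometryEquiv.prodComm _ _))
  refine .trans ⟨(IsometryEquiv.refl Q).prod e⟩ ⟨⟨(LinearEquiv.prodAssoc K _ _ _).symm, ?_⟩⟩
  intro m
  exact add_assoc _ _ _

lemma QuadraticMap.Equivalent.of_prod_dualProd {W : Type*} [AddCommGroup W] [Module K W]
    [FiniteDimensional K W]
    (h : (Q₁.prod (QuadraticForm.dualProd K W)).Equivalent (Q₂.prod (QuadraticForm.dualProd K W))) :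
    Q₁.Equivalent Q₂ := by
  have key : ∀ k, (Q₁.prod (QuadraticForm.dualProd K (Fin k → K))).Equivalent
      (Q₂.prod (QuadraticForm.dualProd K (Fin k → K))) → Q₁.Equivalent Q₂ := by
    intro k
    induction k with
    | zero =>
      intro h
      exact (Q₁.equivalent_prod_dualProd_of_subsingleton _).symm.trans <|
        h.trans (Q₂.equivalent_prod_dualProd_of_subsingleton _)
    | succ k ih =>
      intro h
      exact ih <| .of_prod_dualProd_self <| (Q₁.equivalent_prod_dualProd_succ k).symm.trans <|
        h.trans (Q₂.equivalent_prod_dualProd_succ k)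
  let e : QuadraticForm.dualProd K W |>.Equivalent
      (QuadraticForm.dualProd K (Fin (Module.finrank K W) → K)) :=
    ⟨QuadraticForm.dualProdIsometry (Module.finBasis K W).equivFun⟩
  exact key _ <| ((Equivalent.refl Q₁).prod e.symm).trans <| h.trans <| (Equivalent.refl Q₂).prod e

/-- A form with nondegenerate polar form, added to its negative, is hyperbolic. -/
lemma QuadraticMap.equivalent_prod_neg_dualProd [FiniteDimensional K V]
    (hQ : ∀ v, (∀ u, polar Q v u = 0) → v = 0) :
    (Q.prod (-Q)).Equivalent (QuadraticForm.dualProd K V) := by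
  obtain ⟨B, rfl⟩ := LinearMap.BilinMap.toQuadraticMap_surjective Q
  let φ : V × V →ₗ[K] Module.Dual K V × V :=
    (B ∘ₗ .fst K V V + B.flip ∘ₗ .snd K V V).prod (.fst K V V - .snd K V V)
  have hφ : Function.Injective φ := by
    refine LinearMap.ker_eq_bot.1 <| LinearMap.ker_eq_bot'.2 fun ⟨x, y⟩ h ↦ ?_
    obtain ⟨h1, h2⟩ := Prod.mk.inj h
    obtain rfl : x = y := sub_eq_zero.1 h2
    have : x = 0 := hQ x fun u ↦ by
      simpa [LinearMap.BilinMap.polar_toQuadraticMap] using congr($h1 u)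
    rw [this]; rfl
  refine ⟨⟨LinearEquiv.ofInjectiveOfFinrankEq φ hφ ?_, ?_⟩⟩
  · simp [Subspace.dual_finrank_eq]
  · rintro ⟨x, y⟩
    change (B x + B.flip y) (x - y) = _
    simp
    ring

lemma QuadraticMap.equivalent_prod_prod_neg [FiniteDimensional K V] (Q₁ : QuadraticForm K M₁)
    (hQ : ∀ v, (∀ u, polar Q v u = 0) → v = 0) :
    ((Q₁.prod Q).prod (-Q)).Equivalent (Q₁.prod (QuadraticForm.dualProd K V)) :=
  .trans ⟨⟨LinearEquiv.prodAssoc K _ _ _, fun _ ↦ (add_assoc _ _ _).symm⟩⟩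
    ((Equivalent.refl Q₁).prod (equivalent_prod_neg_dualProd hQ))

/-- Witt cancellation for forms with nondegenerate polar form. -/
lemma QuadraticMap.Equivalent.of_prod [FiniteDimensional K V]
    (hQ : ∀ v, (∀ u, polar Q v u = 0) → v = 0) (h : (Q₁.prod Q).Equivalent (Q₂.prod Q)) :
    Q₁.Equivalent Q₂ := by
  refine .of_prod_dualProd (W := V) ?_
  exact (equivalent_prod_prod_neg Q₁ hQ).symm.trans <|
    (h.prod (.refl (-Q))).trans (equivalent_prod_prod_neg Q₂ hQ)

end

end

lemma LinearMap.isCompl_ker_range_of_ker_sq_le {K V : Type*} [Field K] [AddCommGroup V]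
    [Module K V] [FiniteDimensional K V] (f : Module.End K V)
    (h : ∀ v, f (f v) = 0 → f v = 0) : IsCompl (LinearMap.ker f) (LinearMap.range f) := by
  have hd : Disjoint (LinearMap.ker f) (LinearMap.range f) := by
    rw [Submodule.disjoint_def]
    rintro _ hx ⟨v, rfl⟩
    exact h v hx
  refine ⟨hd, codisjoint_iff.2 <| Submodule.eq_top_of_disjoint _ _ ?_ hd⟩
  rw [add_comm, LinearMap.finrank_range_add_finrank_ker]

section

open QuadraticMap

variable {F V : Type*} [Field F] [AddCommGroup V] [Module F V]

/-- The splitting of a quadratic form along complementary orthogonal subspaces. -/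
lemma QuadraticMap.equivalent_prod_restrict_of_isCompl (Q : QuadraticForm F V)
    {p q : Submodule F V} (h : IsCompl p q) (hpq : ∀ u ∈ p, ∀ v ∈ q, polar Q u v = 0) :
    ((Q.restrict p).prod (Q.restrict q)).Equivalent Q := by
  refine ⟨⟨Submodule.prodEquivOfIsCompl p q h, ?_⟩⟩
  rintro ⟨u, v⟩
  have := hpq u u.2 v v.2
  change Q ((u : V) + v) = Q u + Q v
  rw [QuadraticMap.map_add Q, this, add_zero]

lemma QuadraticMap.nondegenerate_restrict_of_isCompl (Q : QuadraticForm F V)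
    {p q : Submodule F V} (h : IsCompl p q) (hpq : ∀ u ∈ p, ∀ v ∈ q, polar Q u v = 0)
    (hnd : ∀ v, (∀ u, polar Q v u = 0) → v = 0) (v : q)
    (hv : ∀ u : q, polar (Q.restrict q) v u = 0) : v = 0 := by
  refine Subtype.ext <| hnd v fun u ↦ ?_
  obtain ⟨a, b, ha, hb, rfl⟩ := Submodule.codisjoint_iff_exists_add_eq.1 h.codisjoint u
  rw [polar_add_right, polar_comm, hpq a ha v v.2, zero_add]
  exact hv ⟨b, hb⟩

lemma QuadraticMap.polar_map_map_of_isometry {Q : QuadraticForm F V} {T : Module.End F V}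
    (hT : ∀ v, Q (T v) = Q v) (u v : V) : polar Q (T u) (T v) = polar Q u v := by
  simp [polar, ← map_add, hT]

variable [CharP F 2]

/-- In characteristic two, an isometry `T` determines `Q` on the range of `1 + T` from its
polar form. -/
lemma QuadraticMap.apply_add_apply_of_isometry {Q : QuadraticForm F V} {T : Module.End F V}
    (hT : ∀ v, Q (T v) = Q v) (v : V) : Q (v + T v) = polar Q v (T v) := by
  rw [QuadraticMap.map_add Q, hT, CharTwo.add_self_eq_zero, zero_add]

lemma QuadraticMap.polar_ker_range_eq_zero {Q : QuadraticForm F V} {T : Module.End F V}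
    (hT : ∀ v, Q (T v) = Q v) :
    ∀ u ∈ LinearMap.ker (1 + T), ∀ v ∈ LinearMap.range (1 + T), polar Q u v = 0 := by
  rintro u hu _ ⟨v, rfl⟩
  have hu' : T u = u := by
    have h : u + T u = 0 := hu
    rw [← neg_eq_of_add_eq_zero_right h, ← neg_one_smul F, CharTwo.neg_eq, one_smul]
  have h := polar_map_map_of_isometry hT u v
  rw [hu'] at h
  change polar Q u (v + T v) = 0
  rw [polar_add_right, h, CharTwo.add_self_eq_zero]

/-- Over a finite field of characteristic two, equivalent nonsingular quadratic forms invariant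
under a map `T` acting semisimply on its generalized `1`-eigenspace are equivalent through a map
commuting with `T`. -/
theorem QuadraticMap.exists_commute_isometry_of_invariant [Finite F] [FiniteDimensional F V]
    {Q Q' : QuadraticForm F V} (hnd : ∀ v, (∀ u, polar Q v u = 0) → v = 0)
    (hnd' : ∀ v, (∀ u, polar Q' v u = 0) → v = 0) (hQ : Q'.Equivalent Q)
    {T : Module.End F V} (hT : ∀ v, Q (T v) = Q v) (hT' : ∀ v, Q' (T v) = Q' v)
    (hss : ∀ v, (1 + T) ((1 + T) v) = 0 → (1 + T) v = 0) :
    ∃ g : V ≃ₗ[F] V, (∀ v, g (T v) = T (g v)) ∧ ∀ v, Q (g v) = Q' v := by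
  set p := LinearMap.ker (1 + T) with hp
  set q := LinearMap.range (1 + T) with hq
  have hc : IsCompl p q := LinearMap.isCompl_ker_range_of_ker_sq_le _ hss
  have ho := polar_ker_range_eq_zero hT
  have ho' := polar_ker_range_eq_zero hT'
  have hpT : ∀ v ∈ p, T v = v := fun v hv ↦ by
    have h : v + T v = 0 := hv
    rw [← neg_eq_of_add_eq_zero_right h, ← neg_one_smul F, CharTwo.neg_eq, one_smul]
  have hqT : ∀ v ∈ q, T v ∈ q := by
    rintro _ ⟨v, rfl⟩
    exact ⟨T v, by simp⟩
  let Tq : Module.End F q := T.restrict hqT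
  have hnq := nondegenerate_restrict_of_isCompl Q hc ho hnd
  have hnq' := nondegenerate_restrict_of_isCompl Q' hc ho' hnd'
  have hunit : IsUnit (1 + Tq) := by
    rw [LinearMap.isUnit_iff_ker_eq_bot]
    refine LinearMap.ker_eq_bot'.2 fun v hv ↦ Subtype.ext ?_
    exact (Submodule.disjoint_def.1 hc.disjoint) v (congrArg Subtype.val hv) v.2
  have hTq : ∀ v, Q.restrict q (Tq v) = Q.restrict q v := fun v ↦ hT v
  have hTq' : ∀ v, Q'.restrict q (Tq v) = Q'.restrict q v := fun v ↦ hT' v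
  obtain ⟨g, hgT, hg⟩ := LinearMap.BilinForm.exists_commute_isometry_of_invariant
    (polarBilin (Q.restrict q)) (polarBilin (Q'.restrict q)) (polar_comm _) (polar_comm _)
    hnq hnq' Tq (polar_map_map_of_isometry hTq) (polar_map_map_of_isometry hTq') hunit
  have hgQ : ∀ v, Q.restrict q (g v) = Q'.restrict q v := by
    intro v
    obtain ⟨w, rfl⟩ : ∃ w, w + Tq w = v := by
      obtain ⟨τ, hτ⟩ := hunit
      exact ⟨(↑τ⁻¹ : Module.End F q) v, by simpa [hτ] using congr($(τ.mul_inv) v)⟩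
    rw [map_add, hgT, apply_add_apply_of_isometry hTq, apply_add_apply_of_isometry hTq', ← hgT]
    exact hg _ _
  have hpe : (Q'.restrict p).Equivalent (Q.restrict p) := by
    refine .of_prod hnq (.trans ?_ (Q.equivalent_prod_restrict_of_isCompl hc ho).symm)
    refine .trans (Equivalent.prod (.refl _) (.symm ⟨⟨g, hgQ⟩⟩)) ?_
    exact (Q'.equivalent_prod_restrict_of_isCompl hc ho').trans hQ
  obtain ⟨f⟩ := hpe
  let e := Submodule.prodEquivOfIsCompl p q hc
  let G : V ≃ₗ[F] V := e.symm ≪≫ₗ (f.toLinearEquiv.prodCongr g) ≪≫ₗ e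
  have hG : ∀ (a : p) (b : q), G (a + b) = f a + g b := by
    intro a b
    have : e.symm ((a : V) + b) = (a, b) := e.symm_apply_eq.2 rfl
    simp only [G, LinearEquiv.trans_apply, this]
    rfl
  have hdec : ∀ v, ∃ (a : p) (b : q), (a : V) + b = v := fun v ↦
    let ⟨a, b, ha, hb, h⟩ := Submodule.codisjoint_iff_exists_add_eq.1 hc.codisjoint v
    ⟨⟨a, ha⟩, ⟨b, hb⟩, h⟩
  refine ⟨G, fun v ↦ ?_, fun v ↦ ?_⟩ <;> obtain ⟨a, b, rfl⟩ := hdec v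
  · have : T (b : V) = Tq b := rfl
    rw [map_add T, hpT a a.2, this, hG, hG, map_add T, hpT _ (f a).2, hgT]
    rfl
  · rw [hG, QuadraticMap.map_add Q, QuadraticMap.map_add Q', ho _ (f a).2 _ (g b).2,
      ho' _ a.2 _ b.2]
    exact congr($(f.map_app a) + $(hgQ b) + 0)

end

lemma Matrix.aeval_vecMulLinear {F n : Type*} [Field F] [Fintype n] [DecidableEq n]
    (X : Matrix n n F) (p : Polynomial F) :
    Polynomial.aeval (R := F) (A := Module.End F (n → F)) X.vecMulLinear p =
      (Polynomial.aeval X p).vecMulLinear := by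
  induction p using Polynomial.induction_on with
  | C a => ext; simp [Algebra.algebraMap_eq_smul_one]
  | add p q hp hq => ext; simp [hp, hq]
  | monomial k a h =>
    rw [pow_succ', mul_left_comm, map_mul, Polynomial.aeval_X, h,
      mul_comm Polynomial.X (Polynomial.C a * Polynomial.X ^ k),
      map_mul (Polynomial.aeval X) _ Polynomial.X, Polynomial.aeval_X]
    exact LinearMap.ext fun v ↦ by simp [vecMul_vecMul]

lemma Matrix.isSemisimple_vecMulLinear {F n : Type*} [Field F] [Fintype n] [DecidableEq n]
    {X : Matrix n n F} (hX : Squarefree (minpoly F X)) :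
    Module.End.IsSemisimple (R := F) (M := n → F) X.vecMulLinear := by
  refine Module.End.isSemisimple_of_squarefree_aeval_eq_zero hX ?_
  rw [aeval_vecMulLinear, minpoly.aeval]
  exact LinearMap.ext fun v ↦ by simp

lemma Module.End.IsSemisimple.one_add_apply_eq_zero {F V : Type*} [Field F] [CharP F 2]
    [AddCommGroup V] [Module F V] {T : Module.End F V}
    (hT : T.IsSemisimple) {v : V} (hv : (1 + T) ((1 + T) v) = 0) : (1 + T) v = 0 := by
  have hneg : 1 + T = T - (1 : F) • 1 := by
    rw [← neg_eq_of_add_eq_zero_left (CharTwo.add_self_eq_zero (1 : F)), neg_one_smul,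
      sub_neg_eq_add, add_comm]
  have h : v ∈ T.genEigenspace 1 (2 : ℕ) := by
    rw [Module.End.mem_genEigenspace_nat, LinearMap.mem_ker, ← hneg, sq, Module.End.mul_apply, hv]
  rw [hT.isFinitelySemisimple.genEigenspace_eq_eigenspace 1 (by simp),
    Module.End.mem_eigenspace_iff] at h
  rw [hneg, LinearMap.sub_apply, h]
  simp

/-- Similar semisimple isometries of a nonsingular quadratic form over a finite field of
characteristic two are conjugate by an isometry. -/
theorem Matrix.exists_isometry_conj_of_similar {F n : Type*} [Field F] [Finite F] [CharP F 2]
    [Fintype n] [DecidableEq n] (Q : QuadraticForm F (n → F))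
    (hnd : ∀ v, (∀ u, QuadraticMap.polar Q v u = 0) → v = 0) {X Y P : Matrix n n F}
    (hX : ∀ v, Q (v ᵥ* X) = Q v) (hY : ∀ v, Q (v ᵥ* Y) = Q v) (hss : Squarefree (minpoly F X))
    (hP : IsUnit P) (hXY : P * Y = X * P) :
    ∃ g : Matrix n n F, IsUnit g ∧ (∀ v, Q (v ᵥ* g) = Q v) ∧ g * Y = X * g := by
  let e : (n → F) ≃ₗ[F] (n → F) :=
    LinearEquiv.ofInjectiveEndo P.vecMulLinear (vecMul_injective_iff_isUnit.2 hP)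
  have he : ∀ v, e v = v ᵥ* P := fun _ ↦ rfl
  let Q' : QuadraticForm F (n → F) := Q.comp e.toLinearMap
  have hQ' : ∀ v, Q' v = Q (v ᵥ* P) := fun _ ↦ rfl
  have hpol : ∀ u v, QuadraticMap.polar Q' u v = QuadraticMap.polar Q (e u) (e v) := fun u v ↦ by
    simp only [QuadraticMap.polar, ← map_add e]
    rfl
  have hnd' : ∀ v, (∀ u, QuadraticMap.polar Q' v u = 0) → v = 0 := fun v hv ↦
    e.map_eq_zero_iff.1 <| hnd _ fun u ↦ by rw [← e.apply_symm_apply u, ← hpol, hv]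
  have hX' : ∀ v, Q' (v ᵥ* X) = Q' v := fun v ↦ by
    rw [hQ', hQ', vecMul_vecMul, ← hXY, ← vecMul_vecMul, hY]
  obtain ⟨g, hgX, hgQ⟩ := QuadraticMap.exists_commute_isometry_of_invariant hnd hnd'
    ⟨⟨e, fun _ ↦ rfl⟩⟩ (T := X.vecMulLinear) hX hX'
    fun v ↦ (isSemisimple_vecMulLinear hss).one_add_apply_eq_zero
  let M : Matrix n n F := (LinearMap.toMatrix' g.symm.toLinearMap)ᵀ
  have hM : ∀ v, v ᵥ* M = g.symm v := fun v ↦ by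
    rw [vecMul_transpose, LinearMap.toMatrix'_mulVec]
    rfl
  have hMunit : IsUnit M := vecMul_injective_iff_isUnit.1 fun u v h ↦
    g.symm.injective (by simpa only [hM] using h)
  have hMX : M * X = X * M := by
    refine Matrix.ext_of_single_vecMul fun i ↦ ?_
    rw [← vecMul_vecMul, ← vecMul_vecMul, hM, hM, LinearEquiv.eq_symm_apply]
    exact (hgX _).trans (congrArg X.vecMulLinear (g.apply_symm_apply _))
  refine ⟨M * P, hMunit.mul hP, fun v ↦ ?_, ?_⟩
  · rw [← vecMul_vecMul, ← hQ', hM, ← hgQ, g.apply_symm_apply]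
  · rw [mul_assoc, hXY, ← mul_assoc, hMX, mul_assoc]

/-- In characteristic 2, for semisimple isometries `X`, `Y` of a nonsingular quadratic form
`Q` the following are equivalent: conjugacy in the orthogonal group of `Q`, conjugacy in
the symplectic group of the polar form `β_Q`, and similarity in `GL(n,F)`. -/
theorem semisimple_orthogonal_char_two_conjugacy_tfae
    {F : Type*} [Field F] [Fintype F] [CharP F 2] {n : ℕ}
    (Q : (Fin n → F) → F)
    (hQsmul : ∀ (a : F) (v : Fin n → F), Q (a • v) = a ^ 2 * Q v)
    (hpolar_addl : ∀ u₁ u₂ v, QuadraticMap.polar Q (u₁ + u₂) v =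
        QuadraticMap.polar Q u₁ v + QuadraticMap.polar Q u₂ v)
    (hpolar_smull : ∀ (a : F) (u v : Fin n → F),
        QuadraticMap.polar Q (a • u) v = a * QuadraticMap.polar Q u v)
    (hpolar_addr : ∀ u v₁ v₂, QuadraticMap.polar Q u (v₁ + v₂) =
        QuadraticMap.polar Q u v₁ + QuadraticMap.polar Q u v₂)
    (hpolar_smulr : ∀ (a : F) (u v : Fin n → F),
        QuadraticMap.polar Q u (a • v) = a * QuadraticMap.polar Q u v)
    (hnd : ∀ v, (∀ u, QuadraticMap.polar Q v u = 0) → v = 0)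
    (X Y : Matrix (Fin n) (Fin n) F) (hX : IsUnit X) (hY : IsUnit Y)
    (hXiso : ∀ v, Q (v ᵥ* X) = Q v) (hYiso : ∀ v, Q (v ᵥ* Y) = Q v)
    (hssX : Squarefree (minpoly F X)) (hssY : Squarefree (minpoly F Y)) :
    ((∃ g : Matrix (Fin n) (Fin n) F, IsUnit g ∧ (∀ v, Q (v ᵥ* g) = Q v) ∧
        Y = g⁻¹ * X * g) ↔
      (∃ P : Matrix (Fin n) (Fin n) F, IsUnit P ∧ Y = P⁻¹ * X * P)) ∧
    ((∃ h : Matrix (Fin n) (Fin n) F, IsUnit h ∧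
        (∀ u v, QuadraticMap.polar Q (u ᵥ* h) (v ᵥ* h) = QuadraticMap.polar Q u v) ∧
        Y = h⁻¹ * X * h) ↔
      (∃ P : Matrix (Fin n) (Fin n) F, IsUnit P ∧ Y = P⁻¹ * X * P)) := by
  let q : QuadraticForm F (Fin n → F) := QuadraticMap.ofPolar Q
    (fun a v ↦ by rw [hQsmul, sq, smul_eq_mul]) hpolar_addl hpolar_smull
  have hconj : ∀ P : Matrix (Fin n) (Fin n) F, IsUnit P → (Y = P⁻¹ * X * P ↔ P * Y = X * P) := by
    intro P hP
    have hdet := P.isUnit_iff_isUnit_det.1 hP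
    constructor
    · rintro rfl
      rw [mul_assoc, mul_nonsing_inv_cancel_left _ _ hdet]
    · intro h
      rw [mul_assoc, ← h, nonsing_inv_mul_cancel_left _ _ hdet]
  have key : (∃ P : Matrix (Fin n) (Fin n) F, IsUnit P ∧ Y = P⁻¹ * X * P) →
      ∃ g : Matrix (Fin n) (Fin n) F, IsUnit g ∧ (∀ v, Q (v ᵥ* g) = Q v) ∧
        Y = g⁻¹ * X * g := by
    rintro ⟨P, hP, hXY⟩
    obtain ⟨g, hg, hgQ, hgXY⟩ := exists_isometry_conj_of_similar q hnd hXiso hYiso hssX hP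
      ((hconj P hP).1 hXY)
    exact ⟨g, hg, hgQ, (hconj g hg).2 hgXY⟩
  refine ⟨⟨fun ⟨g, hg, _, h⟩ ↦ ⟨g, hg, h⟩, key⟩, ⟨fun ⟨g, hg, _, h⟩ ↦ ⟨g, hg, h⟩, fun h ↦ ?_⟩⟩
  obtain ⟨g, hg, hgQ, hXY⟩ := key h
  refine ⟨g, hg, fun u v ↦ ?_, hXY⟩
  simp only [QuadraticMap.polar, ← add_vecMul, hgQ]
end

section
/- Let F be a finite field of odd order, B ∈ M_n(F) an invertible symmetric matrix, 𝒞(B) = {g ∈ M_n(F) : g invertible, g·B·gᵀ = B} the corresponding orthogonal group, and let x ∈ 𝒞(B) with det x = 1. Then there exists y ∈ 𝒞(B) with x·y = y·x and det y = −1 if and only if there exist λ ∈ {1, −1} and an odd m ≥ 1 such that the multiplicity of (t−λ)^m as an elementary divisor of x is nonzero. (Equivalently: the 𝒞(B)-conjugacy class of x splits into two distinct classes of the special orthogonal group {g ∈ 𝒞(B) : det g = 1} if and only if x has no elementary divisor (t±1)^m with m odd.) -/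
open Matrix

/-- The multiplicity of `(t - λ)^m` as an elementary divisor of `X`, computed as
`2·dim ker((X−λI)^m) − dim ker((X−λI)^{m+1}) − dim ker((X−λI)^{m−1})` (as an integer). -/
noncomputable def edMultiplicity {F : Type*} [Field F] {n : ℕ}
    (X : Matrix (Fin n) (Fin n) F) (lam : F) (m : ℕ) : ℤ :=
  2 * (Module.finrank F (LinearMap.ker (Matrix.toLin' ((X - lam • 1) ^ m))) : ℤ)
    - (Module.finrank F (LinearMap.ker (Matrix.toLin' ((X - lam • 1) ^ (m + 1)))) : ℤ)
    - (Module.finrank F (LinearMap.ker (Matrix.toLin' ((X - lam • 1) ^ (m - 1)))) : ℤ)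

open Polynomial in
theorem Polynomial.mul_neg_one_pow_natDegree_of_eq_C_mul_reverse {F : Type*} [Field F]
    {p : F[X]} (hp0 : p ≠ 0) {c : F} (h : C c * p.reverse = p) :
    c * (-1) ^ p.natDegree = (-1) ^ p.rootMultiplicity (-1) := by
  obtain ⟨q, hq, hndvd⟩ := exists_eq_pow_rootMultiplicity_mul_and_not_dvd p hp0 (-1)
  generalize p.rootMultiplicity (-1) = a at hq ⊢
  have hq0 : q.eval (-1) ≠ 0 := fun h0 ↦ hndvd (dvd_iff_isRoot.2 h0)
  have hX : (X - C (-1) : F[X]).reverse = X - C (-1) := by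
    rw [sub_eq_add_neg, ← C_neg, neg_neg, reverse_add_C]
    rw [← one_mul (X : F[X]), reverse_mul_X, one_mul, natDegree_X, ← C_1, reverse_C]
    simp [add_comm]
  have hXa : ((X - C (-1) : F[X]) ^ a).reverse = (X - C (-1)) ^ a := by
    clear hq
    induction a with
    | zero => rw [pow_zero, ← C_1, reverse_C]
    | succ k ih => rw [pow_succ, reverse_mul_of_domain, ih, hX]
  have hdeg : p.natDegree = a + q.natDegree := by
    rw [hq, natDegree_mul (pow_ne_zero _ (X_sub_C_ne_zero _)) (by rintro rfl; simp at hq0),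
      natDegree_pow, natDegree_X_sub_C, mul_one]
  have hqq : C c * q.reverse = q := by
    apply mul_left_cancel₀ (pow_ne_zero a (X_sub_C_ne_zero (-1 : F)))
    rw [hq, reverse_mul_of_domain, hXa] at h
    linear_combination h
  have hev := congrArg (eval (-1)) hqq
  have hr : q.reverse.eval (-1) * (-1) ^ q.natDegree = q.eval (-1) := by
    have : Invertible (-1 : F) := ⟨-1, by simp, by simp⟩
    have hinv : ⅟(-1 : F) = -1 := invOf_eq_right_inv (by simp)
    simpa only [hinv, eval₂_id] using eval₂_reverse_mul_pow (RingHom.id F) (-1) q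
  rw [eval_mul, eval_C, ← hr] at hev
  have hr0 : q.reverse.eval (-1) ≠ 0 := fun h0 ↦ hq0 (by rw [← hr, h0, zero_mul])
  have hc : c = (-1) ^ q.natDegree := mul_right_cancel₀ hr0 (by rw [hev, mul_comm])
  rw [hdeg, pow_add, hc, mul_left_comm, ← mul_pow]
  simp

theorem Matrix.det_eq_neg_one_pow_of_transpose_mul_mul {F ι : Type*} [Field F] [Fintype ι]
    [DecidableEq ι] {A M : Matrix ι ι F} (hM : IsUnit M) (h : Aᵀ * M * A = M) :
    A.det = (-1) ^ A.charpoly.rootMultiplicity (-1) := by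
  have hdM : M.det ≠ 0 := ((isUnit_iff_isUnit_det M).1 hM).ne_zero
  have hdA : A.det ≠ 0 := fun h0 ↦ hdM <| by rw [← h, det_mul, h0, mul_zero]
  have hA : IsUnit A := (isUnit_iff_isUnit_det A).2 hdA.isUnit
  have hinv : A⁻¹.charpoly = A.charpoly := by
    have hconj : M * A * M⁻¹ = A⁻¹ᵀ := by
      have hMM : M * M⁻¹ = 1 := mul_nonsing_inv M hdM.isUnit
      have hAA : A⁻¹ᵀ * Aᵀ = 1 := by
        rw [← transpose_mul, mul_nonsing_inv A hdA.isUnit, transpose_one]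
      calc M * A * M⁻¹ = (A⁻¹ᵀ * Aᵀ) * (M * A * M⁻¹) := by rw [hAA, one_mul]
        _ = A⁻¹ᵀ * (Aᵀ * M * A) * M⁻¹ := by simp only [mul_assoc]
        _ = A⁻¹ᵀ := by rw [h, mul_assoc, hMM, mul_one]
    rw [← charpoly_transpose, ← hconj]
    obtain ⟨U, rfl⟩ := hM
    exact charpoly_units_conj U A
  have key := Polynomial.mul_neg_one_pow_natDegree_of_eq_C_mul_reverse
    (charpoly_monic A).ne_zero (c := (-1) ^ Fintype.card ι * A⁻¹.det) (by
      rw [charpoly_inv A hA, ← reverse_charpoly] at hinv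
      simpa [det_nonsing_inv] using hinv)
  rw [charpoly_natDegree_eq_dim, mul_right_comm, ← mul_pow] at key
  have hdet : A.det * A⁻¹.det = 1 := by
    rw [← det_mul, mul_nonsing_inv A hdA.isUnit, det_one]
  have hk : A⁻¹.det = (-1) ^ A.charpoly.rootMultiplicity (-1) := by simpa using key
  rw [hk] at hdet
  have hsq : ((-1 : F) ^ A.charpoly.rootMultiplicity (-1)) *
    (-1) ^ A.charpoly.rootMultiplicity (-1) = 1 := by rw [← mul_pow]; simp
  exact mul_right_cancel₀ (pow_ne_zero _ (neg_ne_zero.2 one_ne_zero)) (hdet.trans hsq.symm)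

theorem LinearMap.BilinForm.det_eq_neg_one_pow_finrank {F V : Type*} [Field F] [AddCommGroup V]
    [Module F V] [FiniteDimensional F V] {b : LinearMap.BilinForm F V} (hb : b.Nondegenerate)
    {g : Module.End F V} (hg : ∀ u v, b (g u) (g v) = b u v) :
    LinearMap.det g = (-1) ^ Module.finrank F (g.maxGenEigenspace (-1)) := by
  let e := Module.finBasis F V
  have hM : IsUnit (LinearMap.BilinForm.toMatrix e b) := by
    rw [Matrix.isUnit_iff_isUnit_det, isUnit_iff_ne_zero]
    exact (LinearMap.BilinForm.nondegenerate_iff_det_ne_zero e).1 hb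
  have h : (LinearMap.toMatrix e e g)ᵀ * LinearMap.BilinForm.toMatrix e b *
      LinearMap.toMatrix e e g = LinearMap.BilinForm.toMatrix e b := by
    rw [← LinearMap.BilinForm.toMatrix_comp]
    congr 1
    ext u v
    simp [hg]
  rw [← LinearMap.det_toMatrix e, Matrix.det_eq_neg_one_pow_of_transpose_mul_mul hM h,
    LinearMap.charpoly_toMatrix, LinearMap.finrank_maxGenEigenspace_eq]

section

variable {F V : Type*} [Field F] [AddCommGroup V] [Module F V]

namespace Module.End

theorem finrank_ker_pow_succ [FiniteDimensional F V] (N : Module.End F V) (m : ℕ) :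
    finrank F (LinearMap.ker (N ^ (m + 1))) = finrank F (LinearMap.ker (N ^ m)) +
      finrank F ↥(LinearMap.ker N ⊓ LinearMap.range (N ^ m)) := by
  have hle : LinearMap.ker (N ^ m) ≤ LinearMap.ker (N ^ (m + 1)) := fun v hv ↦ by
    rw [LinearMap.mem_ker] at hv ⊢
    rw [pow_succ', mul_apply, hv, map_zero]
  have hrange : LinearMap.range ((N ^ m).domRestrict (LinearMap.ker (N ^ (m + 1)))) =
      LinearMap.ker N ⊓ LinearMap.range (N ^ m) := by
    ext v
    constructor
    · rintro ⟨⟨w, hw⟩, rfl⟩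
      exact ⟨by simpa [pow_succ'] using hw, w, rfl⟩
    · rintro ⟨hv, w, rfl⟩
      exact ⟨⟨w, by simpa [pow_succ'] using hv⟩, rfl⟩
  have hker : LinearMap.ker ((N ^ m).domRestrict (LinearMap.ker (N ^ (m + 1)))) =
      (LinearMap.ker (N ^ m)).comap (LinearMap.ker (N ^ (m + 1))).subtype := rfl
  rw [← LinearMap.finrank_range_add_finrank_ker
    ((N ^ m).domRestrict (LinearMap.ker (N ^ (m + 1)))), hrange, hker,
    (Submodule.comapSubtypeEquivOfLe hle).finrank_eq, add_comm]

theorem ker_inf_range_pow_succ_le (N : Module.End F V) (m : ℕ) :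
    LinearMap.ker N ⊓ LinearMap.range (N ^ (m + 1)) ≤
      LinearMap.ker N ⊓ LinearMap.range (N ^ m) :=
  inf_le_inf_left _ <| by
    rintro _ ⟨w, rfl⟩
    exact ⟨N w, by rw [pow_succ, mul_apply]⟩

theorem even_finrank_ker_pow [FiniteDimensional F V] {N : Module.End F V}
    (h : ∀ j, Even j → LinearMap.ker N ⊓ LinearMap.range (N ^ j) ≤ LinearMap.range (N ^ (j + 1)))
    (k : ℕ) : Even (finrank F (LinearMap.ker (N ^ (2 * k)))) := by
  induction k with
  | zero =>
    rw [mul_zero, pow_zero, one_eq_id, LinearMap.ker_id, finrank_bot]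
    exact Even.zero
  | succ k ih =>
    have hk := le_antisymm (le_inf inf_le_left (h (2 * k) (even_two_mul k)))
      (N.ker_inf_range_pow_succ_le (2 * k))
    rw [mul_add, mul_one, finrank_ker_pow_succ, finrank_ker_pow_succ, hk, add_assoc]
    exact ih.add ⟨_, rfl⟩

theorem maxGenEigenspace_eq_ker_pow_two_mul [FiniteDimensional F V] (f : Module.End F V) (μ : F) :
    f.maxGenEigenspace μ = LinearMap.ker ((f - μ • 1) ^ (2 * finrank F V)) := by
  rw [maxGenEigenspace_eq_genEigenspace_finrank,
    ← genEigenspace_eq_genEigenspace_finrank_of_le f μ (Nat.le_mul_of_pos_left _ two_pos),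
    genEigenspace_nat]

theorem maxGenEigenspace_neg (f : Module.End F V) (μ : F) :
    (-f).maxGenEigenspace (-μ) = f.maxGenEigenspace μ := by
  have h : -f - (-μ) • 1 = -(f - μ • 1) := by
    ext v
    simp [add_comm, sub_eq_add_neg]
  ext v
  simp only [mem_maxGenEigenspace, h]
  refine exists_congr fun k ↦ ?_
  rcases k.even_or_odd with hk | hk
  · rw [hk.neg_pow]
  · rw [hk.neg_pow, LinearMap.neg_apply, neg_eq_zero]

theorem exists_maxGenEigenspace_eq_ker_isCompl_range [FiniteDimensional F V]
    (f : Module.End F V) (μ : F) :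
    ∃ k : ℕ, f.maxGenEigenspace μ = LinearMap.ker ((f - μ • 1) ^ k) ∧
      IsCompl (LinearMap.ker ((f - μ • 1) ^ k)) (LinearMap.range ((f - μ • 1) ^ k)) := by
  obtain ⟨k, hk, hle⟩ := ((f - μ • 1).eventually_isCompl_ker_pow_range_pow.and
    (Filter.eventually_ge_atTop (finrank F V))).exists
  refine ⟨k, ?_, hk⟩
  rw [maxGenEigenspace_eq_genEigenspace_finrank,
    ← genEigenspace_eq_genEigenspace_finrank_of_le f μ hle, genEigenspace_nat]

end Module.End

namespace LinearMap.BilinForm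

variable {b : LinearMap.BilinForm F V} {g : Module.End F V} {μ : F}

theorem apply_sub_smul_pow (hg : ∀ u v, b (g u) (g v) = b u v) (hμ : μ * μ = 1) (k : ℕ) (u v : V) :
    b (((g - μ • 1) ^ k) u) ((g ^ k) v) = (-μ) ^ k * b u (((g - μ • 1) ^ k) v) := by
  have h1 (u v : V) : b ((g - μ • 1) u) (g v) = -μ * b u ((g - μ • 1) v) := by
    simp only [LinearMap.sub_apply, LinearMap.smul_apply, Module.End.one_apply, map_sub, map_smul, hg, smul_eq_mul]
    linear_combination (-b u v) * hμ
  induction k generalizing u v with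
  | zero => simp
  | succ k ih =>
    have hc : ((g - μ • 1) ^ k) (g v) = g (((g - μ • 1) ^ k) v) := by
      have : Commute ((g - μ • 1) ^ k) g :=
        (((Commute.refl g).sub_left ((Commute.one_left g).smul_left μ)).pow_left k)
      exact congrArg (fun f : Module.End F V ↦ f v) this.eq
    rw [pow_succ, pow_succ g, Module.End.mul_apply, Module.End.mul_apply, ih, hc, h1,
      ← Module.End.mul_apply, ← pow_succ', ← mul_assoc, ← pow_succ, pow_succ (g - μ • 1)]

theorem injective_of_isometry (hb : b.Nondegenerate) (hg : ∀ u v, b (g u) (g v) = b u v) :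
    Function.Injective g := by
  rw [← ker_eq_bot, ker_eq_bot']
  intro u hu
  exact hb.1 u fun v ↦ by rw [← hg, hu, map_zero, LinearMap.zero_apply]

theorem apply_pow_pow_of_isometry (hg : ∀ u v, b (g u) (g v) = b u v) (k : ℕ) (u v : V) :
    b ((g ^ k) u) ((g ^ k) v) = b u v := by
  induction k with
  | zero => simp
  | succ k ih => rw [pow_succ', Module.End.mul_apply, Module.End.mul_apply, hg, ih]

variable [FiniteDimensional F V]

theorem surjective_pow_of_isometry (hb : b.Nondegenerate) (hg : ∀ u v, b (g u) (g v) = b u v)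
    (k : ℕ) : Function.Surjective (g ^ k) :=
  injective_iff_surjective.1 (injective_of_isometry hb (apply_pow_pow_of_isometry hg k))

theorem orthogonal_ker_sub_smul_pow (hb : b.Nondegenerate) (hs : b.IsSymm)
    (hg : ∀ u v, b (g u) (g v) = b u v) (hμ : μ * μ = 1) (k : ℕ) :
    b.orthogonal (ker ((g - μ • 1) ^ k)) = range ((g - μ • 1) ^ k) := by
  have hμ0 : -μ ≠ 0 := neg_ne_zero.2 (left_ne_zero_of_mul_eq_one hμ)
  have h : b.orthogonal (range ((g - μ • 1) ^ k)) = ker ((g - μ • 1) ^ k) := by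
    ext u
    rw [mem_orthogonal_iff, mem_ker]
    constructor
    · intro h
      refine hb.1 _ fun v ↦ ?_
      obtain ⟨v, rfl⟩ := surjective_pow_of_isometry hb hg k v
      have := h _ ⟨v, rfl⟩
      rw [hs.eq] at this
      rw [apply_sub_smul_pow hg hμ, this, mul_zero]
    · rintro h _ ⟨v, rfl⟩
      have := apply_sub_smul_pow hg hμ k u v
      rw [h, map_zero, LinearMap.zero_apply, eq_comm, mul_eq_zero] at this
      rw [hs.eq]
      exact this.resolve_left (pow_ne_zero _ hμ0)
  rw [← h, orthogonal_orthogonal hb hs.isRefl]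

theorem restrict_maxGenEigenspace_nondegenerate (hb : b.Nondegenerate) (hs : b.IsSymm)
    (hg : ∀ u v, b (g u) (g v) = b u v) (hμ : μ * μ = 1) :
    (b.restrict (g.maxGenEigenspace μ)).Nondegenerate := by
  obtain ⟨k, hk, hc⟩ := g.exists_maxGenEigenspace_eq_ker_isCompl_range μ
  rw [restrict_nondegenerate_iff_isCompl_orthogonal hs.isRefl, hk,
    orthogonal_ker_sub_smul_pow hb hs hg hμ]
  exact hc

theorem exists_even_not_ker_inf_range_le_of_commute (h2 : (2 : F) ≠ 0) (hb : b.Nondegenerate)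
    (hs : b.IsSymm) (hg : ∀ u v, b (g u) (g v) = b u v) {y : Module.End F V}
    (hy : ∀ u v, b (y u) (y v) = b u v) (hgy : Commute g y) (hdet : LinearMap.det y = -1) :
    ∃ μ : F, (μ = 1 ∨ μ = -1) ∧ ∃ j : ℕ, Even j ∧
      ¬ ker (g - μ • 1) ⊓ range ((g - μ • 1) ^ j) ≤ range ((g - μ • 1) ^ (j + 1)) := by
  by_contra! hcon
  have hW := restrict_maxGenEigenspace_nondegenerate hb hs hy (μ := -1) (by simp)
  rw [det_eq_neg_one_pow_finrank hb hy] at hdet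
  obtain ⟨k, hk, hc⟩ := y.exists_maxGenEigenspace_eq_ker_isCompl_range (-1)
  set W := y.maxGenEigenspace (-1)
  have hinv : ∀ v ∈ W, g v ∈ W :=
    Module.End.mapsTo_maxGenEigenspace_of_comm hgy.symm (-1)
  rw [← hk] at hc
  set R := range ((y - (-1 : F) • 1) ^ k)
  have hR : ∀ v ∈ R, g v ∈ R := by
    rintro _ ⟨v, rfl⟩
    have : Commute g ((y - (-1 : F) • 1) ^ k) :=
      (hgy.sub_right ((Commute.one_right g).smul_right _)).pow_right k
    exact ⟨g v, congrArg (fun f : Module.End F V ↦ f v) this.eq.symm⟩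
  have hsub (μ : F) (P : Submodule F V) (hP : ∀ v ∈ P, g v ∈ P) (j : ℕ) :
      ∀ v ∈ P, ((g - μ • 1) ^ j) v ∈ P := by
    induction j with
    | zero => simp
    | succ j ih =>
      intro v hv
      rw [pow_succ, Module.End.mul_apply]
      exact ih _ (P.sub_mem (hP v hv) (P.smul_mem μ hv))
  set gW : Module.End F W := g.restrict hinv
  have hcoe (μ : F) (j : ℕ) (w : W) : (((gW - μ • 1) ^ j) w : V) = ((g - μ • 1) ^ j) w := by
    induction j with
    | zero => simp
    | succ j ih =>
      rw [pow_succ', pow_succ', Module.End.mul_apply, Module.End.mul_apply, ← ih]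
      rfl
  have hcoe1 (μ : F) (w : W) : ((gW - μ • 1) w : V) = (g - μ • 1) w := rfl
  have heven (μ : F) (hμ : μ = 1 ∨ μ = -1) :
      Even (Module.finrank F (ker ((gW - μ • 1) ^ (2 * Module.finrank F W)))) := by
    refine Module.End.even_finrank_ker_pow (fun j hj ↦ ?_) _
    rintro _ ⟨hw, w, rfl⟩
    have hmem : ((g - μ • 1) ^ j) w ∈ ker (g - μ • 1) ⊓ range ((g - μ • 1) ^ j) := by
      refine ⟨?_, _, rfl⟩
      rw [SetLike.mem_coe, mem_ker] at hw ⊢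
      rw [← hcoe, ← hcoe1, hw, Submodule.coe_zero]
    obtain ⟨v, hv⟩ := hcon μ hμ j hj hmem
    obtain ⟨a, ha, r, hr, rfl⟩ := Submodule.mem_sup.1
      (hc.sup_eq_top ▸ Submodule.mem_top : v ∈ W ⊔ R)
    refine ⟨⟨a, ha⟩, Subtype.ext ?_⟩
    rw [hcoe, hcoe, ← sub_eq_zero]
    have h1 : ((g - μ • 1) ^ (j + 1)) a - ((g - μ • 1) ^ j) w ∈ W :=
      W.sub_mem (hsub μ W hinv _ a ha) (hsub μ W hinv _ w w.2)
    have h3 : ((g - μ • 1) ^ (j + 1)) a - ((g - μ • 1) ^ j) w =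
        -((g - μ • 1) ^ (j + 1)) r := by
      rw [← hv, map_add]; abel
    exact Submodule.disjoint_def.1 hc.disjoint _ h1
      (h3 ▸ R.neg_mem (hsub μ R hR _ r hr))
  have hgW : ∀ u v, b.restrict W (gW u) (gW v) = b.restrict W u v := fun u v ↦ hg u v
  have hngW : ∀ u v, b.restrict W ((-gW) u) ((-gW) v) = b.restrict W u v := fun u v ↦ by
    rw [← hgW u v]; simp only [LinearMap.neg_apply, map_neg, neg_neg]
  have hd1 := det_eq_neg_one_pow_finrank hW hgW
  have hd2 := det_eq_neg_one_pow_finrank hW hngW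
  rw [Module.End.maxGenEigenspace_eq_ker_pow_two_mul, (heven _ (.inr rfl)).neg_one_pow] at hd1
  rw [Module.End.maxGenEigenspace_neg, Module.End.maxGenEigenspace_eq_ker_pow_two_mul,
    (heven _ (.inl rfl)).neg_one_pow, ← neg_one_smul F gW, LinearMap.det_smul, hd1, mul_one,
    hdet] at hd2
  exact h2 (by linear_combination -hd2)

theorem exists_apply_pow_ne_zero (h2 : (2 : F) ≠ 0) (hb : b.Nondegenerate) (hs : b.IsSymm)
    (hg : ∀ u v, b (g u) (g v) = b u v) (hμ : μ * μ = 1) {j : ℕ} (hj : Even j)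
    (hle : ¬ ker (g - μ • 1) ⊓ range ((g - μ • 1) ^ j) ≤ range ((g - μ • 1) ^ (j + 1))) :
    ∃ u, ((g - μ • 1) ^ (j + 1)) u = 0 ∧ b (((g - μ • 1) ^ j) u) u ≠ 0 := by
  by_contra! hcon
  refine hle ?_
  rintro _ ⟨hu, u, rfl⟩
  have hμj : μ ^ j = 1 := by
    obtain ⟨i, rfl⟩ := hj
    rw [pow_add, ← mul_pow, hμ, one_pow]
  have hfix (i : ℕ) (w : V) (hw : (g - μ • 1) w = 0) : (g ^ i) w = μ ^ i • w := by
    induction i with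
    | zero => simp
    | succ i ih =>
      have hgw : g w = μ • w := sub_eq_zero.1 hw
      rw [pow_succ, Module.End.mul_apply, hgw, map_smul, ih, smul_smul, pow_succ']
  have hsymm (v w : V) (hv : ((g - μ • 1) ^ (j + 1)) v = 0) :
      b (((g - μ • 1) ^ j) v) w = b v (((g - μ • 1) ^ j) w) := by
    have hv' := hfix j (((g - μ • 1) ^ j) v) (by rw [← Module.End.mul_apply, ← pow_succ', hv])
    rw [hμj, one_smul] at hv'
    rw [← apply_pow_pow_of_isometry hg j, hv', apply_sub_smul_pow hg hμ, hj.neg_pow, hμj, one_mul]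
  have hu' : ((g - μ • 1) ^ (j + 1)) u = 0 := by
    rw [pow_succ', Module.End.mul_apply]; exact hu
  rw [← orthogonal_ker_sub_smul_pow hb hs hg hμ, mem_orthogonal_iff]
  intro v hv
  rw [mem_ker] at hv
  have h := hcon (u + v) (by rw [map_add, hu', hv, add_zero])
  have huv : b (((g - μ • 1) ^ j) u) v = b (((g - μ • 1) ^ j) v) u := by
    rw [hsymm u v hu', hs.eq]
  simp only [map_add, LinearMap.add_apply, hcon u hu', hcon v hv, huv] at h
  have h0 : b (((g - μ • 1) ^ j) v) u = 0 :=
    (mul_eq_zero.1 (by linear_combination h : 2 * b (((g - μ • 1) ^ j) v) u = 0)).resolve_left h2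
  change b v _ = 0
  rw [← hsymm v u hv, h0]

theorem mem_orthogonal_of_isometry (hb : b.Nondegenerate) (hg : ∀ u v, b (g u) (g v) = b u v)
    {U : Submodule F V} (hU : ∀ u ∈ U, g u ∈ U) : ∀ v ∈ b.orthogonal U, g v ∈ b.orthogonal U := by
  intro v hv u hu
  have hinj : Function.Injective (g.restrict hU) := fun x y hxy ↦
    Subtype.ext (injective_of_isometry hb hg (congrArg Subtype.val hxy))
  obtain ⟨w, hw⟩ := injective_iff_surjective.1 hinj ⟨u, hu⟩
  have hw' : g w = u := congrArg Subtype.val hw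
  change b u (g v) = 0
  rw [← hw', hg]
  exact hv w w.2

theorem exists_isCompl_orthogonal_finrank_eq (hb : b.Nondegenerate) (hs : b.IsSymm)
    (hg : ∀ u v, b (g u) (g v) = b u v) {j : ℕ} {u : V}
    (hu : ((g - μ • 1) ^ (j + 1)) u = 0) (hbu : b (((g - μ • 1) ^ j) u) u ≠ 0) :
    ∃ U : Submodule F V, (∀ v ∈ U, g v ∈ U) ∧ IsCompl U (b.orthogonal U) ∧
      Module.finrank F U = j + 1 := by
  set N := g - μ • 1 with hN
  have hgN (v : V) : g v = N v + μ • v := by simp [hN]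
  set e : Fin (j + 1) → V := fun i ↦ (N ^ (i : ℕ)) u
  set U := Submodule.span F (Set.range e)
  have hpow (i : ℕ) : (N ^ i) u ∈ U := by
    by_cases hi : i < j + 1
    · exact Submodule.subset_span ⟨⟨i, hi⟩, rfl⟩
    · obtain ⟨l, rfl⟩ := Nat.exists_eq_add_of_le' (not_lt.1 hi)
      rw [pow_add, Module.End.mul_apply, hu, map_zero]
      exact U.zero_mem
  have hUN : ∀ v ∈ U, g v ∈ U := by
    intro v hv
    rw [hgN]
    refine U.add_mem ?_ (U.smul_mem _ hv)
    suffices U ≤ U.comap N from this hv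
    refine Submodule.span_le.2 ?_
    rintro _ ⟨i, rfl⟩
    change N ((N ^ (i : ℕ)) u) ∈ U
    rw [← Module.End.mul_apply, ← pow_succ']
    exact hpow _
  have hUo := mem_orthogonal_of_isometry hb hg hUN
  have hoN (i : ℕ) : ∀ v ∈ b.orthogonal U, (N ^ i) v ∈ b.orthogonal U := by
    induction i with
    | zero => simp
    | succ i ih =>
      intro v hv
      rw [pow_succ, Module.End.mul_apply]
      exact ih _ ((b.orthogonal U).sub_mem (hUo v hv) ((b.orthogonal U).smul_mem μ hv))
  have key (c : Fin (j + 1) → F) (hc : ∑ i, c i • e i ∈ b.orthogonal U) : ∀ i, c i = 0 := by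
    by_contra! hcon
    obtain ⟨i, hi, hmin⟩ := WellFounded.has_min (wellFounded_lt (α := Fin (j + 1)))
      {i | c i ≠ 0} hcon
    have hi' := hoN (j - i) _ hc
    have hsum : (N ^ (j - i : ℕ)) (∑ l, c l • e l) = c i • (N ^ j) u := by
      rw [map_sum, Finset.sum_eq_single i]
      · rw [map_smul, ← Module.End.mul_apply, ← pow_add, Nat.sub_add_cancel (Nat.le_of_lt_succ i.2)]
      · intro l _ hl
        rcases lt_or_gt_of_ne hl with hlt | hgt
        · have : c l = 0 := by
            by_contra h
            exact hmin l h hlt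
          rw [this, zero_smul, map_zero]
        · have hlt : (i : ℕ) < l := hgt
          have hij := i.2
          obtain ⟨t, ht⟩ : ∃ t, j - i + l = t + (j + 1) :=
            Nat.exists_eq_add_of_le' (by omega)
          rw [map_smul, ← Module.End.mul_apply, ← pow_add, ht, pow_add, Module.End.mul_apply, hu,
            map_zero, smul_zero]
      · simp
    rw [hsum] at hi'
    have h0 : b u (c i • (N ^ j) u) = 0 := hi' u (by simpa using hpow 0)
    rw [map_smul, smul_eq_mul, hs.eq, mul_eq_zero] at h0
    exact h0.elim hi hbu
  refine ⟨U, hUN, ?_, ?_⟩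
  · rw [isCompl_orthogonal_iff_disjoint hs.isRefl, Submodule.disjoint_def]
    intro v hv hvo
    obtain ⟨c, rfl⟩ := (Submodule.mem_span_range_iff_exists_fun F).1 hv
    exact Finset.sum_eq_zero fun i _ ↦ by rw [key c hvo i, zero_smul]
  · have hli : LinearIndependent F e := Fintype.linearIndependent_iff.2 fun c hc ↦
      key c (hc ▸ (b.orthogonal U).zero_mem)
    rw [finrank_span_eq_card hli, Fintype.card_fin]

theorem exists_isometry_commute_det_eq (h2 : (2 : F) ≠ 0) (hb : b.Nondegenerate) (hs : b.IsSymm)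
    (hg : ∀ u v, b (g u) (g v) = b u v) {U : Submodule F V} (hU : ∀ v ∈ U, g v ∈ U)
    (hc : IsCompl U (b.orthogonal U)) :
    ∃ y : Module.End F V, (∀ u v, b (y u) (y v) = b u v) ∧ Commute g y ∧
      LinearMap.det y = (-1) ^ Module.finrank F U := by
  have hUo := mem_orthogonal_of_isometry hb hg hU
  set y : Module.End F V := ofIsCompl hc (-U.subtype) (b.orthogonal U).subtype
  have hy1 (u : V) (hu : u ∈ U) : y u = -u := ofIsCompl_apply_left hc ⟨u, hu⟩
  have hy2 (v : V) (hv : v ∈ b.orthogonal U) : y v = v := ofIsCompl_apply_right hc ⟨v, hv⟩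
  have hdec (w : V) : ∃ u ∈ U, ∃ v ∈ b.orthogonal U, u + v = w :=
    Submodule.mem_sup.1 (hc.sup_eq_top ▸ Submodule.mem_top)
  have hyb : ∀ u v, b (y u) (y v) = b u v := by
    intro w w'
    obtain ⟨u, hu, v, hv, rfl⟩ := hdec w
    obtain ⟨u', hu', v', hv', rfl⟩ := hdec w'
    have h1 : b u v' = 0 := hv' u hu
    have h2 : b v u' = 0 := by rw [hs.eq]; exact hv u' hu'
    simp [hy1, hy2, hu, hu', hv, hv', h1, h2]
  refine ⟨y, hyb, ?_, ?_⟩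
  · ext w
    obtain ⟨u, hu, v, hv, rfl⟩ := hdec w
    simp [hy1, hy2, hu, hv, hU u hu, hUo v hv]
  · rw [det_eq_neg_one_pow_finrank hb hyb]
    have : y.maxGenEigenspace (-1) = U := by
      ext w
      rw [Module.End.mem_maxGenEigenspace]
      constructor
      · rintro ⟨k, hk⟩
        obtain ⟨u, hu, v, hv, rfl⟩ := hdec w
        have hpow : ((y - (-1 : F) • 1) ^ (k + 1)) (u + v) = (2 : F) ^ (k + 1) • v := by
          clear hk
          induction k with
          | zero =>
            simp only [zero_add, pow_one, neg_smul, one_smul, sub_neg_eq_add, LinearMap.add_apply,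
              Module.End.one_apply, map_add, hy1 u hu, hy2 v hv, two_smul]
            abel
          | succ k ih =>
            rw [pow_succ', Module.End.mul_apply, ih, map_smul]
            simp [hy2, hv, ← two_smul F, smul_smul, pow_succ]
        rw [pow_succ', Module.End.mul_apply, hk, map_zero, eq_comm, smul_eq_zero] at hpow
        rw [hpow.resolve_left (pow_ne_zero _ h2), add_zero]
        exact hu
      · intro hw
        exact ⟨1, by simp [hy1 w hw]⟩
    rw [this]

end LinearMap.BilinForm

end

theorem edMultiplicity_succ_ne_zero_iff {F : Type*} [Field F] {n : ℕ}
    (X : Matrix (Fin n) (Fin n) F) (lam : F) (j : ℕ) :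
    edMultiplicity X lam (j + 1) ≠ 0 ↔
      ¬ LinearMap.ker (toLin' X - lam • (1 : Module.End F (Fin n → F))) ⊓
          LinearMap.range ((toLin' X - lam • (1 : Module.End F (Fin n → F))) ^ j) ≤
        LinearMap.range ((toLin' X - lam • (1 : Module.End F (Fin n → F))) ^ (j + 1)) := by
  have hpow (k : ℕ) : toLin' ((X - lam • 1) ^ k) =
      (toLin' X - lam • (1 : Module.End F (Fin n → F))) ^ k := by
    rw [toLin'_pow, map_sub, map_smul, toLin'_one]
    rfl
  rw [edMultiplicity, hpow, hpow, hpow, Nat.add_sub_cancel]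
  generalize toLin' X - lam • (1 : Module.End F (Fin n → F)) = N
  have h1 := Module.End.finrank_ker_pow_succ N j
  have h2 := Module.End.finrank_ker_pow_succ N (j + 1)
  have hle := Module.End.ker_inf_range_pow_succ_le N j
  refine not_congr ⟨fun h ↦ ?_, fun h ↦ ?_⟩
  · rw [← Submodule.eq_of_le_of_finrank_eq hle (by omega)]
    exact inf_le_right
  · have := le_antisymm (le_inf inf_le_left h) hle
    rw [this] at h1
    omega

theorem Matrix.mul_mul_transpose_eq_iff_toBilin'_inv {F ι : Type*} [Field F] [Fintype ι]
    [DecidableEq ι] {B y : Matrix ι ι F} (hB : IsUnit B) :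
    y * B * yᵀ = B ↔
      ∀ u v, B⁻¹.toBilin' (toLin' y u) (toLin' y v) = B⁻¹.toBilin' u v := by
  have hdet : IsUnit B.det := (isUnit_iff_isUnit_det B).1 hB
  have hbil : (∀ u v, B⁻¹.toBilin' (toLin' y u) (toLin' y v) = B⁻¹.toBilin' u v) ↔
      yᵀ * B⁻¹ * y = B⁻¹ := by
    rw [← (toBilin' (R₁ := F) (n := ι)).injective.eq_iff, ← toBilin'_comp, LinearMap.ext_iff₂]
    rfl
  rw [hbil]
  have h1 : y * B * yᵀ = B ↔ y * (B * yᵀ * B⁻¹) = 1 := by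
    constructor
    · intro h
      rw [← mul_assoc, ← mul_assoc, h, mul_nonsing_inv B hdet]
    · intro h
      have := congrArg (· * B) h
      simpa only [mul_assoc, nonsing_inv_mul B hdet, mul_one, one_mul] using this
  have h2 : B * yᵀ * B⁻¹ * y = 1 ↔ yᵀ * B⁻¹ * y = B⁻¹ := by
    constructor
    · intro h
      have := congrArg (B⁻¹ * ·) h
      simpa only [← mul_assoc, nonsing_inv_mul B hdet, mul_one, one_mul] using this
    · intro h
      rw [mul_assoc, mul_assoc, ← mul_assoc yᵀ, h, mul_nonsing_inv B hdet]
  rw [h1, mul_eq_one_comm, h2]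

/-- Let `x` be a determinant-one element of an orthogonal group over a finite field of odd
order.  The orthogonal group contains an element commuting with `x` of determinant `−1` if
and only if `x` has an elementary divisor `(t±1)^m` with `m` odd. -/
theorem orthogonal_centralizer_det_neg_one_iff_odd_elementary_divisor
    {F : Type*} [Field F] [Fintype F] (hodd : Odd (Fintype.card F)) {n : ℕ}
    (B : Matrix (Fin n) (Fin n) F) (hB : IsUnit B) (hBsym : Bᵀ = B)
    (x : Matrix (Fin n) (Fin n) F) (hx : IsUnit x) (hxB : x * B * xᵀ = B)
    (hdet : x.det = 1) :
    (∃ y : Matrix (Fin n) (Fin n) F, IsUnit y ∧ y * B * yᵀ = B ∧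
        x * y = y * x ∧ y.det = -1) ↔
      (∃ lam : F, (lam = 1 ∨ lam = -1) ∧
        ∃ m : ℕ, 1 ≤ m ∧ Odd m ∧ edMultiplicity x lam m ≠ 0) := by
  have h2 : (2 : F) ≠ 0 := Ring.two_ne_zero fun h ↦
    (Nat.not_even_iff_odd.2 hodd) (Nat.even_iff.2 (FiniteField.even_card_of_char_two h))
  have hBi : B⁻¹.det ≠ 0 := by
    rw [det_nonsing_inv, Ring.inverse_eq_inv']
    exact inv_ne_zero ((isUnit_iff_isUnit_det B).1 hB).ne_zero
  have hb : B⁻¹.toBilin'.Nondegenerate :=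
    LinearMap.BilinForm.nondegenerate_toBilin'_of_det_ne_zero' _ hBi
  have hs : B⁻¹.toBilin'.IsSymm :=
    Matrix.isSymm_toBilin'_iff_isSymm.2 (by
      rw [Matrix.IsSymm, transpose_nonsing_inv, hBsym])
  have hg := (mul_mul_transpose_eq_iff_toBilin'_inv hB).1 hxB
  constructor
  · rintro ⟨y, -, hyB, hxy, hy⟩
    obtain ⟨μ, hμ, j, hj, hle⟩ :=
      LinearMap.BilinForm.exists_even_not_ker_inf_range_le_of_commute h2 hb hs hg
        ((mul_mul_transpose_eq_iff_toBilin'_inv hB).1 hyB)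
        (show toLin' x * toLin' y = toLin' y * toLin' x by
          rw [Module.End.mul_eq_comp, Module.End.mul_eq_comp, ← toLin'_mul, ← toLin'_mul, hxy])
        (by rw [LinearMap.det_toLin', hy])
    exact ⟨μ, hμ, j + 1, by omega, hj.add_one, (edMultiplicity_succ_ne_zero_iff x μ j).2 hle⟩
  · rintro ⟨μ, hμ, m, hm, hmo, hed⟩
    obtain ⟨j, rfl⟩ := Nat.exists_eq_add_of_le' hm
    have hj : Even j := by simpa [Nat.odd_add_one] using hmo
    obtain ⟨u, hu, hbu⟩ := LinearMap.BilinForm.exists_apply_pow_ne_zero h2 hb hs hg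
      (by rcases hμ with rfl | rfl <;> simp) hj ((edMultiplicity_succ_ne_zero_iff x μ j).1 hed)
    obtain ⟨U, hU, hc, hfr⟩ :=
      LinearMap.BilinForm.exists_isCompl_orthogonal_finrank_eq hb hs hg hu hbu
    obtain ⟨y, hy, hcomm, hdy⟩ :=
      LinearMap.BilinForm.exists_isometry_commute_det_eq h2 hb hs hg hU hc
    obtain ⟨y, rfl⟩ := (toLin' (R := F) (m := Fin n) (n := Fin n)).surjective y
    rw [LinearMap.det_toLin', hfr, hj.add_one.neg_one_pow] at hdy
    refine ⟨y, ?_, (mul_mul_transpose_eq_iff_toBilin'_inv hB).2 hy, ?_, hdy⟩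
    · rw [isUnit_iff_isUnit_det, hdy]
      exact isUnit_one.neg
    · apply (toLin' (R := F) (m := Fin n) (n := Fin n)).injective
      rw [toLin'_mul, toLin'_mul]
      exact hcomm
end
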